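/- Let B be the open unit ball in ℝ^n. For every N > 0, c̄ > 0, d̄ > 0, τ > 0, α ∈ (0,1) and M > 0 there exists C > 0 with the following property. Suppose f, g : B → ℝ are smooth convex functions with D²g(x) positive definite for all x ∈ B, satisfying tr((D²g)^{−1} D²f) + d·det(D²f)/det(D²g) = c on B, where 0 ≤ c ≤ c̄ and 0 ≤ d ≤ d̄ are constants; suppose inf_B g = g(0) = 0, sup_B |g| ≤ N, D²f(x) > τ·Id for all x ∈ B, and ‖f‖_{C^{3,α}(B)} ≤ M. Then sup over x in the ball of radius 1/2 of the entries |∂_i∂_j g(x)| is at most C. -/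

import Mathlib

/-- The Hessian matrix `D²f(x)` of `f : ℝⁿ → ℝ` at `x`, with entries `∂_i ∂_j f(x)`. -/
noncomputable def Hess (n : ℕ) (f : EuclideanSpace ℝ (Fin n) → ℝ)
    (x : EuclideanSpace ℝ (Fin n)) : Matrix (Fin n) (Fin n) ℝ :=
  Matrix.of fun i j =>
    iteratedFDeriv ℝ 2 f x ![EuclideanSpace.single i 1, EuclideanSpace.single j 1]

open Matrix MeasureTheory Metric Set WithLp
open scoped ContDiff Gradient RealInnerProductSpace

/-!
The gradient map `y = ∇g(x)` exchanges `g` with its Legendre transform, whose Hessian matrix is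
`H(y) = (D²g(x))⁻¹`. In these coordinates the equation reads `tr (H A) + d det A det H = c` with
`A(y) = D²f(x)`, and since `D²f > τ` it bounds the trace of `H` at once. As
`D²g = H⁻¹ = adj H / det H`, what is left is an upper bound for `v = -log det H`.

Differentiating the equation and using that `∂H` is totally symmetric produces a vector field, of
size at most `K (|∇v| + 1)`, whose divergence contains no second derivatives of `H` and controls
`|∇v|²`. Hence `u = v + const ≥ 1` satisfies a Caccioppoli inequality for all its powers, and Moser
iteration bounds `sup u` by the integral of `u`. That integral is controlled by a Poincaré
inequality on the convex hull of the image of a small ball under `∇g`, because `exp (-v)` is the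
Jacobian of the inverse gradient map and therefore has an integral bounded below. The iteration
relies on a Sobolev exponent and needs `n ≥ 2`; for `n = 1` the equation reads
`g'' = (1 + d) f'' / c`, and `c` is bounded below because `|g| ≤ N`.
-/

/-! ### Matrix inequalities and matrix calculus -/

lemma posSemidef_of_posSemidef_sub_smul_one {ι : Type*} [DecidableEq ι] {A : Matrix ι ι ℝ} {τ : ℝ}
    (hτ : 0 ≤ τ) (hA : (A - τ • (1 : Matrix ι ι ℝ)).PosSemidef) : A.PosSemidef := by
  simpa using hA.add (PosSemidef.one.smul hτ)

lemma adjugate_eq_det_smul_inv {ι K : Type*} [Fintype ι] [DecidableEq ι] [CommRing K]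
    {A : Matrix ι ι K} (hA : IsUnit A.det) : A.adjugate = A.det • A⁻¹ := by
  rw [inv_def, smul_smul, Ring.mul_inverse_cancel _ hA, one_smul]

section Matrices

attribute [local instance] Matrix.frobeniusNormedAddCommGroup Matrix.frobeniusNormedSpace
  Matrix.frobeniusNormedRing Matrix.frobeniusNormedAlgebra

variable {ι : Type*} [Fintype ι]

lemma norm_toLp_le_of_abs_le {v : ι → ℝ} {M : ℝ} (h : ∀ i, |v i| ≤ M) :
    ‖toLp 2 v‖ ≤ Fintype.card ι * M := by
  calc ‖toLp 2 v‖ ≤ ∑ i, |v i| := by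
        refine abs_le_of_sq_le_sq' ?_ (by positivity) |>.2
        rw [EuclideanSpace.real_norm_sq_eq]
        simpa using Finset.sum_sq_le_sq_sum_of_nonneg (s := Finset.univ) fun i _ => abs_nonneg (v i)
    _ ≤ Fintype.card ι * M := by simpa using Finset.sum_le_card_nsmul Finset.univ _ M fun i _ => h i

lemma norm_toLp_sq (v : ι → ℝ) : ‖toLp 2 v‖ ^ 2 = v ⬝ᵥ v := by
  rw [EuclideanSpace.real_norm_sq_eq]
  simp [dotProduct, sq]

lemma abs_dotProduct_le (v w : ι → ℝ) : |v ⬝ᵥ w| ≤ ‖toLp 2 v‖ * ‖toLp 2 w‖ := by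
  simpa [EuclideanSpace.inner_toLp_toLp, dotProduct_comm] using
    abs_real_inner_le_norm (toLp 2 v) (toLp 2 w)

lemma frobenius_norm_sq (X : Matrix ι ι ℝ) : ‖X‖ ^ 2 = ∑ i, ∑ j, X i j ^ 2 := by
  have h : ‖X‖ = √(∑ i, ∑ j, X i j ^ 2) := by
    rw [Real.sqrt_eq_rpow]
    simpa using frobenius_norm_def X
  rw [h, Real.sq_sqrt (by positivity)]

lemma frobenius_norm_sq_eq_trace (X : Matrix ι ι ℝ) : ‖X‖ ^ 2 = (X * Xᵀ).trace := by
  rw [frobenius_norm_sq]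
  simp [Matrix.trace, Matrix.mul_apply, sq]

lemma abs_apply_le_frobenius_norm (X : Matrix ι ι ℝ) (i j : ι) : |X i j| ≤ ‖X‖ := by
  refine abs_le_of_sq_le_sq ?_ (norm_nonneg X)
  rw [frobenius_norm_sq]
  exact (Finset.single_le_sum (f := fun j => X i j ^ 2) (fun _ _ => sq_nonneg _)
    (Finset.mem_univ j)).trans (Finset.single_le_sum (f := fun i => ∑ j, X i j ^ 2)
      (fun _ _ => Finset.sum_nonneg fun _ _ => sq_nonneg _) (Finset.mem_univ i))

lemma frobenius_norm_le_of_abs_apply_le {X : Matrix ι ι ℝ} {M : ℝ} (hM : 0 ≤ M)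
    (h : ∀ i j, |X i j| ≤ M) : ‖X‖ ≤ Fintype.card ι * M := by
  refine abs_le_of_sq_le_sq' ?_ (by positivity) |>.2
  rw [frobenius_norm_sq]
  calc ∑ i, ∑ j, X i j ^ 2 ≤ ∑ _i : ι, ∑ _j : ι, M ^ 2 :=
        Finset.sum_le_sum fun i _ => Finset.sum_le_sum fun j _ => sq_le_sq' (abs_le.1 (h i j)).1
          (abs_le.1 (h i j)).2
    _ = (Fintype.card ι * M) ^ 2 := by simp; ring

lemma abs_trace_mul_le (X Y : Matrix ι ι ℝ) : |(X * Y).trace| ≤ ‖X‖ * ‖Y‖ := by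
  refine abs_le_of_sq_le_sq ?_ (by positivity)
  rw [mul_pow, ← frobenius_norm_transpose Y, frobenius_norm_sq, frobenius_norm_sq]
  simp only [Matrix.trace, Matrix.diag_apply, Matrix.mul_apply, transpose_apply]
  simp only [← Finset.sum_product']
  exact Finset.sum_mul_sq_le_sq_mul_sq _ _ _

lemma norm_mulVec_le (X : Matrix ι ι ℝ) (v : ι → ℝ) :
    ‖toLp 2 (X *ᵥ v)‖ ≤ ‖X‖ * ‖toLp 2 v‖ := by
  rw [← frobenius_norm_replicateCol (ι := Unit), ← frobenius_norm_replicateCol (ι := Unit),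
    replicateCol_mulVec]
  exact frobenius_norm_mul _ _

lemma exists_transpose_mul_self_of_posSemidef {X : Matrix ι ι ℝ} (hX : X.PosSemidef) :
    ∃ B : Matrix ι ι ℝ, X = Bᵀ * B := by
  classical
  open scoped MatrixOrder in
  obtain ⟨B, hB⟩ := CStarAlgebra.nonneg_iff_eq_star_mul_self.1 hX.nonneg
  exact ⟨B, by rw [hB, star_eq_conjTranspose, conjTranspose_eq_transpose_of_trivial]⟩

lemma frobenius_norm_le_trace_of_posSemidef {X : Matrix ι ι ℝ} (hX : X.PosSemidef) :
    ‖X‖ ≤ X.trace := by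
  obtain ⟨B, rfl⟩ := exists_transpose_mul_self_of_posSemidef hX
  calc ‖Bᵀ * B‖ ≤ ‖Bᵀ‖ * ‖B‖ := frobenius_norm_mul _ _
    _ = ‖Bᵀ‖ ^ 2 := by rw [sq, frobenius_norm_transpose]
    _ = (Bᵀ * B).trace := by rw [frobenius_norm_sq_eq_trace, transpose_transpose]

lemma trace_mul_nonneg_of_posSemidef {X Y : Matrix ι ι ℝ} (hX : X.PosSemidef)
    (hY : Y.PosSemidef) : 0 ≤ (X * Y).trace := by
  classical
  obtain ⟨B, rfl⟩ := exists_transpose_mul_self_of_posSemidef hX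
  rw [Matrix.mul_assoc, trace_mul_comm]
  simpa using (hY.mul_mul_conjTranspose_same B).trace_nonneg

lemma sum_mulVec_trace_mul_comm (X Y : Matrix ι ι ℝ) {s : ι → ι → Matrix ι ι ℝ}
    (hs : ∀ i j p q, s i j p q = s q p j i) :
    ∑ i, (X *ᵥ fun m => (Y * s i m).trace) i = ∑ i, (Y *ᵥ fun m => (X * s i m).trace) i := by
  have h_expand : ∀ X Y : Matrix ι ι ℝ, ∑ i, (X *ᵥ fun m => (Y * s i m).trace) i =
      ∑ im : ι × ι, ∑ pq : ι × ι, X im.1 im.2 * (Y pq.1 pq.2 * s im.1 im.2 pq.2 pq.1) :=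
    fun X Y => by
      simp only [mulVec, dotProduct, Matrix.trace, diag_apply, Matrix.mul_apply, Finset.mul_sum,
        Fintype.sum_prod_type]
  rw [h_expand, h_expand, Finset.sum_comm]
  refine Finset.sum_congr rfl fun x _ => Finset.sum_congr rfl fun y _ => ?_
  rw [hs y.1 y.2 x.2 x.1]
  ring

lemma trace_sq_le_card_mul_frobenius_norm_sq (X : Matrix ι ι ℝ) :
    X.trace ^ 2 ≤ Fintype.card ι * ‖X‖ ^ 2 := by
  calc X.trace ^ 2 ≤ Fintype.card ι * ∑ i, X i i ^ 2 := by
        simpa [Matrix.trace] using sq_sum_le_card_mul_sum_sq (s := Finset.univ) (f := X.diag)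
    _ ≤ Fintype.card ι * ‖X‖ ^ 2 := by
        rw [frobenius_norm_sq]
        gcongr with i
        exact Finset.single_le_sum (f := fun k => X i k ^ 2) (fun _ _ => sq_nonneg _)
          (Finset.mem_univ i)

variable [DecidableEq ι]

lemma exists_isUnit_transpose_mul_self_of_posDef {X : Matrix ι ι ℝ} (hX : X.PosDef) :
    ∃ B : Matrix ι ι ℝ, IsUnit B.det ∧ X = Bᵀ * B := by
  obtain ⟨B, rfl⟩ := exists_transpose_mul_self_of_posSemidef hX.posSemidef
  refine ⟨B, ?_, rfl⟩
  have h := hX.det_pos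
  rw [det_mul] at h
  exact (right_ne_zero_of_mul h.ne').isUnit

lemma dotProduct_self_le_trace_inv_mul {X : Matrix ι ι ℝ} (hX : X.PosDef) (v : ι → ℝ) :
    v ⬝ᵥ v ≤ X⁻¹.trace * (v ⬝ᵥ X *ᵥ v) := by
  obtain ⟨B, hB, rfl⟩ := exists_isUnit_transpose_mul_self_of_posDef hX
  have h_inv : (Bᵀ * B)⁻¹.trace = ‖B⁻¹‖ ^ 2 := by
    rw [frobenius_norm_sq_eq_trace, Matrix.mul_inv_rev, transpose_nonsing_inv]
  have h_quad : v ⬝ᵥ (Bᵀ * B) *ᵥ v = ‖toLp 2 (B *ᵥ v)‖ ^ 2 := by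
    rw [norm_toLp_sq, ← mulVec_mulVec, dotProduct_mulVec, vecMul_transpose]
  have h_self : v ⬝ᵥ v = ‖toLp 2 (B⁻¹ *ᵥ B *ᵥ v)‖ ^ 2 := by
    rw [mulVec_mulVec, nonsing_inv_mul _ hB, one_mulVec, norm_toLp_sq]
  rw [h_inv, h_quad, h_self, ← mul_pow]
  gcongr
  exact norm_mulVec_le _ _

lemma exists_norm_adjugate_le_and_abs_det_le (ι : Type*) [Fintype ι] [DecidableEq ι] (R : ℝ) :
    ∃ C, 1 ≤ C ∧ ∀ X : Matrix ι ι ℝ, ‖X‖ ≤ R → ‖X.adjugate‖ ≤ C ∧ |X.det| ≤ C := by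
  have h_adj : Continuous fun X : Matrix ι ι ℝ => X.adjugate := continuous_id.matrix_adjugate
  have h_det : Continuous fun X : Matrix ι ι ℝ => X.det := continuous_id.matrix_det
  obtain ⟨C₁, h₁⟩ := (isCompact_closedBall (0 : Matrix ι ι ℝ) R).exists_bound_of_continuousOn
    (f := fun X => X.adjugate) (Continuous.continuousOn h_adj)
  obtain ⟨C₂, h₂⟩ := (isCompact_closedBall (0 : Matrix ι ι ℝ) R).exists_bound_of_continuousOn
    (f := fun X => X.det) (Continuous.continuousOn h_det)
  refine ⟨max 1 (max C₁ C₂), le_max_left _ _, fun X hX => ?_⟩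
  have hX' : X ∈ closedBall (0 : Matrix ι ι ℝ) R := mem_closedBall_zero_iff.2 hX
  exact ⟨(h₁ X hX').trans (by simp), (h₂ X hX').trans (by simp)⟩

lemma mul_sum_norm_sq_le_sum_trace_mul {A : Matrix ι ι ℝ} {ξ : ι → Matrix ι ι ℝ} {τ : ℝ}
    (hA : (A - τ • (1 : Matrix ι ι ℝ)).PosSemidef) (hξ : ∀ j, (ξ j)ᵀ = ξ j) :
    τ * ∑ j, ‖ξ j‖ ^ 2 ≤ ∑ i, ∑ j, A i j * (ξ i * ξ j).trace := by
  have h_entry : ∀ p q, τ * ∑ j, ξ j p q ^ 2 ≤ ∑ i, ∑ j, A i j * (ξ i p q * ξ j p q) := by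
    intro p q
    have h_nonneg := hA.dotProduct_mulVec_nonneg fun j => ξ j p q
    simp only [star_trivial, sub_mulVec, smul_mulVec, one_mulVec, dotProduct_sub,
      dotProduct_smul, smul_eq_mul] at h_nonneg
    simp only [dotProduct, mulVec, Finset.mul_sum] at h_nonneg
    simp only [Finset.mul_sum, sq]
    refine (sub_nonneg.1 h_nonneg).trans_eq ?_
    exact Finset.sum_congr rfl fun i _ => Finset.sum_congr rfl fun j _ => by ring
  have h_trace : ∀ i j, (ξ i * ξ j).trace = ∑ p, ∑ q, ξ i p q * ξ j p q := fun i j => by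
    conv_lhs => rw [← hξ j]
    simp [Matrix.trace, Matrix.mul_apply]
  calc τ * ∑ j, ‖ξ j‖ ^ 2 = ∑ p, ∑ q, τ * ∑ j, ξ j p q ^ 2 := by
        simp only [frobenius_norm_sq, Finset.mul_sum]
        rw [Finset.sum_comm]
        exact Finset.sum_congr rfl fun p _ => Finset.sum_comm
    _ ≤ ∑ p, ∑ q, ∑ i, ∑ j, A i j * (ξ i p q * ξ j p q) :=
        Finset.sum_le_sum fun p _ => Finset.sum_le_sum fun q _ => h_entry p q
    _ = ∑ i, ∑ j, ∑ p, ∑ q, A i j * (ξ i p q * ξ j p q) := by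
        simp only [← Fintype.sum_prod_type' fun p q => ∑ i, ∑ j, A i j * (ξ i p q * ξ j p q),
          ← Fintype.sum_prod_type' fun p q => A _ _ * (ξ _ p q * ξ _ p q)]
        rw [Finset.sum_comm]
        exact Finset.sum_congr rfl fun i _ => Finset.sum_comm
    _ = ∑ i, ∑ j, A i j * (ξ i * ξ j).trace := by simp only [h_trace, Finset.mul_sum]

lemma frobenius_norm_le_norm_inv_sq_mul_norm_mul_mul_transpose {B : Matrix ι ι ℝ}
    (hB : IsUnit B.det) (X : Matrix ι ι ℝ) : ‖X‖ ≤ ‖B⁻¹‖ ^ 2 * ‖B * X * Bᵀ‖ := by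
  have hBt : IsUnit Bᵀ.det := by rwa [det_transpose]
  have h_eq : X = B⁻¹ * (B * X * Bᵀ) * (B⁻¹)ᵀ := by
    rw [transpose_nonsing_inv]
    simp only [← Matrix.mul_assoc]
    rw [nonsing_inv_mul _ hB, Matrix.one_mul, Matrix.mul_assoc, mul_nonsing_inv _ hBt,
      Matrix.mul_one]
  calc ‖X‖ = ‖B⁻¹ * (B * X * Bᵀ) * (B⁻¹)ᵀ‖ := congrArg _ h_eq
    _ ≤ ‖B⁻¹‖ * ‖B * X * Bᵀ‖ * ‖(B⁻¹)ᵀ‖ :=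
        (norm_mul_le _ _).trans (by gcongr; exact norm_mul_le _ _)
    _ = ‖B⁻¹‖ ^ 2 * ‖B * X * Bᵀ‖ := by rw [frobenius_norm_transpose]; ring

/- Factor `H⁻¹ = BᵀB`; then `ξⱼ = B hⱼ Bᵀ` turns `tr (H⁻¹ hᵢ H⁻¹ hⱼ)` into the Frobenius
pairing of `ξᵢ` and `ξⱼ`, and `q` is `∑ ‖ξⱼ‖²`. -/
lemma exists_coercivity_bound {H A : Matrix ι ι ℝ} {h : ι → Matrix ι ι ℝ} {τ : ℝ}
    (hH : H.PosDef) (hA : (A - τ • (1 : Matrix ι ι ℝ)).PosSemidef) (hh : ∀ i, (h i)ᵀ = h i) :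
    ∃ q ≥ 0, τ * q ≤ ∑ i, ∑ j, A i j * (H⁻¹ * h i * H⁻¹ * h j).trace ∧
      ∑ j, (H⁻¹ * h j).trace ^ 2 ≤ Fintype.card ι * q ∧ ∑ j, ‖h j‖ ^ 2 ≤ H.trace ^ 2 * q := by
  obtain ⟨B, hB, hJ⟩ := exists_isUnit_transpose_mul_self_of_posDef hH.inv
  set ξ : ι → Matrix ι ι ℝ := fun j => B * h j * Bᵀ with hξ
  have hξ_symm : ∀ j, (ξ j)ᵀ = ξ j := fun j => by
    simp only [hξ, transpose_mul, transpose_transpose, hh, Matrix.mul_assoc]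
  refine ⟨∑ j, ‖ξ j‖ ^ 2, by positivity, ?_, ?_, ?_⟩
  · have h_pair : ∀ i j, (H⁻¹ * h i * H⁻¹ * h j).trace = (ξ i * ξ j).trace := fun i j => by
      simp only [hJ, hξ, Matrix.mul_assoc]
      rw [trace_mul_comm]
      simp only [Matrix.mul_assoc]
    simpa only [h_pair] using mul_sum_norm_sq_le_sum_trace_mul hA hξ_symm
  · rw [Finset.mul_sum]
    refine Finset.sum_le_sum fun j _ => ?_
    have h_tr : (H⁻¹ * h j).trace = (ξ j).trace := by rw [hJ, Matrix.mul_assoc, trace_mul_comm]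
    rw [h_tr]
    exact trace_sq_le_card_mul_frobenius_norm_sq _
  · rw [Finset.mul_sum]
    refine Finset.sum_le_sum fun j _ => ?_
    have h_norm_inv : ‖B⁻¹‖ ^ 2 = H.trace := by
      rw [frobenius_norm_sq_eq_trace, transpose_nonsing_inv, ← Matrix.mul_inv_rev, ← hJ,
        nonsing_inv_nonsing_inv _ hH.det_pos.ne'.isUnit]
    rw [← mul_pow, ← h_norm_inv]
    gcongr
    exact frobenius_norm_le_norm_inv_sq_mul_norm_mul_mul_transpose hB _

end Matrices

section MatrixCalculus

attribute [local instance] Matrix.frobeniusNormedAddCommGroup Matrix.frobeniusNormedSpace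
  Matrix.frobeniusNormedRing Matrix.frobeniusNormedAlgebra

variable {ι : Type*} [Fintype ι]
variable {E : Type*} [NormedAddCommGroup E] [NormedSpace ℝ E]
  {X Y : E → Matrix ι ι ℝ} {s : Set E} {x v : E} {m : WithTop ℕ∞}

lemma isBoundedLinearMap_matrix_apply (i j : ι) :
    IsBoundedLinearMap ℝ fun X : Matrix ι ι ℝ => X i j :=
  (entryLinearMap ℝ ℝ i j).isLinear.with_bound 1 fun X => by
    simpa using abs_apply_le_frobenius_norm X i j

lemma contDiffOn_matrix_apply (hX : ContDiffOn ℝ m X s) (i j : ι) :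
    ContDiffOn ℝ m (fun y => X y i j) s :=
  (isBoundedLinearMap_matrix_apply i j).contDiff.comp_contDiffOn hX

lemma contDiffOn_matrix_of_apply (hX : ∀ i j, ContDiffOn ℝ m (fun y => X y i j) s) :
    ContDiffOn ℝ m X s := by
  classical
  have h_eq : X = fun y => ∑ i, ∑ j, X y i j • Matrix.single i j (1 : ℝ) := by
    ext1 y
    conv_lhs => rw [matrix_eq_sum_single (X y)]
    simp
  rw [h_eq]
  exact ContDiffOn.sum fun i _ => ContDiffOn.sum fun j _ => (hX i j).smul contDiffOn_const

lemma contDiffOn_matrix_trace (hX : ContDiffOn ℝ m X s) :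
    ContDiffOn ℝ m (fun y => (X y).trace) s :=
  ContDiffOn.sum fun i _ => contDiffOn_matrix_apply hX i i

lemma contDiffOn_matrix_mulVec_apply {w : E → ι → ℝ} (hX : ContDiffOn ℝ m X s)
    (hw : ContDiffOn ℝ m w s) (i : ι) : ContDiffOn ℝ m (fun y => (X y *ᵥ w y) i) s :=
  ContDiffOn.sum fun j _ => (contDiffOn_matrix_apply hX i j).mul (contDiffOn_pi.1 hw j)

lemma hasFDerivAt_matrix_apply (hX : DifferentiableAt ℝ X x) (i j : ι) :
    HasFDerivAt (fun y => X y i j)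
      ((isBoundedLinearMap_matrix_apply i j).toContinuousLinearMap.comp (fderiv ℝ X x)) x :=
  (isBoundedLinearMap_matrix_apply i j).hasFDerivAt.comp x hX.hasFDerivAt

lemma fderiv_matrix_apply (hX : DifferentiableAt ℝ X x) (i j : ι) :
    fderiv ℝ (fun y => X y i j) x v = fderiv ℝ X x v i j := by
  rw [(hasFDerivAt_matrix_apply hX i j).fderiv]
  rfl

lemma fderiv_matrix_trace (hX : DifferentiableAt ℝ X x) :
    fderiv ℝ (fun y => (X y).trace) x v = (fderiv ℝ X x v).trace := by
  have h : HasFDerivAt (fun y => (X y).trace) _ x :=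
    HasFDerivAt.fun_sum fun i _ => hasFDerivAt_matrix_apply hX i i
  rw [h.fderiv]
  simp [Matrix.trace]
  rfl

lemma fderiv_matrix_mul (hX : DifferentiableAt ℝ X x) (hY : DifferentiableAt ℝ Y x) :
    fderiv ℝ (fun y => X y * Y y) x v = fderiv ℝ X x v * Y x + X x * fderiv ℝ Y x v := by
  classical
  have h : HasFDerivAt (fun y => X y * Y y) _ x := hX.hasFDerivAt.mul' hY.hasFDerivAt
  rw [h.fderiv, add_comm]
  rfl

lemma fderiv_matrix_mulVec_apply {w : E → ι → ℝ} (hX : DifferentiableAt ℝ X x)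
    (hw : DifferentiableAt ℝ w x) (i : ι) :
    fderiv ℝ (fun y => (X y *ᵥ w y) i) x v =
      (fderiv ℝ X x v *ᵥ w x + X x *ᵥ fderiv ℝ w x v) i := by
  have h : HasFDerivAt (fun y => (X y *ᵥ w y) i) _ x :=
    HasFDerivAt.fun_sum fun j _ => (hasFDerivAt_matrix_apply hX i j).mul
      (hasFDerivAt_pi'.1 hw.hasFDerivAt j)
  rw [h.fderiv]
  simp only [_root_.sum_apply, Pi.add_apply, mulVec, dotProduct, ← Finset.sum_add_distrib]
  exact Finset.sum_congr rfl fun j _ => by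
    rw [add_comm, mul_comm (fderiv ℝ X x v i j)]
    rfl

variable [DecidableEq ι]

lemma contDiffOn_matrix_det (hX : ContDiffOn ℝ m X s) :
    ContDiffOn ℝ m (fun y => (X y).det) s := by
  simp only [det_apply']
  exact ContDiffOn.sum fun σ _ => contDiffOn_const.mul
    (contDiffOn_prod fun i _ => contDiffOn_matrix_apply hX _ _)

lemma contDiffOn_matrix_inv (hX : ContDiffOn ℝ m X s) (hdet : ∀ y ∈ s, IsUnit (X y).det) :
    ContDiffOn ℝ m (fun y => (X y)⁻¹) s := by
  intro y hy
  obtain ⟨U, hU⟩ := (isUnit_iff_isUnit_det _).2 (hdet y hy)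
  have h_inv := contDiffAt_ringInverse ℝ (n := m) U
  rw [hU] at h_inv
  simp only [nonsing_inv_eq_ringInverse]
  exact h_inv.comp_contDiffWithinAt y (hX y hy)

lemma fderiv_matrix_inv (hX : DifferentiableAt ℝ X x) (hdet : IsUnit (X x).det) :
    fderiv ℝ (fun y => (X y)⁻¹) x v = -((X x)⁻¹ * fderiv ℝ X x v * (X x)⁻¹) := by
  obtain ⟨U, hU⟩ := (isUnit_iff_isUnit_det _).2 hdet
  have h_inv := hasFDerivAt_ringInverse (𝕜 := ℝ) U
  have hU_inv : (↑U⁻¹ : Matrix ι ι ℝ) = (X x)⁻¹ := by rw [← hU, coe_units_inv]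
  rw [hU, hU_inv] at h_inv
  have h_ring : (fun y => (X y)⁻¹) = fun y => Ring.inverse (X y) := by
    simp only [nonsing_inv_eq_ringInverse]
  have h : HasFDerivAt (fun y => Ring.inverse (X y)) _ x := h_inv.comp x hX.hasFDerivAt
  rw [h_ring, h.fderiv]
  rfl

lemma fderiv_matrix_det (hX : DifferentiableAt ℝ X x) :
    fderiv ℝ (fun y => (X y).det) x v = ((X x).adjugate * fderiv ℝ X x v).trace := by
  let D : ContinuousMultilinearMap ℝ (fun _ : ι => ι → ℝ) ℝ :=
    ⟨(detRowAlternating (R := ℝ) (n := ι)).toMultilinearMap, continuous_id.matrix_det⟩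
  have h_rows : HasFDerivAt (fun y i => X y i) (ContinuousLinearMap.pi fun i =>
      ContinuousLinearMap.pi fun j =>
        (isBoundedLinearMap_matrix_apply i j).toContinuousLinearMap.comp (fderiv ℝ X x)) x :=
    hasFDerivAt_pi.2 fun i => hasFDerivAt_pi.2 fun j => hasFDerivAt_matrix_apply hX i j
  have h : HasFDerivAt (fun y => (X y).det) _ x :=
    (D.hasFDerivAt fun i j => X x i j).comp x h_rows
  rw [h.fderiv, trace_mul_comm]
  refine (D.linearDeriv_apply (fun i j => X x i j) fun i j => fderiv ℝ X x v i j).trans ?_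
  refine Finset.sum_congr rfl fun i _ => ?_
  have h_cramer : (of (Function.update (fun i j => X x i j) i (fderiv ℝ X x v i))).det =
      cramer (X x)ᵀ (fderiv ℝ X x v i) i := by
    rw [cramer_transpose_apply]
    rfl
  refine h_cramer.trans ?_
  rw [cramer_eq_adjugate_mulVec, ← adjugate_transpose]
  simp only [diag_apply, Matrix.mul_apply, mulVec, dotProduct, transpose_apply]
  exact Finset.sum_congr rfl fun j _ => mul_comm _ _

end MatrixCalculus

/-! ### The dual system and its divergence structure -/

section DualJets

attribute [local instance] Matrix.frobeniusNormedRing Matrix.frobeniusNormedAlgebra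

variable {ι : Type*} [Fintype ι] [DecidableEq ι]
variable {H A : Matrix ι ι ℝ} {h t : ι → Matrix ι ι ℝ} {d τ R : ℝ}

/-- The gradient of `log det H` at a point where `H` has partial derivatives `h`. -/
noncomputable def logDetGrad (H : Matrix ι ι ℝ) (h : ι → Matrix ι ι ℝ) : ι → ℝ :=
  fun j => (H⁻¹ * h j).trace

/-- The vector field `H⁻¹ (tr (A ∂ₘH))ₘ - A ∇(log det H)`, whose divergence involves no second
derivatives of `H` when `H` is the Hessian matrix of a function; `h` stands for the partial
derivatives of `H`. -/
noncomputable def dualField (H A : Matrix ι ι ℝ) (h : ι → Matrix ι ι ℝ) : ι → ℝ :=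
  H⁻¹ *ᵥ (fun m => (A * h m).trace) - A *ᵥ logDetGrad H h

/-- The coefficient matrix of the gradient of `-log det H` in `dualField` along solutions of
`tr (A H) + d det A det H = c`. -/
def dualDiffusion (H A : Matrix ι ι ℝ) (d : ℝ) : Matrix ι ι ℝ :=
  A + (d * A.det) • H.adjugate

/-- The gradient-free part of `dualField` (up to sign) along solutions of
`tr (A H) + d det A det H = c` with `∂ₗA = ∑ₖ Hₖₗ tₖ`. -/
def dualDrift (H A : Matrix ι ι ℝ) (t : ι → Matrix ι ι ℝ) (d : ℝ) : ι → ℝ :=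
  fun k => (t k * H).trace + d * H.det * (A.adjugate * t k).trace

/-- The row vector of divergences of the columns of `A`, when `∂ₗA = ∑ₖ Hₖₗ tₖ`. -/
def dualColumnDivergence (H : Matrix ι ι ℝ) (t : ι → Matrix ι ι ℝ) : ι → ℝ :=
  fun j => ∑ i, (∑ k, H k i • t k) i j

/-- The divergence of `dualField`, expressed through `H`, its first derivatives `h`, `A` and the
coefficients `t` of `∂ₗA = ∑ₖ Hₖₗ tₖ`. -/
noncomputable def dualDivergence (H A : Matrix ι ι ℝ) (h t : ι → Matrix ι ι ℝ) : ℝ :=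
  ∑ i, ∑ j, A i j * (H⁻¹ * h i * H⁻¹ * h j).trace + ∑ m, (t m * h m).trace
    - dualColumnDivergence H t ⬝ᵥ logDetGrad H h
    - logDetGrad H h ⬝ᵥ (H⁻¹ *ᵥ fun m => (A * h m).trace)

lemma dualField_eq_neg_dualDiffusion_mulVec_add (hH : H.PosDef)
    (h_lin : ∀ k, ((∑ l, H l k • t l) * H).trace + (A * h k).trace +
      d * ((A.adjugate * ∑ l, H l k • t l).trace * H.det +
        A.det * (H.adjugate * h k).trace) = 0) :
    dualField H A h = -(dualDiffusion H A d *ᵥ logDetGrad H h + dualDrift H A t d) := by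
  have hdet : IsUnit H.det := hH.det_pos.ne'.isUnit
  have h_symm : ∀ k l, H l k = H k l := fun k l => by simpa using hH.1.apply k l
  have h_g : (fun m => (A * h m).trace) =
      -(H *ᵥ dualDrift H A t d) - (d * A.det * H.det) • logDetGrad H h := by
    ext k
    have h_drift : (H *ᵥ dualDrift H A t d) k = ((∑ l, H l k • t l) * H).trace +
        d * ((A.adjugate * ∑ l, H l k • t l).trace * H.det) := by
      simp only [mulVec, dotProduct, dualDrift, Finset.sum_mul, Finset.mul_sum, trace_sum,
        Matrix.smul_mul, Matrix.mul_smul, trace_smul, smul_eq_mul, h_symm,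
        ← Finset.sum_add_distrib]
      exact Finset.sum_congr rfl fun l _ => by ring
    have h_w : (H.adjugate * h k).trace = H.det * logDetGrad H h k := by
      rw [adjugate_eq_det_smul_inv hdet, smul_mul, trace_smul, smul_eq_mul, logDetGrad]
    have := h_lin k
    rw [h_w] at this
    simp only [Pi.sub_apply, Pi.neg_apply, Pi.smul_apply, smul_eq_mul, h_drift]
    linarith
  rw [dualField, h_g, mulVec_sub, mulVec_neg, mulVec_mulVec, nonsing_inv_mul _ hdet, one_mulVec,
    dualDiffusion, adjugate_eq_det_smul_inv hdet, add_mulVec, mulVec_smul, smul_smul,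
    smul_mulVec]
  abel

lemma posSemidef_dualDiffusion_sub (hτ : 0 ≤ τ) (hd : 0 ≤ d) (hH : H.PosDef)
    (hA : (A - τ • (1 : Matrix ι ι ℝ)).PosSemidef) :
    (dualDiffusion H A d - τ • (1 : Matrix ι ι ℝ)).PosSemidef := by
  have hA₀ : A.PosSemidef := posSemidef_of_posSemidef_sub_smul_one hτ hA
  rw [dualDiffusion, add_sub_right_comm, adjugate_eq_det_smul_inv hH.det_pos.ne'.isUnit]
  exact hA.add ((hH.inv.posSemidef.smul hH.det_pos.le).smul (mul_nonneg hd hA₀.det_nonneg))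

lemma exists_norm_dualDiffusion_le_and_norm_dualDrift_le (ι : Type*) [Fintype ι] [DecidableEq ι]
    (R D : ℝ) :
    ∃ C ≥ 0, ∀ (H A : Matrix ι ι ℝ) (t : ι → Matrix ι ι ℝ) (d : ℝ), ‖H‖ ≤ R → ‖A‖ ≤ R →
      (∀ k, ‖t k‖ ≤ R) → 0 ≤ d → d ≤ D →
      ‖dualDiffusion H A d‖ ≤ C ∧ ‖toLp 2 (dualDrift H A t d)‖ ≤ C := by
  obtain ⟨C, hC, h_bound⟩ := exists_norm_adjugate_le_and_abs_det_le ι R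
  have : 0 ≤ C := by linarith
  refine ⟨max 0 (max (R + D * C * C) (Fintype.card ι * (R * R + D * C * (C * R)))),
    le_max_left _ _, fun H A t d hH hA ht hd hdD => ?_⟩
  have hR : 0 ≤ R := (norm_nonneg _).trans hH
  have hD : 0 ≤ D := hd.trans hdD
  obtain ⟨hH_adj, hH_det⟩ := h_bound H hH
  obtain ⟨hA_adj, hA_det⟩ := h_bound A hA
  constructor
  · refine le_trans ?_ ((le_max_left _ _).trans (le_max_right _ _))
    calc ‖dualDiffusion H A d‖ ≤ ‖A‖ + ‖(d * A.det) • H.adjugate‖ := norm_add_le _ _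
      _ = ‖A‖ + d * |A.det| * ‖H.adjugate‖ := by
          rw [norm_smul, norm_mul, Real.norm_of_nonneg hd, Real.norm_eq_abs]
      _ ≤ R + D * C * C := by gcongr
  · refine le_trans ?_ ((le_max_right _ _).trans (le_max_right _ _))
    refine norm_toLp_le_of_abs_le fun k => ?_
    calc |dualDrift H A t d k|
        ≤ |(t k * H).trace| + |d * H.det * (A.adjugate * t k).trace| := abs_add_le _ _
      _ = |(t k * H).trace| + d * |H.det| * |(A.adjugate * t k).trace| := by
          rw [abs_mul, abs_mul, abs_of_nonneg hd]
      _ ≤ ‖t k‖ * ‖H‖ + d * |H.det| * (‖A.adjugate‖ * ‖t k‖) := by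
          gcongr <;> exact abs_trace_mul_le _ _
      _ ≤ R * R + D * C * (C * R) := by
          have := ht k
          gcongr

lemma sum_inv_mul_mul_inv_mulVec_apply (h_symm : ∀ i p q, h i p q = h q p i) (v : ι → ℝ) :
    ∑ i, ((H⁻¹ * h i * H⁻¹) *ᵥ v) i = logDetGrad H h ⬝ᵥ (H⁻¹ *ᵥ v) := by
  have h_col : ∀ q, ∑ i, (H⁻¹ * h i) i q = logDetGrad H h q := fun q => by
    simp only [logDetGrad, Matrix.trace, diag_apply, Matrix.mul_apply, h_symm _ _ q]
  calc ∑ i, ((H⁻¹ * h i * H⁻¹) *ᵥ v) i = ∑ i, ∑ q, (H⁻¹ * h i) i q * (H⁻¹ *ᵥ v) q := by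
        refine Finset.sum_congr rfl fun i _ => ?_
        rw [← mulVec_mulVec]
        rfl
    _ = ∑ q, (∑ i, (H⁻¹ * h i) i q) * (H⁻¹ *ᵥ v) q := by
        rw [Finset.sum_comm]
        simp only [Finset.sum_mul]
    _ = logDetGrad H h ⬝ᵥ (H⁻¹ *ᵥ v) := by simp only [h_col, dotProduct]

lemma sum_inv_mulVec_trace_apply (hH : IsUnit H.det) :
    ∑ i, (H⁻¹ *ᵥ fun m => ((∑ k, H k i • t k) * h m).trace) i = ∑ m, (t m * h m).trace := by
  have h_inv : ∀ k m, ∑ i, H k i * H⁻¹ i m = (1 : Matrix ι ι ℝ) k m := fun k m => by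
    rw [← mul_nonsing_inv H hH, Matrix.mul_apply]
  calc ∑ i, (H⁻¹ *ᵥ fun m => ((∑ k, H k i • t k) * h m).trace) i
      = ∑ i, ∑ m, ∑ k, H k i * H⁻¹ i m * (t k * h m).trace := by
        simp only [mulVec, dotProduct, Finset.sum_mul, trace_sum, Matrix.smul_mul, trace_smul,
          smul_eq_mul, Finset.mul_sum]
        refine Finset.sum_congr rfl fun i _ => Finset.sum_congr rfl fun m _ =>
          Finset.sum_congr rfl fun k _ => by ring
    _ = ∑ m, ∑ k, (∑ i, H k i * H⁻¹ i m) * (t k * h m).trace := by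
        rw [Finset.sum_comm]
        refine Finset.sum_congr rfl fun m _ => ?_
        rw [Finset.sum_comm]
        simp only [Finset.sum_mul]
    _ = ∑ m, (t m * h m).trace := by simp [h_inv, Matrix.one_apply]

lemma norm_dualColumnDivergence_le (hH : ‖H‖ ≤ R) (ht : ∀ k, ‖t k‖ ≤ R) :
    ‖toLp 2 (dualColumnDivergence H t)‖ ≤ Fintype.card ι * (Fintype.card ι * (R * R)) := by
  have hR : 0 ≤ R := (norm_nonneg H).trans hH
  refine norm_toLp_le_of_abs_le fun j => ?_
  have h_eq : dualColumnDivergence H t j = ∑ k, (H * t k) k j := by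
    simp only [dualColumnDivergence, Matrix.sum_apply, Matrix.smul_apply,
      smul_eq_mul, Matrix.mul_apply]
    exact Finset.sum_comm
  rw [h_eq]
  refine (Finset.abs_sum_le_sum_abs _ _).trans ?_
  refine (Finset.sum_le_card_nsmul _ _ (R * R) fun k _ => ?_).trans_eq (by simp)
  have := ht k
  calc |(H * t k) k j| ≤ ‖H * t k‖ := abs_apply_le_frobenius_norm _ _ _
    _ ≤ ‖H‖ * ‖t k‖ := norm_mul_le _ _
    _ ≤ R * R := by gcongr

lemma sum_norm_le_sqrt_card_mul {q : ℝ} (hH : ‖H‖ ≤ R) (hHpos : H.PosDef)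
    (hq : ∑ j, ‖h j‖ ^ 2 ≤ H.trace ^ 2 * q) (hq₀ : 0 ≤ q) :
    ∑ j, ‖h j‖ ≤ √(Fintype.card ι) * (Fintype.card ι * R) * √q := by
  have hR : 0 ≤ R := (norm_nonneg H).trans hH
  have h_tr : H.trace ≤ Fintype.card ι * R := by
    refine (Finset.sum_le_card_nsmul _ _ R fun i _ => ?_).trans_eq (by simp)
    exact (le_abs_self _).trans ((abs_apply_le_frobenius_norm H i i).trans hH)
  refine abs_le_of_sq_le_sq' ?_ (by positivity) |>.2
  calc (∑ j, ‖h j‖) ^ 2 ≤ Fintype.card ι * ∑ j, ‖h j‖ ^ 2 := sq_sum_le_card_mul_sum_sq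
    _ ≤ Fintype.card ι * ((Fintype.card ι * R) ^ 2 * q) := by
        have := hHpos.posSemidef.trace_nonneg
        grw [hq, h_tr]
    _ = (√(Fintype.card ι) * (Fintype.card ι * R) * √q) ^ 2 := by
        rw [mul_pow _ √q, mul_pow √_, Real.sq_sqrt (by positivity), Real.sq_sqrt hq₀]
        ring

lemma dualDrift_dotProduct_logDetGrad_le (hd : 0 ≤ d) (hτ : 0 ≤ τ) (hH : H.PosDef)
    (hA : (A - τ • (1 : Matrix ι ι ℝ)).PosSemidef)
    (h_field : dualField H A h = -(dualDiffusion H A d *ᵥ logDetGrad H h + dualDrift H A t d)) :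
    dualDrift H A t d ⬝ᵥ logDetGrad H h ≤
      -(logDetGrad H h ⬝ᵥ (H⁻¹ *ᵥ fun m => (A * h m).trace)) := by
  set w := logDetGrad H h
  have h_eq : -(w ⬝ᵥ (H⁻¹ *ᵥ fun m => (A * h m).trace)) =
      w ⬝ᵥ ((dualDiffusion H A d - A) *ᵥ w) + dualDrift H A t d ⬝ᵥ w := by
    rw [dualField, sub_eq_iff_eq_add] at h_field
    rw [h_field, sub_mulVec, dotProduct_comm (dualDrift H A t d)]
    simp only [dotProduct_add, dotProduct_neg, dotProduct_sub]
    ring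
  have hA₀ : A.PosSemidef := posSemidef_of_posSemidef_sub_smul_one hτ hA
  have h_diff : dualDiffusion H A d - A = (d * A.det * H.det) • H⁻¹ := by
    rw [dualDiffusion, add_sub_cancel_left, adjugate_eq_det_smul_inv hH.det_pos.ne'.isUnit,
      smul_smul]
  have h_nonneg : 0 ≤ w ⬝ᵥ ((dualDiffusion H A d - A) *ᵥ w) := by
    rw [h_diff]
    exact (hH.inv.posSemidef.smul (mul_nonneg (mul_nonneg hd hA₀.det_nonneg)
      hH.det_pos.le)).dotProduct_mulVec_nonneg w
  linarith

lemma exists_coercivity_dualDivergence {C : ℝ} (hd : 0 ≤ d) (hτ : 0 < τ) (hHpos : H.PosDef)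
    (hA : (A - τ • (1 : Matrix ι ι ℝ)).PosSemidef) (hh : ∀ i, (h i)ᵀ = h i) (hH : ‖H‖ ≤ R)
    (ht : ∀ k, ‖t k‖ ≤ R) (h_drift : ‖toLp 2 (dualDrift H A t d)‖ ≤ C)
    (h_field : dualField H A h = -(dualDiffusion H A d *ᵥ logDetGrad H h + dualDrift H A t d)) :
    ∃ q ≥ 0, ‖toLp 2 (logDetGrad H h)‖ ^ 2 ≤ Fintype.card ι * q ∧
      τ * q - √(Fintype.card ι) * (Fintype.card ι * R * R +
        Fintype.card ι * (Fintype.card ι * (R * R)) + C) * √q ≤ dualDivergence H A h t := by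
  obtain ⟨q, hq₀, hq, hq_w, hq_h⟩ := exists_coercivity_bound hHpos hA hh
  have h_w_sq : ‖toLp 2 (logDetGrad H h)‖ ^ 2 ≤ Fintype.card ι * q := by
    rw [EuclideanSpace.real_norm_sq_eq]
    exact hq_w
  refine ⟨q, hq₀, h_w_sq, ?_⟩
  have hR : 0 ≤ R := (norm_nonneg H).trans hH
  set w := logDetGrad H h
  have h_w : ‖toLp 2 w‖ ≤ √(Fintype.card ι) * √q := by
    rw [← Real.sqrt_mul (by positivity)]
    exact Real.le_sqrt_of_sq_le h_w_sq
  have h_t : |∑ m, (t m * h m).trace| ≤ R * (√(Fintype.card ι) * (Fintype.card ι * R) * √q) := by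
    refine le_trans ?_ (mul_le_mul_of_nonneg_left (sum_norm_le_sqrt_card_mul hH hHpos hq_h hq₀) hR)
    rw [Finset.mul_sum]
    refine (Finset.abs_sum_le_sum_abs _ _).trans (Finset.sum_le_sum fun m _ => ?_)
    exact (abs_trace_mul_le _ _).trans (by have := ht m; gcongr)
  have h_col : |dualColumnDivergence H t ⬝ᵥ w| ≤
      Fintype.card ι * (Fintype.card ι * (R * R)) * (√(Fintype.card ι) * √q) :=
    (abs_dotProduct_le _ _).trans
      (mul_le_mul (norm_dualColumnDivergence_le hH ht) h_w (norm_nonneg _) (by positivity))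
  have h_b : |dualDrift H A t d ⬝ᵥ w| ≤ C * (√(Fintype.card ι) * √q) :=
    (abs_dotProduct_le _ _).trans
      (mul_le_mul h_drift h_w (norm_nonneg _) ((norm_nonneg _).trans h_drift))
  have h_last : dualDrift H A t d ⬝ᵥ w ≤ -(w ⬝ᵥ (H⁻¹ *ᵥ fun m => (A * h m).trace)) :=
    dualDrift_dotProduct_logDetGrad_le hd hτ.le hHpos hA h_field
  rw [dualDivergence]
  linarith [neg_le_of_abs_le h_t, le_of_abs_le h_col, neg_le_of_abs_le h_b]

lemma norm_dualField_le {C : ℝ}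
    (h_field : dualField H A h = -(dualDiffusion H A d *ᵥ logDetGrad H h + dualDrift H A t d))
    (h_diff : ‖dualDiffusion H A d‖ ≤ C) (h_drift : ‖toLp 2 (dualDrift H A t d)‖ ≤ C) :
    ‖toLp 2 (dualField H A h)‖ ≤ C * (‖toLp 2 (logDetGrad H h)‖ + 1) := by
  rw [h_field, toLp_neg, norm_neg, toLp_add]
  calc _ ≤ ‖toLp 2 (dualDiffusion H A d *ᵥ logDetGrad H h)‖ + ‖toLp 2 (dualDrift H A t d)‖ :=
        norm_add_le _ _
    _ ≤ ‖dualDiffusion H A d‖ * ‖toLp 2 (logDetGrad H h)‖ + C := by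
        gcongr
        exact norm_mulVec_le _ _
    _ ≤ C * (‖toLp 2 (logDetGrad H h)‖ + 1) := by
        rw [mul_add, mul_one]
        gcongr

lemma neg_div_le_neg_dotProduct_dualField {C : ℝ} (hd : 0 ≤ d) (hτ : 0 < τ) (hH : H.PosDef)
    (hA : (A - τ • (1 : Matrix ι ι ℝ)).PosSemidef)
    (h_field : dualField H A h = -(dualDiffusion H A d *ᵥ logDetGrad H h + dualDrift H A t d))
    (h_drift : ‖toLp 2 (dualDrift H A t d)‖ ≤ C) :
    -(C ^ 2 / (4 * τ)) ≤ -(logDetGrad H h ⬝ᵥ dualField H A h) := by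
  set w := logDetGrad H h
  have h_coercive : τ * ‖toLp 2 w‖ ^ 2 ≤ w ⬝ᵥ dualDiffusion H A d *ᵥ w := by
    have := (posSemidef_dualDiffusion_sub hτ.le hd hH hA).dotProduct_mulVec_nonneg w
    simp only [star_trivial, sub_mulVec, smul_mulVec, one_mulVec, dotProduct_sub,
      dotProduct_smul, smul_eq_mul] at this
    rw [norm_toLp_sq]
    linarith
  have h_cross : -(‖toLp 2 w‖ * C) ≤ w ⬝ᵥ dualDrift H A t d :=
    neg_le_of_abs_le ((abs_dotProduct_le _ _).trans (by gcongr))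
  have h_young : ‖toLp 2 w‖ * C ≤ τ * ‖toLp 2 w‖ ^ 2 + C ^ 2 / (4 * τ) := by
    have := sq_nonneg (2 * τ * ‖toLp 2 w‖ - C)
    field_simp
    linarith
  rw [h_field, dotProduct_neg, neg_neg, dotProduct_add]
  linarith

lemma exists_dual_structure_bound (ι : Type*) [Fintype ι] [DecidableEq ι] {τ : ℝ} (hτ : 0 < τ)
    (R D : ℝ) :
    ∃ K ≥ 1, ∀ (H A : Matrix ι ι ℝ) (h t : ι → Matrix ι ι ℝ) (d : ℝ), 0 ≤ d → d ≤ D →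
      H.PosDef → (A - τ • (1 : Matrix ι ι ℝ)).PosSemidef → (∀ i, (h i)ᵀ = h i) →
      ‖H‖ ≤ R → ‖A‖ ≤ R → (∀ k, ‖t k‖ ≤ R) →
      dualField H A h = -(dualDiffusion H A d *ᵥ logDetGrad H h + dualDrift H A t d) →
      ‖toLp 2 (logDetGrad H h)‖ ^ 2 ≤ K * (dualDivergence H A h t + K) ∧
      ‖toLp 2 (dualField H A h)‖ ≤ K * (‖toLp 2 (logDetGrad H h)‖ + 1) ∧
      -K ≤ -(logDetGrad H h ⬝ᵥ dualField H A h) := by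
  obtain ⟨C, hC, h_bound⟩ := exists_norm_dualDiffusion_le_and_norm_dualDrift_le ι R D
  set m : ℝ := (Fintype.card ι : ℝ)
  set P := √m * (m * R * R + m * (m * (R * R)) + C)
  set K := 1 + 2 * m / τ + P ^ 2 / (2 * τ) + C + C ^ 2 / (4 * τ)
  have hm : 0 ≤ 2 * m / τ := by positivity
  have hP : 0 ≤ P ^ 2 / (2 * τ) := by positivity
  have hCτ : 0 ≤ C ^ 2 / (4 * τ) := by positivity
  refine ⟨K, by linarith, fun H A h t d hd hdD hHpos hA hh hH hAR ht h_field => ?_⟩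
  obtain ⟨h_diff, h_drift⟩ := h_bound H A t d hH hAR ht hd hdD
  refine ⟨?_, (norm_dualField_le h_field h_diff h_drift).trans ?_,
    le_trans (by linarith) (neg_div_le_neg_dotProduct_dualField hd hτ hHpos hA h_field h_drift)⟩
  · obtain ⟨q, hq₀, hq_w, hq_div⟩ :=
      exists_coercivity_dualDivergence hd hτ hHpos hA hh hH ht h_drift h_field
    have h_young : P * √q ≤ τ / 2 * q + P ^ 2 / (2 * τ) := by
      have := sq_nonneg (τ * √q - P)
      rw [sub_sq, mul_pow, Real.sq_sqrt hq₀] at this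
      field_simp
      linarith
    have : τ / 2 * q ≤ dualDivergence H A h t + P ^ 2 / (2 * τ) := by linarith
    calc ‖toLp 2 (logDetGrad H h)‖ ^ 2 ≤ m * q := hq_w
      _ = 2 * m / τ * (τ / 2 * q) := by field_simp
      _ ≤ K * (dualDivergence H A h t + K) := by
          refine mul_le_mul (by linarith) (by linarith) (by positivity) (by linarith)
  · gcongr
    linarith

end DualJets

section DualSystem

attribute [local instance] Matrix.frobeniusNormedRing Matrix.frobeniusNormedAlgebra

variable {ι : Type*} [Fintype ι] [DecidableEq ι]

/-- The `k`-th partial derivative of a map on Euclidean space with values in a normed space. -/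
noncomputable def partialDeriv {X : Type*} [NormedAddCommGroup X] [NormedSpace ℝ X] (k : ι)
    (F : EuclideanSpace ℝ ι → X) (y : EuclideanSpace ℝ ι) : X :=
  fderiv ℝ F y (EuclideanSpace.single k 1)

lemma contDiffOn_partialDeriv {X : Type*} [NormedAddCommGroup X] [NormedSpace ℝ X]
    {F : EuclideanSpace ℝ ι → X} {Ω : Set (EuclideanSpace ℝ ι)} (hΩ : IsOpen Ω)
    (hF : ContDiffOn ℝ ∞ F Ω) (k : ι) : ContDiffOn ℝ ∞ (partialDeriv k F) Ω :=
  (hF.fderiv_of_isOpen hΩ (by simp)).clm_apply contDiffOn_const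

lemma partialDeriv_comm {X : Type*} [NormedAddCommGroup X] [NormedSpace ℝ X]
    {F : EuclideanSpace ℝ ι → X} {y : EuclideanSpace ℝ ι} (hF : ContDiffAt ℝ ∞ F y) (i j : ι) :
    partialDeriv i (partialDeriv j F) y = partialDeriv j (partialDeriv i F) y := by
  have h_diff : DifferentiableAt ℝ (fderiv ℝ F) y :=
    (hF.fderiv_right (m := 1) (by norm_cast)).differentiableAt one_ne_zero
  have h_snd : ∀ i j : ι, partialDeriv i (partialDeriv j F) y =
      fderiv ℝ (fderiv ℝ F) y (EuclideanSpace.single i 1) (EuclideanSpace.single j 1) :=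
    fun i j => by
      have h := h_diff.hasFDerivAt.clm_apply
        (hasFDerivAt_const (EuclideanSpace.single j (1 : ℝ)) y)
      rw [partialDeriv, HasFDerivAt.fderiv (f := partialDeriv j F) h]
      simp
  rw [h_snd, h_snd]
  exact (hF.isSymmSndFDerivAt (by simp; norm_cast)).eq _ _

/-- The Legendre-dual form of the equation: `H` is the Hessian matrix of a convex function, `A` is
the composition of a matrix-valued function with derivatives `tₖ` with the gradient of that convex
function, and `tr (A H) + d det A det H = c`. -/
structure IsDualSystem (Ω : Set (EuclideanSpace ℝ ι)) (H A : EuclideanSpace ℝ ι → Matrix ι ι ℝ)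
    (t : ι → EuclideanSpace ℝ ι → Matrix ι ι ℝ) (c d τ R : ℝ) : Prop where
  isOpen : IsOpen Ω
  contDiffOn_H : ContDiffOn ℝ ∞ H Ω
  contDiffOn_A : ContDiffOn ℝ ∞ A Ω
  posDef : ∀ y ∈ Ω, (H y).PosDef
  posSemidef : ∀ y ∈ Ω, (A y - τ • (1 : Matrix ι ι ℝ)).PosSemidef
  partialDeriv_H : ∀ y ∈ Ω, ∀ i j k, partialDeriv k H y i j = partialDeriv j H y i k
  partialDeriv_A : ∀ y ∈ Ω, ∀ l, partialDeriv l A y = ∑ k, H y k l • t k y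
  equation : ∀ y ∈ Ω, (A y * H y).trace + d * ((A y).det * (H y).det) = c
  norm_H_le : ∀ y ∈ Ω, ‖H y‖ ≤ R
  norm_A_le : ∀ y ∈ Ω, ‖A y‖ ≤ R
  norm_t_le : ∀ y ∈ Ω, ∀ k, ‖t k y‖ ≤ R

/-- The vector field of `dualField` along matrix-valued functions `H` and `A`. -/
noncomputable def dualVectorField (H A : EuclideanSpace ℝ ι → Matrix ι ι ℝ)
    (y : EuclideanSpace ℝ ι) : EuclideanSpace ℝ ι :=
  toLp 2 (dualField (H y) (A y) fun k => partialDeriv k H y)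

namespace IsDualSystem

variable {Ω : Set (EuclideanSpace ℝ ι)} {H A : EuclideanSpace ℝ ι → Matrix ι ι ℝ}
  {t : ι → EuclideanSpace ℝ ι → Matrix ι ι ℝ} {c d τ R : ℝ} {y : EuclideanSpace ℝ ι}

lemma differentiableAt {X : Type*} [NormedAddCommGroup X] [NormedSpace ℝ X]
    {F : EuclideanSpace ℝ ι → X} (S : IsDualSystem Ω H A t c d τ R) (hF : ContDiffOn ℝ ∞ F Ω)
    (hy : y ∈ Ω) : DifferentiableAt ℝ F y :=
  (hF.contDiffAt (S.isOpen.mem_nhds hy)).differentiableAt (by simp)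

lemma differentiableAt_H (S : IsDualSystem Ω H A t c d τ R) (hy : y ∈ Ω) :
    DifferentiableAt ℝ H y :=
  S.differentiableAt S.contDiffOn_H hy

lemma differentiableAt_partialDeriv_H (S : IsDualSystem Ω H A t c d τ R) (hy : y ∈ Ω) (k : ι) :
    DifferentiableAt ℝ (partialDeriv k H) y :=
  S.differentiableAt (contDiffOn_partialDeriv S.isOpen S.contDiffOn_H k) hy

lemma isUnit_det (S : IsDualSystem Ω H A t c d τ R) (hy : y ∈ Ω) : IsUnit (H y).det :=
  (S.posDef y hy).det_pos.ne'.isUnit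

lemma transpose_partialDeriv_H (S : IsDualSystem Ω H A t c d τ R) (hy : y ∈ Ω) (k : ι) :
    (partialDeriv k H y)ᵀ = partialDeriv k H y := by
  ext p q
  have h_symm : (fun z => H z p q) =ᶠ[nhds y] fun z => H z q p :=
    Filter.eventuallyEq_of_mem (S.isOpen.mem_nhds hy) fun z hz => by
      simpa using (S.posDef z hz).1.apply q p
  have h_entry := fun i j => fderiv_matrix_apply (v := EuclideanSpace.single k 1)
    (S.differentiableAt_H hy) i j
  exact (h_entry q p).symm.trans (congr($(h_symm.fderiv_eq (𝕜 := ℝ)) _) |>.symm.trans (h_entry p q))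

lemma partialDeriv_partialDeriv_H_symm (S : IsDualSystem Ω H A t c d τ R) (hy : y ∈ Ω)
    (i j p q : ι) :
    partialDeriv i (partialDeriv j H) y p q = partialDeriv q (partialDeriv p H) y j i := by
  set s : ι → ι → Matrix ι ι ℝ := fun i j => partialDeriv i (partialDeriv j H) y
  have h_entry : ∀ i j p q, s i j p q = partialDeriv i (fun z => partialDeriv j H z p q) y :=
    fun i j p q => (fderiv_matrix_apply (S.differentiableAt_partialDeriv_H hy j) p q).symm
  have h_comm : ∀ i j, s i j = s j i :=
    partialDeriv_comm (S.contDiffOn_H.contDiffAt (S.isOpen.mem_nhds hy))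
  have h_transpose : ∀ i j p q, s i j p q = s i j q p := fun i j p q => by
    rw [h_entry, h_entry]
    simp only [partialDeriv]
    rw [Filter.EventuallyEq.fderiv_eq]
    filter_upwards [S.isOpen.mem_nhds hy] with z hz
    exact congr_fun₂ (S.transpose_partialDeriv_H hz j) q p
  have h_swap : ∀ i j p q, s i j p q = s i q p j := fun i j p q => by
    rw [h_entry, h_entry]
    simp only [partialDeriv]
    rw [Filter.EventuallyEq.fderiv_eq]
    filter_upwards [S.isOpen.mem_nhds hy] with z hz
    exact S.partialDeriv_H z hz p q j
  calc s i j p q = s i q p j := h_swap _ _ _ _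
    _ = s q i p j := by rw [h_comm]
    _ = s q i j p := h_transpose _ _ _ _
    _ = s q p j i := h_swap _ _ _ _

lemma linearized_equation (S : IsDualSystem Ω H A t c d τ R) (hy : y ∈ Ω) (k : ι) :
    ((∑ l, H y l k • t l y) * H y).trace + (A y * partialDeriv k H y).trace +
      d * (((A y).adjugate * ∑ l, H y l k • t l y).trace * (H y).det +
        (A y).det * ((H y).adjugate * partialDeriv k H y).trace) = 0 := by
  have hH := S.differentiableAt_H hy
  have hA := S.differentiableAt S.contDiffOn_A hy
  have h_const : (fun z => (A z * H z).trace + d * ((A z).det * (H z).det)) =ᶠ[nhds y]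
      fun _ => c := Filter.eventuallyEq_of_mem (S.isOpen.mem_nhds hy) S.equation
  have h_trace : DifferentiableAt ℝ (fun z => (A z * H z).trace) y :=
    S.differentiableAt (contDiffOn_matrix_trace (S.contDiffOn_A.mul S.contDiffOn_H)) hy
  have h_detA := S.differentiableAt (contDiffOn_matrix_det S.contDiffOn_A) hy
  have h_detH := S.differentiableAt (contDiffOn_matrix_det S.contDiffOn_H) hy
  have h_fderiv_trace : fderiv ℝ (fun z => (A z * H z).trace) y (EuclideanSpace.single k 1) =
      (partialDeriv k A y * H y).trace + (A y * partialDeriv k H y).trace := by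
    rw [fderiv_matrix_trace (X := fun z => A z * H z) (hA.mul hH), fderiv_matrix_mul hA hH,
      trace_add]
    rfl
  have h_fderiv_det : ∀ {X : EuclideanSpace ℝ ι → Matrix ι ι ℝ}, DifferentiableAt ℝ X y →
      fderiv ℝ (fun z => (X z).det) y (EuclideanSpace.single k 1) =
        ((X y).adjugate * partialDeriv k X y).trace := fun hX => fderiv_matrix_det hX
  have h_sum := (h_trace.hasFDerivAt.add
    ((h_detA.hasFDerivAt.mul h_detH.hasFDerivAt).const_mul d)).congr_of_eventuallyEq h_const.symm
  have h_zero := congr($((h_sum.unique (hasFDerivAt_const c y))) (EuclideanSpace.single k 1))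
  simp only [_root_.add_apply, _root_.smul_apply, smul_eq_mul, h_fderiv_det hA,
    h_fderiv_det hH, h_fderiv_trace, _root_.zero_apply] at h_zero
  rw [← S.partialDeriv_A y hy, ← h_zero]
  ring

lemma dualField_eq (S : IsDualSystem Ω H A t c d τ R) (hy : y ∈ Ω) :
    dualField (H y) (A y) (fun k => partialDeriv k H y) =
      -(dualDiffusion (H y) (A y) d *ᵥ logDetGrad (H y) (fun k => partialDeriv k H y) +
        dualDrift (H y) (A y) (fun k => t k y) d) :=
  dualField_eq_neg_dualDiffusion_mulVec_add (S.posDef y hy) (S.linearized_equation hy)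

lemma contDiffOn_trace_mul_partialDeriv_H (S : IsDualSystem Ω H A t c d τ R)
    {X : EuclideanSpace ℝ ι → Matrix ι ι ℝ} (hX : ContDiffOn ℝ ∞ X Ω) :
    ContDiffOn ℝ ∞ (fun z m => (X z * partialDeriv m H z).trace) Ω :=
  contDiffOn_pi.2 fun m =>
    contDiffOn_matrix_trace (hX.mul (contDiffOn_partialDeriv S.isOpen S.contDiffOn_H m))

lemma contDiffOn_inv_H (S : IsDualSystem Ω H A t c d τ R) : ContDiffOn ℝ ∞ (fun z => (H z)⁻¹) Ω :=
  contDiffOn_matrix_inv S.contDiffOn_H fun _ => S.isUnit_det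

lemma contDiffOn_dualVectorField (S : IsDualSystem Ω H A t c d τ R) :
    ContDiffOn ℝ ∞ (dualVectorField H A) Ω :=
  contDiffOn_euclidean.2 fun i =>
    (contDiffOn_matrix_mulVec_apply S.contDiffOn_inv_H
      (S.contDiffOn_trace_mul_partialDeriv_H S.contDiffOn_A) i).sub
    (contDiffOn_matrix_mulVec_apply S.contDiffOn_A
      (S.contDiffOn_trace_mul_partialDeriv_H S.contDiffOn_inv_H) i)

lemma contDiffOn_neg_log_det (S : IsDualSystem Ω H A t c d τ R) :
    ContDiffOn ℝ ∞ (fun z => -Real.log (H z).det) Ω :=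
  ((contDiffOn_matrix_det S.contDiffOn_H).log fun _ hz => (S.isUnit_det hz).ne_zero).neg

lemma fderiv_neg_log_det_apply (S : IsDualSystem Ω H A t c d τ R) (hy : y ∈ Ω)
    (v : EuclideanSpace ℝ ι) :
    fderiv ℝ (fun z => -Real.log (H z).det) y v =
      -(logDetGrad (H y) (fun k => partialDeriv k H y) ⬝ᵥ ofLp v) := by
  have h_det : DifferentiableAt ℝ (fun z => (H z).det) y :=
    S.differentiableAt (contDiffOn_matrix_det S.contDiffOn_H) hy
  have hv : fderiv ℝ H y v = ∑ k, v k • partialDeriv k H y := by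
    conv_lhs => rw [← (EuclideanSpace.basisFun ι ℝ).sum_repr v]
    simp [partialDeriv]
    rfl
  rw [(h_det.hasFDerivAt.log (S.isUnit_det hy).ne_zero).fun_neg.fderiv]
  simp only [_root_.neg_apply, _root_.smul_apply, smul_eq_mul,
    fderiv_matrix_det (S.differentiableAt_H hy), logDetGrad, inv_def, Ring.inverse_eq_inv', hv,
    Matrix.mul_smul, Matrix.smul_mul, trace_sum, trace_smul, dotProduct,
    Finset.mul_sum]
  exact congr_arg Neg.neg (Finset.sum_congr rfl fun k _ => by ring)

lemma norm_fderiv_neg_log_det (S : IsDualSystem Ω H A t c d τ R) (hy : y ∈ Ω) :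
    ‖fderiv ℝ (fun z => -Real.log (H z).det) y‖ =
      ‖toLp 2 (logDetGrad (H y) fun k => partialDeriv k H y)‖ := by
  have h_eq : fderiv ℝ (fun z => -Real.log (H z).det) y =
      InnerProductSpace.toDual ℝ _ (-toLp 2 (logDetGrad (H y) fun k => partialDeriv k H y)) := by
    ext v
    rw [S.fderiv_neg_log_det_apply hy]
    simp [PiLp.inner_apply, dotProduct, mul_comm]
  rw [h_eq, LinearIsometryEquiv.norm_map, norm_neg]

lemma partialDeriv_trace_mul_partialDeriv_H (S : IsDualSystem Ω H A t c d τ R) (hy : y ∈ Ω)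
    {X : EuclideanSpace ℝ ι → Matrix ι ι ℝ} (hX : ContDiffOn ℝ ∞ X Ω) (i : ι) :
    partialDeriv i (fun z m => (X z * partialDeriv m H z).trace) y =
      fun m => (partialDeriv i X y * partialDeriv m H y).trace +
        (X y * partialDeriv i (partialDeriv m H) y).trace := by
  ext m
  have h_mul : DifferentiableAt ℝ (fun z => X z * partialDeriv m H z) y :=
    (S.differentiableAt hX hy).mul (S.differentiableAt_partialDeriv_H hy m)
  have h_apply := congr($(fderiv_apply
    (S.differentiableAt (S.contDiffOn_trace_mul_partialDeriv_H hX) hy) m)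
      (EuclideanSpace.single i 1))
  refine h_apply.symm.trans ?_
  rw [fderiv_matrix_trace h_mul, fderiv_matrix_mul (S.differentiableAt hX hy)
    (S.differentiableAt_partialDeriv_H hy m), trace_add]
  rfl

lemma partialDeriv_dualVectorField_apply (S : IsDualSystem Ω H A t c d τ R) (hy : y ∈ Ω) (i : ι) :
    (partialDeriv i (dualVectorField H A) y) i =
      -(((H y)⁻¹ * partialDeriv i H y * (H y)⁻¹) *ᵥ
          fun m => (A y * partialDeriv m H y).trace) i +
        ((H y)⁻¹ *ᵥ fun m => ((∑ k, H y k i • t k y) * partialDeriv m H y).trace) i +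
        ((H y)⁻¹ *ᵥ fun m => (A y * partialDeriv i (partialDeriv m H) y).trace) i -
        ((∑ k, H y k i • t k y) *ᵥ logDetGrad (H y) fun k => partialDeriv k H y) i +
        ∑ j, A y i j * ((H y)⁻¹ * partialDeriv i H y * (H y)⁻¹ * partialDeriv j H y).trace -
        (A y *ᵥ fun m => ((H y)⁻¹ * partialDeriv i (partialDeriv m H) y).trace) i := by
  have hA_w := S.contDiffOn_trace_mul_partialDeriv_H S.contDiffOn_A
  have hJ_w := S.contDiffOn_trace_mul_partialDeriv_H S.contDiffOn_inv_H
  have h_inv : partialDeriv i (fun z => (H z)⁻¹) y =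
      -((H y)⁻¹ * partialDeriv i H y * (H y)⁻¹) :=
    fderiv_matrix_inv (S.differentiableAt_H hy) (S.isUnit_det hy)
  have h_mulVec : ∀ {X : EuclideanSpace ℝ ι → Matrix ι ι ℝ} {w : EuclideanSpace ℝ ι → ι → ℝ},
      ContDiffOn ℝ ∞ X Ω → ContDiffOn ℝ ∞ w Ω →
        HasFDerivAt (fun z => (X z *ᵥ w z) i) (fderiv ℝ (fun z => (X z *ᵥ w z) i) y) y ∧
        partialDeriv i (fun z => (X z *ᵥ w z) i) y =
          (partialDeriv i X y *ᵥ w y) i + (X y *ᵥ partialDeriv i w y) i := fun hX hw =>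
    ⟨(S.differentiableAt (contDiffOn_matrix_mulVec_apply hX hw i) hy).hasFDerivAt,
      fderiv_matrix_mulVec_apply (S.differentiableAt hX hy) (S.differentiableAt hw hy) i⟩
  obtain ⟨h_diff₁, h_fst⟩ := h_mulVec S.contDiffOn_inv_H hA_w
  obtain ⟨h_diff₂, h_snd⟩ := h_mulVec S.contDiffOn_A hJ_w
  have h_comp : (partialDeriv i (dualVectorField H A) y) i =
      partialDeriv i (fun z => ((H z)⁻¹ *ᵥ fun m => (A z * partialDeriv m H z).trace) i) y -
        partialDeriv i (fun z => (A z *ᵥ fun m => ((H z)⁻¹ * partialDeriv m H z).trace) i) y := by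
    have h := (EuclideanSpace.proj (𝕜 := ℝ) i).hasFDerivAt.comp y
      (S.differentiableAt S.contDiffOn_dualVectorField hy).hasFDerivAt
    exact congr($(h.unique (h_diff₁.sub h_diff₂)) (EuclideanSpace.single i 1))
  rw [h_comp, h_fst, h_snd, S.partialDeriv_trace_mul_partialDeriv_H hy S.contDiffOn_A,
    S.partialDeriv_trace_mul_partialDeriv_H hy S.contDiffOn_inv_H, h_inv, S.partialDeriv_A y hy]
  simp only [mulVec, dotProduct, logDetGrad, mul_add, Finset.sum_add_distrib,
    Matrix.neg_apply, trace_neg, mul_neg, neg_mul, Finset.sum_neg_distrib]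
  ring

lemma trace_fderiv_dualVectorField (S : IsDualSystem Ω H A t c d τ R) (hy : y ∈ Ω) :
    LinearMap.trace ℝ (EuclideanSpace ℝ ι) (fderiv ℝ (dualVectorField H A) y) =
      dualDivergence (H y) (A y) (fun k => partialDeriv k H y) (fun k => t k y) := by
  have h_trace : LinearMap.trace ℝ (EuclideanSpace ℝ ι) (fderiv ℝ (dualVectorField H A) y) =
      ∑ i, (partialDeriv i (dualVectorField H A) y) i := by
    rw [LinearMap.trace_eq_sum_inner _ (EuclideanSpace.basisFun ι ℝ)]
    simp [partialDeriv, EuclideanSpace.inner_single_left]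
  have h_symm : ∀ i p q, partialDeriv i H y p q = partialDeriv q H y p i :=
    fun i p q => S.partialDeriv_H y hy p q i
  rw [h_trace, dualDivergence]
  simp only [S.partialDeriv_dualVectorField_apply hy, Finset.sum_add_distrib,
    Finset.sum_sub_distrib, Finset.sum_neg_distrib]
  rw [sum_inv_mul_mul_inv_mulVec_apply h_symm, sum_inv_mulVec_trace_apply (S.isUnit_det hy),
    sum_mulVec_trace_mul_comm _ _ (S.partialDeriv_partialDeriv_H_symm hy)]
  have h_col : ∑ i, ((∑ k, H y k i • t k y) *ᵥ logDetGrad (H y) fun k => partialDeriv k H y) i =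
      dualColumnDivergence (H y) (fun k => t k y) ⬝ᵥ
        logDetGrad (H y) fun k => partialDeriv k H y := by
    simp only [mulVec, dotProduct, dualColumnDivergence, Finset.sum_mul]
    exact Finset.sum_comm
  rw [h_col]
  ring

end IsDualSystem

lemma exists_isDualSystem_structure_bound (ι : Type*) [Fintype ι] [DecidableEq ι] {τ : ℝ}
    (hτ : 0 < τ) (R D : ℝ) :
    ∃ K ≥ 1, ∀ (Ω : Set (EuclideanSpace ℝ ι)) (H A : EuclideanSpace ℝ ι → Matrix ι ι ℝ)
      (t : ι → EuclideanSpace ℝ ι → Matrix ι ι ℝ) (c d : ℝ), 0 ≤ d → d ≤ D →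
      IsDualSystem Ω H A t c d τ R → ∀ y ∈ Ω,
        ‖fderiv ℝ (fun z => -Real.log (H z).det) y‖ ^ 2 ≤
          K * (LinearMap.trace ℝ (EuclideanSpace ℝ ι) (fderiv ℝ (dualVectorField H A) y) + K) ∧
        ‖dualVectorField H A y‖ ≤ K * (‖fderiv ℝ (fun z => -Real.log (H z).det) y‖ + 1) ∧
        -K ≤ fderiv ℝ (fun z => -Real.log (H z).det) y (dualVectorField H A y) := by
  obtain ⟨K, hK, h_bound⟩ := exists_dual_structure_bound ι hτ R D
  refine ⟨K, hK, fun Ω H A t c d hd hdD S y hy => ?_⟩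
  rw [S.norm_fderiv_neg_log_det hy, S.trace_fderiv_dualVectorField hy,
    S.fderiv_neg_log_det_apply hy]
  exact h_bound _ _ _ _ d hd hdD (S.posDef y hy) (S.posSemidef y hy)
    (S.transpose_partialDeriv_H hy) (S.norm_H_le y hy) (S.norm_A_le y hy)
    (S.norm_t_le y hy) (S.dualField_eq hy)

end DualSystem

/-! ### Cutoff functions and energy fields -/

section Cutoff

variable {E F : Type*} [NormedAddCommGroup E] [NormedSpace ℝ E] [NormedAddCommGroup F]
  [NormedSpace ℝ F] {Ω W : Set E} {η : E → ℝ} {L : ℝ} {y : E}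

lemma continuous_smul_of_tsupport_subset {X : Type*} [TopologicalSpace X] {Ω : Set X}
    {η : X → ℝ} {G : X → F} (hΩ : IsOpen Ω) (hη : Continuous η)
    (hs : tsupport η ⊆ Ω) (hG : ContinuousOn G Ω) : Continuous fun y => η y • G y :=
  continuous_of_tsupport fun _ hx => hη.continuousAt.smul <|
    hG.continuousAt (hΩ.mem_nhds (hs (tsupport_smul_subset_left η G hx)))

lemma contDiff_smul_of_tsupport_subset {G : E → F} {m : ℕ∞ω} (hΩ : IsOpen Ω)
    (hη : ContDiff ℝ m η) (hs : tsupport η ⊆ Ω) (hG : ContDiffOn ℝ m G Ω) :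
    ContDiff ℝ m fun y => η y • G y := by
  refine contDiff_iff_contDiffAt.2 fun x => ?_
  by_cases hx : x ∈ tsupport η
  · exact hη.contDiffAt.smul (hG.contDiffAt (hΩ.mem_nhds (hs hx)))
  · refine contDiffAt_const (c := (0 : F)) |>.congr_of_eventuallyEq ?_
    filter_upwards [(isClosed_tsupport η).isOpen_compl.mem_nhds hx] with y hy
    rw [image_eq_zero_of_notMem_tsupport hy, zero_smul]

lemma integral_fderiv_apply_eq_zero [FiniteDimensional ℝ E] [MeasurableSpace E] [BorelSpace E]
    (μ : Measure E) [μ.IsAddHaarMeasure] {G : E → ℝ} (hG : ContDiff ℝ 1 G)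
    (hc : HasCompactSupport G) (v : E) : ∫ y, fderiv ℝ G y v ∂μ = 0 := by
  have integrable_fderiv : Integrable (fun y => fderiv ℝ G y v) μ :=
    ((hG.continuous_fderiv one_ne_zero).clm_apply continuous_const).integrable_of_hasCompactSupport
      (hc.fderiv_apply ℝ v)
  simpa using integral_mul_fderiv_eq_neg_fderiv_mul_of_integrable (μ := μ)
    (f := fun _ : E => (1 : ℝ)) (g := G) (v := v) (by simp) (by simpa using integrable_fderiv)
    (by simpa using hG.continuous.integrable_of_hasCompactSupport hc)
    (fun x _ => differentiableAt_const _) (fun x _ => hG.differentiable one_ne_zero x)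

lemma integrable_trace_fderiv [FiniteDimensional ℝ E] [MeasurableSpace E] [BorelSpace E]
    (μ : Measure E) [IsFiniteMeasureOnCompacts μ] {G : E → E} (hG : ContDiff ℝ 1 G)
    (hc : HasCompactSupport G) :
    Integrable (fun y => LinearMap.trace ℝ E (fderiv ℝ G y)) μ := by
  have continuous_trace : Continuous fun T : E →L[ℝ] E => LinearMap.trace ℝ E T :=
    LinearMap.continuous_of_finiteDimensional
      ((LinearMap.trace ℝ E).comp (ContinuousLinearMap.coeLM ℝ))
  exact (continuous_trace.comp (hG.continuous_fderiv one_ne_zero)).integrable_of_hasCompactSupport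
    ((hc.fderiv ℝ).comp_left (g := fun T : E →L[ℝ] E => LinearMap.trace ℝ E T) (by simp))

lemma integral_trace_fderiv_eq_zero [FiniteDimensional ℝ E] [MeasurableSpace E] [BorelSpace E]
    (μ : Measure E) [μ.IsAddHaarMeasure] {G : E → E} (hG : ContDiff ℝ 1 G)
    (hc : HasCompactSupport G) : ∫ y, LinearMap.trace ℝ E (fderiv ℝ G y) ∂μ = 0 := by
  let b := Module.finBasis ℝ E
  let coord (i) : E →L[ℝ] ℝ := LinearMap.toContinuousLinearMap (b.coord i)
  have contDiff_coord (i) : ContDiff ℝ 1 fun y => coord i (G y) := (coord i).contDiff.comp hG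
  have hasCompactSupport_coord (i) : HasCompactSupport fun y => coord i (G y) :=
    hc.comp_left (g := coord i) (map_zero _)
  have trace_eq (y) : LinearMap.trace ℝ E (fderiv ℝ G y) =
      ∑ i, fderiv ℝ (fun z => coord i (G z)) y (b i) := by
    simp only [LinearMap.trace_eq_matrix_trace ℝ b, Matrix.trace, diag_apply,
      LinearMap.toMatrix_apply]
    refine Finset.sum_congr rfl fun i _ => ?_
    exact (DFunLike.congr_fun ((coord i).hasFDerivAt.comp y
      (hG.differentiable one_ne_zero y).hasFDerivAt).fderiv (b i)).symm
  simp only [trace_eq]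
  rw [integral_finsetSum _ fun i _ => ?_]
  · exact Finset.sum_eq_zero fun i _ =>
      integral_fderiv_apply_eq_zero μ (contDiff_coord i) (hasCompactSupport_coord i) (b i)
  · exact (((contDiff_coord i).continuous_fderiv one_ne_zero).clm_apply
      continuous_const).integrable_of_hasCompactSupport
        ((hasCompactSupport_coord i).fderiv_apply ..)

/-- A `C¹` cutoff function with values in `[0, 1]`, compactly supported in `W` and with slope at
most `L`. -/
structure IsCutoff (W : Set E) (L : ℝ) (η : E → ℝ) : Prop where
  contDiff : ContDiff ℝ 1 η
  hasCompactSupport : HasCompactSupport η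
  tsupport_subset : tsupport η ⊆ W
  nonneg : ∀ y, 0 ≤ η y
  le_one : ∀ y, η y ≤ 1
  norm_fderiv_le : ∀ y, ‖fderiv ℝ η y‖ ≤ L

/-- The weight `η² + |∇η|²` in which the energy estimates with cutoff `η` are expressed. -/
noncomputable def cutoffWeight (η : E → ℝ) (y : E) : ℝ := η y ^ 2 + ‖fderiv ℝ η y‖ ^ 2

lemma cutoffWeight_nonneg (η : E → ℝ) (y : E) : 0 ≤ cutoffWeight η y := by
  unfold cutoffWeight; positivity

lemma cutoffWeight_eq_zero (hy : y ∉ tsupport η) : cutoffWeight η y = 0 := by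
  simp [cutoffWeight, image_eq_zero_of_notMem_tsupport hy, fderiv_of_notMem_tsupport ℝ hy]

lemma tsupport_cutoffWeight_subset (η : E → ℝ) : tsupport (cutoffWeight η) ⊆ tsupport η :=
  closure_minimal (fun _ hy => by_contra fun h => hy (cutoffWeight_eq_zero h))
    (isClosed_tsupport η)

namespace IsCutoff

lemma mono (hη : IsCutoff W L η) (hW : W ⊆ Ω) : IsCutoff Ω L η :=
  { hη with tsupport_subset := hη.tsupport_subset.trans hW }

lemma tsupport_sq_subset (hη : IsCutoff W L η) : tsupport (fun y => η y ^ 2) ⊆ W :=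
  (closure_mono fun _ hy => (pow_ne_zero_iff two_ne_zero).1 hy).trans hη.tsupport_subset

lemma hasCompactSupport_sq (hη : IsCutoff W L η) : HasCompactSupport fun y => η y ^ 2 :=
  hη.hasCompactSupport.mono fun _ hy => (pow_ne_zero_iff two_ne_zero).1 hy

lemma continuous_cutoffWeight (hη : IsCutoff W L η) : Continuous (cutoffWeight η) :=
  (hη.contDiff.continuous.pow 2).add ((hη.contDiff.continuous_fderiv one_ne_zero).norm.pow 2)

lemma cutoffWeight_le (hη : IsCutoff W L η) (y : E) : cutoffWeight η y ≤ 1 + L ^ 2 :=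
  add_le_add (pow_le_one₀ (hη.nonneg y) (hη.le_one y))
    (pow_le_pow_left₀ (norm_nonneg _) (hη.norm_fderiv_le y) 2)

lemma integrable_cutoffWeight_smul [MeasurableSpace E] [BorelSpace E] (μ : Measure E)
    [IsFiniteMeasureOnCompacts μ] (hΩ : IsOpen Ω) (hη : IsCutoff Ω L η) {G : E → F}
    (hG : ContinuousOn G Ω) : Integrable (fun y => cutoffWeight η y • G y) μ :=
  (continuous_smul_of_tsupport_subset hΩ hη.continuous_cutoffWeight
    ((tsupport_cutoffWeight_subset η).trans hη.tsupport_subset) hG).integrable_of_hasCompactSupport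
    (hη.hasCompactSupport.mono' ((subset_tsupport _).trans
      (tsupport_cutoffWeight_subset η))).smul_right

lemma lintegral_cutoffWeight_mul_le [MeasurableSpace E] (μ : Measure E) (hη : IsCutoff W L η)
    {G : E → ℝ} (hG : ∀ y ∈ W, 0 ≤ G y) :
    ∫⁻ y, ENNReal.ofReal (cutoffWeight η y * G y) ∂μ ≤
      ENNReal.ofReal (1 + L ^ 2) * ∫⁻ y in W, ENNReal.ofReal (G y) ∂μ := by
  rw [← lintegral_const_mul' _ _ ENNReal.ofReal_ne_top]
  refine le_trans (lintegral_mono fun y => ?_) (lintegral_indicator_le _ W)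
  by_cases hy : y ∈ W
  · rw [indicator_of_mem hy, ← ENNReal.ofReal_mul (by positivity)]
    exact ENNReal.ofReal_le_ofReal (mul_le_mul_of_nonneg_right (hη.cutoffWeight_le y) (hG y hy))
  · rw [cutoffWeight_eq_zero fun h => hy (hη.tsupport_subset h)]
    simp

end IsCutoff

end Cutoff

section EnergyField

variable {E : Type*} [NormedAddCommGroup E] [NormedSpace ℝ E]
  {Ω W W' : Set E} {η u : E → ℝ} {V : E → E} {K L p χ : ℝ} {y : E}

/-- The differential inequality behind the Moser iteration: `u ≥ 1` comes with a field `V`, playing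
the role of `a ∇u` in a divergence form operator `div (a ∇u)`, whose divergence controls
`|∇u|²`. The divergence of `V` is the trace of its derivative. -/
structure IsEnergyField (Ω : Set E) (u : E → ℝ) (V : E → E) (K : ℝ) : Prop where
  isOpen : IsOpen Ω
  one_le_const : 1 ≤ K
  contDiffOn : ContDiffOn ℝ 1 u Ω
  contDiffOn_field : ContDiffOn ℝ 1 V Ω
  one_le : ∀ y ∈ Ω, 1 ≤ u y
  sq_norm_fderiv_le : ∀ y ∈ Ω, ‖fderiv ℝ u y‖ ^ 2 ≤ K * (LinearMap.trace ℝ E (fderiv ℝ V y) + K)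
  norm_field_le : ∀ y ∈ Ω, ‖V y‖ ≤ K * (‖fderiv ℝ u y‖ + 1)
  neg_le_fderiv_apply : ∀ y ∈ Ω, -K ≤ fderiv ℝ u y (V y)

lemma fderiv_sq_mul_rpow (hη : DifferentiableAt ℝ η y) (hu : DifferentiableAt ℝ u y)
    (hu0 : 0 < u y) (p : ℝ) : fderiv ℝ (fun z => η z ^ 2 * u z ^ p) y =
      (2 * η y * u y ^ p) • fderiv ℝ η y + (p * η y ^ 2 * u y ^ (p - 1)) • fderiv ℝ u y := by
  refine ((hη.hasFDerivAt.pow 2).mul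
    (hu.hasFDerivAt.rpow_const (Or.inl hu0.ne'))).fderiv.trans ?_
  ext v
  simp
  ring

lemma young_absorb {K p a s g P T N Q : ℝ} (hK : 1 ≤ K) (hp : 0 ≤ p) (ha : 0 ≤ a)
    (hP : 0 ≤ P) (hT : g ^ 2 ≤ K * (T + K)) (hN : -(s * (K * (g + 1))) ≤ N) (hQ : -(K * P) ≤ Q) :
    a ^ 2 * (P * g ^ 2) ≤ 2 * K * (a ^ 2 * P * T + 2 * a * P * N + p * a ^ 2 * Q) +
      6 * K ^ 4 * (1 + p) * ((a ^ 2 + s ^ 2) * P) := by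
  have : 0 ≤ K := zero_le_one.trans hK
  have hKK : K ^ 2 ≤ K ^ 4 := pow_le_pow_right₀ hK (by norm_num)
  have trace_term : 2 * (a ^ 2 * P) * g ^ 2 ≤ 2 * (a ^ 2 * P) * (K * (T + K)) := by gcongr
  have cross_term : 4 * K * a * P * -(s * (K * (g + 1))) ≤ 4 * K * a * P * N := by gcongr
  have drift_term : 2 * K * p * a ^ 2 * -(K * P) ≤ 2 * K * p * a ^ 2 * Q := by gcongr
  have young : 4 * K ^ 2 * a * s * (g + 1) ≤
      a ^ 2 * g ^ 2 + 4 * K ^ 4 * s ^ 2 + 2 * K ^ 2 * (a ^ 2 + s ^ 2) := by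
    nlinarith [sq_nonneg (a * g - 2 * K ^ 2 * s), mul_nonneg (sq_nonneg K) (sq_nonneg (a - s))]
  have young_mul := mul_le_mul_of_nonneg_right young hP
  have remainder :
      (4 * K ^ 2 * a ^ 2 + 2 * p * K ^ 2 * a ^ 2 + (4 * K ^ 4 + 2 * K ^ 2) * s ^ 2) * P ≤
      6 * K ^ 4 * (1 + p) * ((a ^ 2 + s ^ 2) * P) := by
    rw [← mul_assoc]
    refine mul_le_mul_of_nonneg_right ?_ hP
    nlinarith [mul_le_mul_of_nonneg_right hKK (sq_nonneg a),
      mul_le_mul_of_nonneg_right hKK (sq_nonneg s),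
      mul_le_mul_of_nonneg_left hKK (mul_nonneg hp (sq_nonneg a)),
      (by positivity : 0 ≤ K ^ 4 * p * s ^ 2), (by positivity : 0 ≤ K ^ 4 * p * a ^ 2),
      (by positivity : 0 ≤ K ^ 4 * a ^ 2)]
  linarith

namespace IsEnergyField

lemma pos (h : IsEnergyField Ω u V K) (hy : y ∈ Ω) : 0 < u y :=
  zero_lt_one.trans_le (h.one_le y hy)

lemma differentiableAt (h : IsEnergyField Ω u V K) (hy : y ∈ Ω) : DifferentiableAt ℝ u y :=
  (h.contDiffOn.differentiableOn one_ne_zero).differentiableAt (h.isOpen.mem_nhds hy)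

lemma differentiableAt_field (h : IsEnergyField Ω u V K) (hy : y ∈ Ω) : DifferentiableAt ℝ V y :=
  (h.contDiffOn_field.differentiableOn one_ne_zero).differentiableAt (h.isOpen.mem_nhds hy)

lemma contDiffOn_rpow (h : IsEnergyField Ω u V K) (p : ℝ) :
    ContDiffOn ℝ 1 (fun y => u y ^ p) Ω :=
  h.contDiffOn.rpow_const_of_ne fun _ hy => (h.pos hy).ne'

lemma continuousOn_norm_fderiv (h : IsEnergyField Ω u V K) :
    ContinuousOn (fun y => ‖fderiv ℝ u y‖) Ω :=
  (h.contDiffOn.continuousOn_fderiv_of_isOpen h.isOpen le_rfl).norm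

lemma rpow_sub_one_le (h : IsEnergyField Ω u V K) (hy : y ∈ Ω) : u y ^ (p - 1) ≤ u y ^ p :=
  Real.rpow_le_rpow_of_exponent_le (h.one_le y hy) (by linarith)

lemma trace_fderiv_cutoff_smul [FiniteDimensional ℝ E] (h : IsEnergyField Ω u V K) (hy : y ∈ Ω)
    (hη : DifferentiableAt ℝ η y) (p : ℝ) :
    LinearMap.trace ℝ E (fderiv ℝ (fun z => (η z ^ 2 * u z ^ p) • V z) y) =
      η y ^ 2 * u y ^ p * LinearMap.trace ℝ E (fderiv ℝ V y) +
        2 * η y * u y ^ p * fderiv ℝ η y (V y) +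
        p * η y ^ 2 * u y ^ (p - 1) * fderiv ℝ u y (V y) := by
  have diff_coeff : DifferentiableAt ℝ (fun z => η z ^ 2 * u z ^ p) y :=
    (hη.pow 2).mul ((h.differentiableAt hy).rpow_const (Or.inl (h.pos hy).ne'))
  rw [fderiv_fun_smul diff_coeff (h.differentiableAt_field hy),
    fderiv_sq_mul_rpow hη (h.differentiableAt hy) (h.pos hy)]
  have trace_rank_one := LinearMap.trace_smulRight (((2 * η y * u y ^ p) • fderiv ℝ η y +
    (p * η y ^ 2 * u y ^ (p - 1)) • fderiv ℝ u y : E →L[ℝ] ℝ) : E →ₗ[ℝ] ℝ) (V y)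
  simp only [ContinuousLinearMap.toLinearMap_add, ContinuousLinearMap.toLinearMap_smul, map_add,
    map_smul, smul_eq_mul, ContinuousLinearMap.coe_smulRight, LinearMap.add_apply,
    LinearMap.smul_apply, ContinuousLinearMap.coe_coe] at trace_rank_one ⊢
  rw [trace_rank_one, add_assoc]

/-- The divergence of the test field `η² uᵖ V` controls the weighted energy: the cross term is
absorbed by Young's inequality. -/
lemma sq_mul_rpow_mul_sq_norm_fderiv_le [FiniteDimensional ℝ E] (h : IsEnergyField Ω u V K)
    (hy : y ∈ Ω) (hη : DifferentiableAt ℝ η y) (hη0 : 0 ≤ η y) (hp : 0 ≤ p) :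
    η y ^ 2 * (u y ^ p * ‖fderiv ℝ u y‖ ^ 2) ≤
      2 * K * LinearMap.trace ℝ E (fderiv ℝ (fun z => (η z ^ 2 * u z ^ p) • V z) y) +
        6 * K ^ 4 * (1 + p) * (cutoffWeight η y * u y ^ p) := by
  rw [h.trace_fderiv_cutoff_smul hy hη, cutoffWeight]
  have hK := h.one_le_const
  have hP : 0 < u y ^ p := Real.rpow_pos_of_pos (h.pos hy) p
  have cross : -(‖fderiv ℝ η y‖ * (K * (‖fderiv ℝ u y‖ + 1))) ≤ fderiv ℝ η y (V y) :=
    neg_le_of_abs_le (((fderiv ℝ η y).le_opNorm _).trans (by gcongr; exact h.norm_field_le y hy))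
  have lower_order : -(K * u y ^ p) ≤ u y ^ (p - 1) * fderiv ℝ u y (V y) := by
    have := mul_le_mul_of_nonneg_left (h.neg_le_fderiv_apply y hy)
      (Real.rpow_nonneg (h.pos hy).le (p - 1))
    nlinarith [h.rpow_sub_one_le (p := p) hy]
  rw [mul_assoc (p * η y ^ 2)]
  exact young_absorb hK hp hη0 hP.le (h.sq_norm_fderiv_le y hy) cross lower_order

lemma norm_fderiv_sq_mul_rpow_le (h : IsEnergyField Ω u V K) (hy : y ∈ Ω)
    (hη : DifferentiableAt ℝ η y) (hη0 : 0 ≤ η y) (hp : 0 ≤ p) :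
    ‖fderiv ℝ (fun z => η z ^ 2 * u z ^ p) y‖ ≤
      (1 + p) * (cutoffWeight η y * u y ^ p) + p * (η y ^ 2 * (u y ^ p * ‖fderiv ℝ u y‖ ^ 2)) := by
  have hu := (h.pos hy).le
  have hP := Real.rpow_nonneg hu p
  have : 0 ≤ u y ^ (p - 1) := Real.rpow_nonneg hu _
  calc ‖fderiv ℝ (fun z => η z ^ 2 * u z ^ p) y‖
      ≤ 2 * η y * u y ^ p * ‖fderiv ℝ η y‖ + p * η y ^ 2 * u y ^ (p - 1) * ‖fderiv ℝ u y‖ := by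
        rw [fderiv_sq_mul_rpow hη (h.differentiableAt hy) (h.pos hy)]
        refine (norm_add_le _ _).trans_eq ?_
        rw [norm_smul, norm_smul, Real.norm_of_nonneg (by positivity),
          Real.norm_of_nonneg (by positivity)]
    _ ≤ (η y ^ 2 + ‖fderiv ℝ η y‖ ^ 2) * u y ^ p +
          p * η y ^ 2 * u y ^ p * (1 + ‖fderiv ℝ u y‖ ^ 2) := by
        gcongr ?_ + p * η y ^ 2 * ?_ * ?_
        · nlinarith [mul_nonneg (sq_nonneg (η y - ‖fderiv ℝ η y‖)) hP]
        · exact h.rpow_sub_one_le hy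
        · nlinarith [sq_nonneg (‖fderiv ℝ u y‖ - 1), norm_nonneg (fderiv ℝ u y)]
    _ ≤ _ := by
        have : 0 ≤ p * ‖fderiv ℝ η y‖ ^ 2 * u y ^ p := by positivity
        rw [cutoffWeight]
        linarith

lemma energy_nonneg (h : IsEnergyField Ω u V K) (hs : tsupport η ⊆ Ω) (p : ℝ) (y : E) :
    0 ≤ η y ^ 2 * (u y ^ p * ‖fderiv ℝ u y‖ ^ 2) := by
  by_cases hy : y ∈ tsupport η
  · have := Real.rpow_nonneg (h.pos (hs hy)).le p
    positivity
  · simp [image_eq_zero_of_notMem_tsupport hy]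

lemma cutoffWeight_mul_rpow_nonneg (h : IsEnergyField Ω u V K) (hs : tsupport η ⊆ Ω) (p : ℝ)
    (y : E) : 0 ≤ cutoffWeight η y * u y ^ p := by
  by_cases hy : y ∈ tsupport η
  · exact mul_nonneg (cutoffWeight_nonneg η y) (Real.rpow_nonneg (h.pos (hs hy)).le p)
  · simp [cutoffWeight_eq_zero hy]

lemma enorm_fderiv_sq_mul_rpow_le (h : IsEnergyField Ω u V K) (hη : IsCutoff Ω L η) (hp : 0 ≤ p)
    (y : E) :
    ‖fderiv ℝ (fun z => η z ^ 2 * u z ^ p) y‖ₑ ≤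
      ENNReal.ofReal (1 + p) * ENNReal.ofReal (cutoffWeight η y * u y ^ p) +
        ENNReal.ofReal p * ENNReal.ofReal (η y ^ 2 * (u y ^ p * ‖fderiv ℝ u y‖ ^ 2)) := by
  rw [← ENNReal.ofReal_mul (by positivity), ← ENNReal.ofReal_mul hp,
    ← ENNReal.ofReal_add
      (mul_nonneg (by positivity) (h.cutoffWeight_mul_rpow_nonneg hη.tsupport_subset p y))
      (mul_nonneg hp (h.energy_nonneg hη.tsupport_subset p y)), ← ofReal_norm]
  refine ENNReal.ofReal_le_ofReal ?_
  by_cases hy : y ∈ tsupport η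
  · exact h.norm_fderiv_sq_mul_rpow_le (hη.tsupport_subset hy)
      (hη.contDiff.differentiable one_ne_zero y) (hη.nonneg y) hp
  · have test_zero : fderiv ℝ (fun z => η z ^ 2 * u z ^ p) y = 0 :=
      fderiv_of_notMem_tsupport ℝ fun h' => hy <| closure_mono (fun z hz =>
        (pow_ne_zero_iff two_ne_zero).1 (left_ne_zero_of_mul hz)) h'
    simp [test_zero, cutoffWeight_eq_zero hy, image_eq_zero_of_notMem_tsupport hy]

end IsEnergyField

end EnergyField

section Energy

variable {E : Type*} [NormedAddCommGroup E] [NormedSpace ℝ E] [MeasurableSpace E]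
  [BorelSpace E] {Ω W W' : Set E} {η u : E → ℝ} {V : E → E} {K L p χ : ℝ}
  {y : E}

namespace IsEnergyField

lemma integrable_energy (μ : Measure E) [IsFiniteMeasureOnCompacts μ]
    (h : IsEnergyField Ω u V K) (hη : IsCutoff Ω L η) (p : ℝ) :
    Integrable (fun y => η y ^ 2 * (u y ^ p * ‖fderiv ℝ u y‖ ^ 2)) μ :=
  (continuous_smul_of_tsupport_subset h.isOpen (hη.contDiff.continuous.pow 2)
    hη.tsupport_sq_subset ((h.contDiffOn_rpow p).continuousOn.mul
      (h.continuousOn_norm_fderiv.pow 2))).integrable_of_hasCompactSupport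
    hη.hasCompactSupport_sq.smul_right

variable [FiniteDimensional ℝ E]

lemma integral_energy_le (μ : Measure E) [μ.IsAddHaarMeasure] (h : IsEnergyField Ω u V K)
    (hη : IsCutoff Ω L η) (hp : 0 ≤ p) :
    ∫ y, η y ^ 2 * (u y ^ p * ‖fderiv ℝ u y‖ ^ 2) ∂μ ≤
      6 * K ^ 4 * (1 + p) * ∫ y, cutoffWeight η y * u y ^ p ∂μ := by
  have contDiff_test : ContDiff ℝ 1 fun z => (η z ^ 2 * u z ^ p) • V z := by
    simp only [mul_smul]
    exact contDiff_smul_of_tsupport_subset h.isOpen (hη.contDiff.pow 2)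
      hη.tsupport_sq_subset ((h.contDiffOn_rpow p).smul h.contDiffOn_field)
  have hasCompactSupport_test : HasCompactSupport fun z => (η z ^ 2 * u z ^ p) • V z := by
    simp only [mul_smul]
    exact hη.hasCompactSupport_sq.smul_right (f' := fun z => u z ^ p • V z)
  have integrable_div := integrable_trace_fderiv μ contDiff_test hasCompactSupport_test
  have integrable_weight : Integrable (fun y => cutoffWeight η y * u y ^ p) μ :=
    hη.integrable_cutoffWeight_smul μ h.isOpen (h.contDiffOn_rpow p).continuousOn
  have pointwise (y : E) : η y ^ 2 * (u y ^ p * ‖fderiv ℝ u y‖ ^ 2) ≤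
      2 * K * LinearMap.trace ℝ E (fderiv ℝ (fun z => (η z ^ 2 * u z ^ p) • V z) y) +
        6 * K ^ 4 * (1 + p) * (cutoffWeight η y * u y ^ p) := by
    by_cases hy : y ∈ tsupport η
    · exact h.sq_mul_rpow_mul_sq_norm_fderiv_le (hη.tsupport_subset hy)
        (hη.contDiff.differentiable one_ne_zero y) (hη.nonneg y) hp
    · have test_zero : fderiv ℝ (fun z => (η z ^ 2 * u z ^ p) • V z) y = 0 :=
        fderiv_of_notMem_tsupport ℝ fun h' => hy <| closure_mono (fun z hz =>
          (pow_ne_zero_iff two_ne_zero).1 (left_ne_zero_of_mul (left_ne_zero_of_smul hz))) h'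
      simp [test_zero, cutoffWeight_eq_zero hy, image_eq_zero_of_notMem_tsupport hy]
  calc ∫ y, η y ^ 2 * (u y ^ p * ‖fderiv ℝ u y‖ ^ 2) ∂μ
      ≤ ∫ y, (2 * K * LinearMap.trace ℝ E (fderiv ℝ (fun z => (η z ^ 2 * u z ^ p) • V z) y) +
          6 * K ^ 4 * (1 + p) * (cutoffWeight η y * u y ^ p)) ∂μ :=
        integral_mono (h.integrable_energy μ hη p)
          ((integrable_div.const_mul _).add (integrable_weight.const_mul _)) pointwise
    _ = 6 * K ^ 4 * (1 + p) * ∫ y, cutoffWeight η y * u y ^ p ∂μ := by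
        rw [integral_add (integrable_div.const_mul _) (integrable_weight.const_mul _),
          integral_const_mul, integral_const_mul,
          integral_trace_fderiv_eq_zero μ contDiff_test hasCompactSupport_test, mul_zero, zero_add]

/-- The Caccioppoli inequality. -/
lemma lintegral_energy_le (μ : Measure E) [μ.IsAddHaarMeasure] (h : IsEnergyField Ω u V K)
    (hW : W ⊆ Ω) (hη : IsCutoff W L η) (hp : 0 ≤ p) :
    ∫⁻ y, ENNReal.ofReal (η y ^ 2 * (u y ^ p * ‖fderiv ℝ u y‖ ^ 2)) ∂μ ≤
      ENNReal.ofReal (6 * K ^ 4 * (1 + p) * (1 + L ^ 2)) *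
        ∫⁻ y in W, ENNReal.ofReal (u y ^ p) ∂μ := by
  have hη' := hη.mono hW
  have integrable_weight : Integrable (fun y => cutoffWeight η y * u y ^ p) μ :=
    hη'.integrable_cutoffWeight_smul μ h.isOpen (h.contDiffOn_rpow p).continuousOn
  have hK := h.one_le_const
  rw [← ofReal_integral_eq_lintegral_ofReal (h.integrable_energy μ hη' p)
    (Filter.Eventually.of_forall <| h.energy_nonneg hη'.tsupport_subset p),
    ENNReal.ofReal_mul (by positivity), mul_assoc]
  refine (ENNReal.ofReal_le_ofReal (h.integral_energy_le μ hη' hp)).trans ?_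
  rw [ENNReal.ofReal_mul (by positivity), ofReal_integral_eq_lintegral_ofReal integrable_weight
    (Filter.Eventually.of_forall <| h.cutoffWeight_mul_rpow_nonneg hη'.tsupport_subset p)]
  gcongr
  exact hη.lintegral_cutoffWeight_mul_le μ fun y hy => Real.rpow_nonneg (h.pos (hW hy)).le p

lemma lintegral_enorm_fderiv_sq_mul_rpow_le (μ : Measure E) [μ.IsAddHaarMeasure]
    (h : IsEnergyField Ω u V K) (hW : W ⊆ Ω) (hη : IsCutoff W L η) (hp : 0 ≤ p) :
    ∫⁻ y, ‖fderiv ℝ (fun z => η z ^ 2 * u z ^ p) y‖ₑ ∂μ ≤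
      ENNReal.ofReal (7 * K ^ 4 * ((1 + p) ^ 2 * (1 + L ^ 2))) *
        ∫⁻ y in W, ENNReal.ofReal (u y ^ p) ∂μ := by
  have hη' := hη.mono hW
  have hK := h.one_le_const
  have measurable_energy : AEMeasurable (fun y => ENNReal.ofReal p *
      ENNReal.ofReal (η y ^ 2 * (u y ^ p * ‖fderiv ℝ u y‖ ^ 2))) μ :=
    (h.integrable_energy μ hη' p).aemeasurable.ennreal_ofReal.const_mul _
  have weight_le := hη.lintegral_cutoffWeight_mul_le μ (G := fun y => u y ^ p)
    fun y hy => Real.rpow_nonneg (h.pos (hW hy)).le p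
  calc ∫⁻ y, ‖fderiv ℝ (fun z => η z ^ 2 * u z ^ p) y‖ₑ ∂μ
      ≤ ENNReal.ofReal (1 + p) * ∫⁻ y, ENNReal.ofReal (cutoffWeight η y * u y ^ p) ∂μ +
          ENNReal.ofReal p *
            ∫⁻ y, ENNReal.ofReal (η y ^ 2 * (u y ^ p * ‖fderiv ℝ u y‖ ^ 2)) ∂μ := by
        rw [← lintegral_const_mul' _ _ ENNReal.ofReal_ne_top,
          ← lintegral_const_mul' _ _ ENNReal.ofReal_ne_top,
          ← lintegral_add_right' _ measurable_energy]
        exact lintegral_mono (h.enorm_fderiv_sq_mul_rpow_le hη' hp)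
    _ ≤ ENNReal.ofReal (1 + p) * (ENNReal.ofReal (1 + L ^ 2) *
          ∫⁻ y in W, ENNReal.ofReal (u y ^ p) ∂μ) +
        ENNReal.ofReal p * (ENNReal.ofReal (6 * K ^ 4 * (1 + p) * (1 + L ^ 2)) *
          ∫⁻ y in W, ENNReal.ofReal (u y ^ p) ∂μ) := by
        gcongr
        exact h.lintegral_energy_le μ hW hη hp
    _ = ENNReal.ofReal ((1 + p) * (1 + L ^ 2) + p * (6 * K ^ 4 * (1 + p) * (1 + L ^ 2))) *
          ∫⁻ y in W, ENNReal.ofReal (u y ^ p) ∂μ := by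
        rw [← mul_assoc, ← mul_assoc, ← ENNReal.ofReal_mul (by positivity),
          ← ENNReal.ofReal_mul hp, ← add_mul, ← ENNReal.ofReal_add (by positivity) (by positivity)]
    _ ≤ _ := by
        gcongr
        have : 1 ≤ K ^ 4 := one_le_pow₀ hK
        have h1 : (1 + p) * (1 + L ^ 2) ≤ K ^ 4 * ((1 + p) ^ 2 * (1 + L ^ 2)) := by
          calc (1 + p) * (1 + L ^ 2) ≤ 1 * ((1 + p) ^ 2 * (1 + L ^ 2)) := by
                rw [one_mul]; gcongr; nlinarith
            _ ≤ _ := by gcongr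
        have h2 : p * (1 + p) * (6 * K ^ 4 * (1 + L ^ 2)) ≤
            (1 + p) ^ 2 * (6 * K ^ 4 * (1 + L ^ 2)) := by
          gcongr
          nlinarith
        linarith

end IsEnergyField

end Energy

/-! ### Moser iteration -/

section Moser

lemma exists_le_exp_of_rpow_recursion {χ C D A : ℝ} (hχ : 1 < χ) (hC : 0 < C) (hD : 1 ≤ D)
    (hA : 0 < A) :
    ∃ X Z : ℝ, ∀ I : ℕ → ENNReal, I 0 ≤ ENNReal.ofReal A →
      (∀ k, I (k + 1) ≤ (ENNReal.ofReal (C * D ^ k) * I k) ^ χ) →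
      ∀ k : ℕ, I k ≤ ENNReal.ofReal (Real.exp (χ ^ k * X + Z)) := by
  set Y : ℝ := χ * Real.log D / (χ - 1)
  set Z : ℝ := (χ * Real.log C + Y) / (χ - 1)
  have hχ1 : χ - 1 ≠ 0 := by linarith
  have hY : (χ - 1) * Y = χ * Real.log D := mul_div_cancel₀ _ hχ1
  have hZ : (χ - 1) * Z = χ * Real.log C + Y := mul_div_cancel₀ _ hχ1
  have hY0 : 0 ≤ Y :=
    div_nonneg (mul_nonneg (by linarith) (Real.log_nonneg hD)) (by linarith)
  refine ⟨Z + Real.log A, -Z, fun I hI0 hstep => ?_⟩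
  have decay (k : ℕ) :
      I k ≤ ENNReal.ofReal (Real.exp (χ ^ k * (Z + Real.log A) - Y * k - Z)) := by
    induction k with
    | zero => simpa [Real.exp_log hA] using hI0
    | succ k ih =>
      calc I (k + 1)
          ≤ (ENNReal.ofReal (C * D ^ k) *
              ENNReal.ofReal (Real.exp (χ ^ k * (Z + Real.log A) - Y * k - Z))) ^ χ :=
            (hstep k).trans (by gcongr)
        _ = ENNReal.ofReal (Real.exp (χ * (Real.log C + k * Real.log D +
              (χ ^ k * (Z + Real.log A) - Y * k - Z)))) := by
            rw [← ENNReal.ofReal_mul (by positivity),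
              ENNReal.ofReal_rpow_of_nonneg (by positivity) (by linarith), mul_comm χ,
              Real.exp_mul, Real.exp_add, Real.exp_add, Real.exp_log hC, Real.exp_nat_mul,
              Real.exp_log (by linarith)]
        _ = _ := by
            congr 2
            push_cast
            linear_combination -(k : ℝ) * hY - hZ
  refine fun k => (decay k).trans (ENNReal.ofReal_le_ofReal (Real.exp_le_exp.2 ?_))
  linarith [mul_nonneg hY0 k.cast_nonneg]

lemma le_exp_of_setLIntegral_rpow_le {X : Type*} [TopologicalSpace X] [MeasurableSpace X]
    [BorelSpace X] {μ : Measure X} [μ.IsOpenPosMeasure] {U : Set X} {f : X → ℝ} {q : ℕ → ℝ}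
    {a b : ℝ} (hU : IsOpen U) (hf : ContinuousOn f U) (hq0 : ∀ k, 0 ≤ q k)
    (hq : Filter.Tendsto q Filter.atTop Filter.atTop)
    (h : ∀ k, ∫⁻ y in U, ENNReal.ofReal (f y ^ q k) ∂μ ≤
      ENNReal.ofReal (Real.exp (q k * a + b))) {y : X} (hy : y ∈ U) : f y ≤ Real.exp a := by
  by_contra! hlt
  obtain ⟨T, haT, hTf⟩ := exists_between hlt
  have hT : 0 < T := (Real.exp_pos a).trans haT
  let S := U ∩ f ⁻¹' Ioi T
  have isOpen_S : IsOpen S := hf.isOpen_inter_preimage hU isOpen_Ioi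
  have log_gap : a - Real.log T < 0 := by
    rw [sub_neg, Real.lt_log_iff_exp_lt hT]
    exact haT
  have measure_le (k : ℕ) : μ S ≤ ENNReal.ofReal (Real.exp (q k * (a - Real.log T) + b)) := by
    have chebyshev : ENNReal.ofReal (T ^ q k) * μ S ≤ ENNReal.ofReal (Real.exp (q k * a + b)) :=
      calc ENNReal.ofReal (T ^ q k) * μ S = ∫⁻ _ in S, ENNReal.ofReal (T ^ q k) ∂μ := by
            rw [setLIntegral_const]
        _ ≤ ∫⁻ y in S, ENNReal.ofReal (f y ^ q k) ∂μ :=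
            setLIntegral_mono' isOpen_S.measurableSet fun y hy =>
              ENNReal.ofReal_le_ofReal (Real.rpow_le_rpow hT.le (mem_Ioi.1 hy.2).le (hq0 k))
        _ ≤ _ := (lintegral_mono_set inter_subset_left).trans (h k)
    have hTq := Real.rpow_pos_of_pos hT (q k)
    rw [mul_comm, ← ENNReal.le_div_iff_mul_le (by simp [hTq]) (by simp),
      ← ENNReal.ofReal_div_of_pos hTq] at chebyshev
    refine chebyshev.trans_eq ?_
    rw [Real.rpow_def_of_pos hT, ← Real.exp_sub]
    ring_nf
  have tendsto_zero : Filter.Tendsto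
      (fun k => ENNReal.ofReal (Real.exp (q k * (a - Real.log T) + b))) Filter.atTop (nhds 0) := by
    rw [← ENNReal.ofReal_zero]
    exact (ENNReal.continuous_ofReal.tendsto 0).comp (Real.tendsto_exp_atBot.comp
      (Filter.tendsto_atBot_add_const_right _ b (hq.atTop_mul_const_of_neg log_gap)))
  exact (isOpen_S.measure_pos μ ⟨y, hy, hTf⟩).not_ge (ge_of_tendsto' tendsto_zero measure_le)

variable {E : Type*} [NormedAddCommGroup E] [NormedSpace ℝ E] [FiniteDimensional ℝ E]
  [MeasurableSpace E] [BorelSpace E]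

lemma exists_setLIntegral_rpow_mul_le (μ : Measure E) [μ.IsAddHaarMeasure] {χ : ℝ}
    (hχ : Real.HolderConjugate (Module.finrank ℝ E) χ) {K : ℝ} (hK : 1 ≤ K) :
    ∃ C > 0, ∀ {Ω W W' : Set E} {u η : E → ℝ} {V : E → E} {L p : ℝ}, IsEnergyField Ω u V K →
      W ⊆ Ω → IsCutoff W L η → (∀ y ∈ W', η y = 1) → 0 ≤ p →
      ∫⁻ y in W', ENNReal.ofReal (u y ^ (p * χ)) ∂μ ≤
        (ENNReal.ofReal (C * ((1 + p) ^ 2 * (1 + L ^ 2))) *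
          ∫⁻ y in W, ENNReal.ofReal (u y ^ p) ∂μ) ^ χ := by
  have hχ0 : 0 < χ := hχ.symm.pos
  set S : ℝ := lintegralPowLePowLIntegralFDerivConst μ χ + 1
  have hS : 0 < S := by positivity
  refine ⟨S ^ χ⁻¹ * (7 * K ^ 4), by positivity, fun {Ω W W' u η V L p} h hW hη hη1 hp => ?_⟩
  have hη' := hη.mono hW
  have contDiff_test : ContDiff ℝ 1 fun z => η z ^ 2 * u z ^ p :=
    contDiff_smul_of_tsupport_subset h.isOpen (hη.contDiff.pow 2) hη'.tsupport_sq_subset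
      (h.contDiffOn_rpow p)
  have measurableSet_one : MeasurableSet {y | η y = 1} :=
    hη.contDiff.continuous.measurable (measurableSet_singleton 1)
  have mem_Ω {y} (hy : η y = 1) : y ∈ Ω :=
    hη'.tsupport_subset (subset_tsupport η (by simp [hy]))
  calc ∫⁻ y in W', ENNReal.ofReal (u y ^ (p * χ)) ∂μ
      ≤ ∫⁻ y in {y | η y = 1}, ‖η y ^ 2 * u y ^ p‖ₑ ^ χ ∂μ := by
        refine (lintegral_mono_set hη1).trans (setLIntegral_mono' measurableSet_one ?_)
        intro y (hy : η y = 1)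
        have hu := h.pos (mem_Ω hy)
        rw [hy, one_pow, one_mul, ← ofReal_norm,
          ENNReal.ofReal_rpow_of_nonneg (norm_nonneg _) hχ0.le,
          Real.norm_of_nonneg (Real.rpow_nonneg hu.le p), ← Real.rpow_mul hu.le]
    _ ≤ ∫⁻ y, ‖η y ^ 2 * u y ^ p‖ₑ ^ χ ∂μ := setLIntegral_le_lintegral _ _
    _ ≤ lintegralPowLePowLIntegralFDerivConst μ χ *
          (∫⁻ y, ‖fderiv ℝ (fun z => η z ^ 2 * u z ^ p) y‖ₑ ∂μ) ^ χ :=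
        lintegral_pow_le_pow_lintegral_fderiv μ contDiff_test hη.hasCompactSupport_sq.mul_right hχ
    _ ≤ ENNReal.ofReal S * (ENNReal.ofReal (7 * K ^ 4 * ((1 + p) ^ 2 * (1 + L ^ 2))) *
          ∫⁻ y in W, ENNReal.ofReal (u y ^ p) ∂μ) ^ χ := by
        rw [← ENNReal.ofReal_coe_nnreal]
        gcongr
        · exact le_add_of_nonneg_right zero_le_one
        · exact h.lintegral_enorm_fderiv_sq_mul_rpow_le μ hW hη hp
    _ = _ := by
        rw [mul_assoc (S ^ χ⁻¹), ENNReal.ofReal_mul (p := S ^ χ⁻¹) (by positivity),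
          mul_assoc (ENNReal.ofReal (S ^ χ⁻¹)),
          ENNReal.mul_rpow_of_nonneg (ENNReal.ofReal (S ^ χ⁻¹)) _ hχ0.le,
          ENNReal.ofReal_rpow_of_nonneg (by positivity) hχ0.le, Real.rpow_inv_rpow hS.le hχ0.ne']

lemma sq_one_add_pow_mul_le {χ : ℝ} (hχ0 : 0 ≤ χ) (hχ2 : χ ≤ 2) (L : ℝ) (k : ℕ) :
    (1 + χ ^ k) ^ 2 * (1 + (L * 4 ^ k) ^ 2) ≤ 4 * (1 + L ^ 2) * 64 ^ k := by
  have one_le_two_pow : (1 : ℝ) ≤ 2 ^ k := one_le_pow₀ (by norm_num)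
  have one_le_four_pow : (1 : ℝ) ≤ 4 ^ k := one_le_pow₀ (by norm_num)
  calc (1 + χ ^ k) ^ 2 * (1 + (L * 4 ^ k) ^ 2)
      ≤ (2 ^ k + 2 ^ k) ^ 2 * ((4 ^ k) ^ 2 + (L * 4 ^ k) ^ 2) := by
        gcongr
        exact one_le_pow₀ one_le_four_pow
    _ = 4 * (1 + L ^ 2) * (2 ^ k * 2 ^ k * (4 ^ k * 4 ^ k)) := by ring
    _ = 4 * (1 + L ^ 2) * 64 ^ k := by
        rw [← mul_pow, ← mul_pow, ← mul_pow]
        norm_num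

lemma exists_le_of_isEnergyField (μ : Measure E) [μ.IsAddHaarMeasure]
    (hE : 2 ≤ Module.finrank ℝ E) {K A : ℝ} (L : ℝ) (hK : 1 ≤ K) (hA : 0 < A) :
    ∃ X : ℝ, ∀ {Ω U : Set E} {W : ℕ → Set E} {u : E → ℝ} {η : ℕ → E → ℝ} {V : E → E},
      IsEnergyField Ω u V K → W 0 ⊆ Ω → (∀ k, IsCutoff (W k) (L * 4 ^ k) (η k)) →
      (∀ k, ∀ y ∈ W (k + 1), η k y = 1) → IsOpen U → (∀ k, U ⊆ W k) →
      ∫⁻ y in W 0, ENNReal.ofReal (u y) ∂μ ≤ ENNReal.ofReal A → ∀ y ∈ U, u y ≤ X := by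
  have hn : (2 : ℝ) ≤ Module.finrank ℝ E := by exact_mod_cast hE
  set χ : ℝ := Real.conjExponent (Module.finrank ℝ E)
  have hχ : Real.HolderConjugate (Module.finrank ℝ E) χ :=
    Real.HolderConjugate.conjExponent (by linarith)
  have hχ1 : 1 < χ := hχ.symm.lt
  have hχ2 : χ ≤ 2 := by
    refine (div_le_iff₀ (by linarith)).2 ?_
    linarith
  obtain ⟨C, hC, holder_step⟩ := exists_setLIntegral_rpow_mul_le μ hχ hK
  obtain ⟨X, Z, iteration⟩ := exists_le_exp_of_rpow_recursion (D := 64) hχ1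
    (C := C * (4 * (1 + L ^ 2))) (by positivity) (by norm_num) hA
  refine ⟨Real.exp X, fun {Ω U W u η V} h hW hη hη1 hU hUW h0 y hy => ?_⟩
  have hWΩ : ∀ k, W k ⊆ Ω := Nat.rec hW fun k ih y hy =>
    ih ((hη k).tsupport_subset (subset_tsupport _ (by simp [hη1 k y hy])))
  have rpow_bound := iteration (fun k => ∫⁻ y in W k, ENNReal.ofReal (u y ^ χ ^ k) ∂μ)
    (by simpa using h0) fun k => by
      refine (pow_succ χ k ▸ holder_step h (hWΩ k) (hη k) (hη1 k) (by positivity)).trans ?_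
      rw [mul_assoc C]
      gcongr (ENNReal.ofReal (C * ?_) * _) ^ χ
      exact sq_one_add_pow_mul_le hχ.symm.pos.le hχ2 L k
  exact le_exp_of_setLIntegral_rpow_le hU (h.contDiffOn.continuousOn.mono ((hUW 0).trans hW))
    (fun k => by positivity) (tendsto_pow_atTop_atTop_of_one_lt hχ1)
    (fun k => (lintegral_mono_set (hUW k)).trans (rpow_bound k)) hy

end Moser

/-! ### The gradient map of a uniformly convex function -/

section UniformConvexity

variable {E : Type*} [NormedAddCommGroup E] [InnerProductSpace ℝ E]

lemma contDiffOn_gradient [CompleteSpace E] {g : E → ℝ} {s : Set E} (hs : IsOpen s)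
    (hg : ContDiffOn ℝ ∞ g s) : ContDiffOn ℝ ∞ (∇ g) s :=
  (InnerProductSpace.toDual ℝ E).symm.contDiff.comp_contDiffOn
    (hg.fderiv_of_isOpen hs (by simp))

/-- A smooth function on an open convex set with second derivative bounded below by `κ > 0`. -/
structure IsUniformlyConvex [CompleteSpace E] (s : Set E) (g : E → ℝ) (κ : ℝ) : Prop where
  isOpen : IsOpen s
  convex : Convex ℝ s
  contDiffOn : ContDiffOn ℝ ∞ g s
  pos : 0 < κ
  le_inner : ∀ x ∈ s, ∀ v, κ * ‖v‖ ^ 2 ≤ ⟪fderiv ℝ (∇ g) x v, v⟫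

namespace IsUniformlyConvex

section Complete

variable [CompleteSpace E] {g : E → ℝ} {s : Set E} {κ N Y r ρ R : ℝ} {x x₀ y z : E}

lemma differentiableAt (hg : IsUniformlyConvex s g κ) (hx : x ∈ s) : DifferentiableAt ℝ g x :=
  (hg.contDiffOn.contDiffAt (hg.isOpen.mem_nhds hx)).differentiableAt (by simp)

lemma contDiffAt_gradient (hg : IsUniformlyConvex s g κ) (hx : x ∈ s) :
    ContDiffAt ℝ ∞ (∇ g) x :=
  (contDiffOn_gradient hg.isOpen hg.contDiffOn).contDiffAt (hg.isOpen.mem_nhds hx)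

lemma differentiableAt_gradient (hg : IsUniformlyConvex s g κ) (hx : x ∈ s) :
    DifferentiableAt ℝ (∇ g) x :=
  (hg.contDiffAt_gradient hx).differentiableAt (by simp)

lemma continuousOn_gradient (hg : IsUniformlyConvex s g κ) : ContinuousOn (∇ g) s :=
  fun _ hx => (hg.differentiableAt_gradient hx).continuousAt.continuousWithinAt

lemma mul_norm_sq_le_inner_gradient_sub (hg : IsUniformlyConvex s g κ) (hx : x ∈ s)
    (hz : z ∈ s) : κ * ‖x - z‖ ^ 2 ≤ ⟪∇ g x - ∇ g z, x - z⟫ := by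
  have h_deriv : ∀ w ∈ s, HasFDerivWithinAt (fun w => ⟪x - z, ∇ g w⟫)
      ((innerSL ℝ (x - z)).comp (fderiv ℝ (∇ g) w)) s w := fun w hw =>
    ((innerSL ℝ (x - z)).hasFDerivAt.comp w
      (hg.differentiableAt_gradient hw).hasFDerivAt).hasFDerivWithinAt
  obtain ⟨w, hw, h_mvt⟩ := domain_mvt h_deriv hg.convex hz hx
  have h_le := hg.le_inner w (hg.convex.segment_subset hz hx hw) (x - z)
  rw [real_inner_comm] at h_le
  rw [real_inner_comm, inner_sub_right, h_mvt]
  exact h_le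

lemma add_le_apply (hg : IsUniformlyConvex s g κ) (hx : x ∈ s) (hz : z ∈ s) :
    g z + ⟪∇ g z, x - z⟫ + κ / 2 * ‖x - z‖ ^ 2 ≤ g x := by
  have h_deriv : ∀ w ∈ s, HasFDerivWithinAt (fun w => g w - κ / 2 * ‖w - z‖ ^ 2)
      (fderiv ℝ g w - (κ / 2) • (2 • (innerSL ℝ (w - z)))) s w := fun w hw => by
    have h_sub : HasFDerivAt (fun w : E => w - z) (ContinuousLinearMap.id ℝ E) w :=
      (hasFDerivAt_id w).sub_const z
    have h_sq : HasFDerivAt (fun w => ‖w - z‖ ^ 2) (2 • innerSL ℝ (w - z)) w := by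
      simpa using h_sub.norm_sq
    exact ((hg.differentiableAt hw).hasFDerivAt.sub (h_sq.const_mul (κ / 2))).hasFDerivWithinAt
  obtain ⟨w, hw, h_mvt⟩ := domain_mvt h_deriv hg.convex hz hx
  have hws : w ∈ s := hg.convex.segment_subset hz hx hw
  rw [segment_eq_image', mem_image] at hw
  obtain ⟨a, ⟨ha_nonneg, -⟩, rfl⟩ := hw
  have h_mono : κ * a * ‖x - z‖ ^ 2 ≤ ⟪∇ g (z + a • (x - z)), x - z⟫ - ⟪∇ g z, x - z⟫ := by
    have h := hg.mul_norm_sq_le_inner_gradient_sub hws hz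
    rw [add_sub_cancel_left, norm_smul, Real.norm_of_nonneg ha_nonneg, inner_smul_right,
      inner_sub_left] at h
    rcases ha_nonneg.eq_or_lt with rfl | ha_pos
    · simp
    · refine le_of_mul_le_mul_left ?_ ha_pos
      linarith
  simp only [_root_.sub_apply, _root_.smul_apply, add_sub_cancel_left,
    ← inner_gradient_left, innerSL_apply_apply, inner_smul_left, real_inner_self_eq_norm_sq,
    sub_self, norm_zero] at h_mvt
  simp only [conj_trivial, smul_eq_mul, nsmul_eq_mul] at h_mvt
  push_cast at h_mvt
  linarith

lemma injOn_gradient (hg : IsUniformlyConvex s g κ) : InjOn (∇ g) s := by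
  intro x hx z hz h_eq
  have h := hg.mul_norm_sq_le_inner_gradient_sub hx hz
  rw [h_eq, sub_self, inner_zero_left] at h
  have h_norm : ‖x - z‖ ^ 2 ≤ 0 := nonpos_of_mul_nonpos_right h hg.pos
  exact sub_eq_zero.1 (norm_eq_zero.1 (by nlinarith [sq_nonneg ‖x - z‖]))

lemma mul_norm_le_norm_fderiv_gradient (hg : IsUniformlyConvex s g κ) (hx : x ∈ s) (v : E) :
    κ * ‖v‖ ≤ ‖fderiv ℝ (∇ g) x v‖ := by
  rcases eq_or_ne v 0 with rfl | hv
  · simp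
  · have h := (hg.le_inner x hx v).trans (real_inner_le_norm _ _)
    exact le_of_mul_le_mul_right (by linarith) (norm_pos_iff.2 hv)

lemma norm_gradient_le (hg : IsUniformlyConvex s g κ) (hr : 0 < r) (h_ball : closedBall x r ⊆ s)
    (hN : ∀ z ∈ s, |g z| ≤ N) : ‖∇ g x‖ ≤ 2 * N / r := by
  have hx : x ∈ s := h_ball (mem_closedBall_self hr.le)
  rcases eq_or_ne (∇ g x) 0 with h_zero | h_ne
  · rw [h_zero, norm_zero]
    have := (abs_nonneg _).trans (hN x hx)
    positivity
  have h_norm : 0 < ‖∇ g x‖ := norm_pos_iff.2 h_ne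
  set z := x + (r / ‖∇ g x‖) • ∇ g x with hz
  have hzs : z ∈ s := h_ball <| by
    rw [mem_closedBall, dist_eq_norm, hz, add_sub_cancel_left, norm_smul, norm_div, norm_norm,
      Real.norm_of_nonneg hr.le, div_mul_cancel₀ _ h_norm.ne']
  have h_grow := hg.add_le_apply hzs hx
  have h_inner : ⟪∇ g x, z - x⟫ = r * ‖∇ g x‖ := by
    rw [hz, add_sub_cancel_left, inner_smul_right, real_inner_self_eq_norm_sq]
    field_simp
  have h_sq : 0 ≤ κ / 2 * ‖z - x‖ ^ 2 := by
    have := hg.pos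
    positivity
  rw [le_div_iff₀ hr]
  linarith [(abs_le.1 (hN x hx)).1, (abs_le.1 (hN z hzs)).2]

end Complete

section FiniteDimensional

variable [FiniteDimensional ℝ E] {g : E → ℝ} {s : Set E} {κ Y ρ R : ℝ} {x₀ y : E}

lemma mem_image_gradient_of_inner_lt (hg : IsUniformlyConvex s g κ) (hR : 0 < R)
    (h_ball : closedBall x₀ R ⊆ s)
    (hy : ∀ x ∈ sphere x₀ R, ⟪y, x - x₀⟫ < g x - g x₀) : y ∈ ∇ g '' ball x₀ R := by
  have h_cont : ContinuousOn (fun x => g x - ⟪y, x⟫) (closedBall x₀ R) :=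
    (hg.contDiffOn.continuousOn.mono h_ball).sub (by fun_prop)
  obtain ⟨x, hx, h_min⟩ := (isCompact_closedBall x₀ R).exists_isMinOn
    (nonempty_closedBall.2 hR.le) h_cont
  have hx_ball : x ∈ ball x₀ R := by
    refine (le_iff_lt_or_eq.1 (mem_closedBall.1 hx)).resolve_right fun h_sphere => ?_
    have h_lt := hy x h_sphere
    have h_le : g x - ⟪y, x⟫ ≤ g x₀ - ⟪y, x₀⟫ := h_min (mem_closedBall_self hR.le)
    rw [inner_sub_right] at h_lt
    linarith
  have h_loc : IsLocalMin (fun x => g x - ⟪y, x⟫) x :=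
    h_min.isLocalMin (Filter.mem_of_superset (isOpen_ball.mem_nhds hx_ball) ball_subset_closedBall)
  have h_deriv : HasFDerivAt (fun x => g x - ⟪y, x⟫) (fderiv ℝ g x - innerSL ℝ y) x :=
    (hg.differentiableAt (h_ball hx)).hasFDerivAt.sub (innerSL ℝ y).hasFDerivAt
  refine ⟨x, hx_ball, ext_inner_right ℝ fun v => ?_⟩
  rw [inner_gradient_left, sub_eq_zero.1 (h_loc.hasFDerivAt_eq_zero h_deriv)]
  rfl

lemma inner_gradient_lt_of_mem_sphere (hg : IsUniformlyConvex s g κ)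
    (h_ball : closedBall x₀ R ⊆ s) (hρ : 0 < ρ) (hρR : ρ ≤ R / 2)
    (hY : ∀ x ∈ ball x₀ ρ, ‖∇ g x‖ ≤ Y) (h_small : 2 * Y * ρ < κ / 8 * R ^ 2) {p : E}
    (hp : p ∈ ball x₀ ρ) (hx : x ∈ sphere x₀ R) : ⟪∇ g p, x - x₀⟫ < g x - g x₀ := by
  have hx₀s : x₀ ∈ s := h_ball (mem_closedBall_self (by linarith))
  have hps : p ∈ s := h_ball (ball_subset_closedBall (ball_subset_ball (by linarith) hp))
  have hp_norm : ‖p - x₀‖ < ρ := mem_ball_iff_norm.1 hp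
  have hx_norm : ‖x - x₀‖ = R := mem_sphere_iff_norm.1 hx
  have h_far : R / 2 ≤ ‖x - p‖ := by
    have := norm_sub_le_norm_sub_add_norm_sub x p x₀
    linarith
  have h_grow := hg.add_le_apply (h_ball (sphere_subset_closedBall hx)) hps
  have h_base := hg.add_le_apply hps hx₀s
  have h_inner : -(2 * Y * ρ) ≤ ⟪∇ g x₀ - ∇ g p, p - x₀⟫ := by
    have h_abs := abs_le.1 (abs_real_inner_le_norm (∇ g x₀ - ∇ g p) (p - x₀))
    have h_norm : ‖∇ g x₀ - ∇ g p‖ ≤ 2 * Y := by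
      linarith [norm_sub_le (∇ g x₀) (∇ g p), hY p hp, hY x₀ (mem_ball_self hρ)]
    nlinarith [norm_nonneg (∇ g x₀ - ∇ g p), norm_nonneg (p - x₀)]
  have h_sq : κ / 2 * (R / 2) ^ 2 ≤ κ / 2 * ‖x - p‖ ^ 2 := by
    have := hg.pos
    have : 0 ≤ R / 2 := hρ.le.trans hρR
    gcongr
  have h_sq' : 0 ≤ κ / 2 * ‖p - x₀‖ ^ 2 := by
    have := hg.pos
    positivity
  have h_split : ⟪∇ g p, x - p⟫ = ⟪∇ g p, x - x₀⟫ - ⟪∇ g p, p - x₀⟫ := by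
    rw [← inner_sub_right, sub_sub_sub_cancel_right]
  rw [inner_sub_left] at h_inner
  linarith

lemma convexHull_image_gradient_subset (hg : IsUniformlyConvex s g κ) (hR : 0 < R)
    (h_ball : closedBall x₀ R ⊆ s) (hρ : 0 < ρ) (hρR : ρ ≤ R / 2)
    (hY : ∀ x ∈ ball x₀ ρ, ‖∇ g x‖ ≤ Y) (h_small : 2 * Y * ρ < κ / 8 * R ^ 2) :
    convexHull ℝ (∇ g '' ball x₀ ρ) ⊆ ∇ g '' ball x₀ R := by
  have h_convex : Convex ℝ {y | ∀ x ∈ sphere x₀ R, ⟪y, x - x₀⟫ < g x - g x₀} := by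
    simp only [ofPred_forall]
    exact convex_iInter₂ fun x _ => convex_halfSpace_lt ((innerₗ E).flip (x - x₀)).isLinear _
  refine (convexHull_min ?_ h_convex).trans
    fun y hy => hg.mem_image_gradient_of_inner_lt hR h_ball hy
  rintro _ ⟨p, hp, rfl⟩ x hx
  exact hg.inner_gradient_lt_of_mem_sphere h_ball hρ hρR hY h_small hp hx

end FiniteDimensional

end IsUniformlyConvex

end UniformConvexity

namespace IsUniformlyConvex

variable {E : Type*} [NormedAddCommGroup E] [InnerProductSpace ℝ E] [FiniteDimensional ℝ E]
  {g : E → ℝ} {s : Set E} {κ : ℝ} {x y : E}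

lemma exists_hasStrictFDerivAt_gradient (hg : IsUniformlyConvex s g κ) (hx : x ∈ s) :
    ∃ e : E ≃L[ℝ] E, HasStrictFDerivAt (∇ g) (e : E →L[ℝ] E) x := by
  have h_inj : Function.Injective (fderiv ℝ (∇ g) x) :=
    (injective_iff_map_eq_zero _).2 fun v hv => by
      have h := hg.mul_norm_le_norm_fderiv_gradient hx v
      rw [hv, norm_zero] at h
      exact norm_le_zero_iff.1 (nonpos_of_mul_nonpos_right h hg.pos)
  refine ⟨(LinearEquiv.ofInjectiveEndo _ h_inj).toContinuousLinearEquiv, ?_⟩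
  exact (hg.contDiffAt_gradient hx).hasStrictFDerivAt (by simp)

lemma isOpenMap_domRestrict_gradient (hg : IsUniformlyConvex s g κ) :
    IsOpenMap (s.domRestrict (∇ g)) :=
  isOpenMap_iff_nhds_le.2 fun x => by
    obtain ⟨e, he⟩ := hg.exists_hasStrictFDerivAt_gradient x.2
    change nhds (∇ g x) ≤ Filter.map (∇ g ∘ (↑)) (nhds x)
    rw [← he.map_nhds_eq_of_equiv, ← Filter.map_map,
      map_nhds_subtype_coe_eq_nhds x.2 (hg.isOpen.mem_nhds x.2)]

/-- The gradient of a uniformly convex function on `s` as a homeomorphism from `s` onto its image;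
its inverse is the gradient of the Legendre transform. -/
noncomputable def gradientChart (hg : IsUniformlyConvex s g κ) : OpenPartialHomeomorph E E :=
  .ofContinuousOpenRestrict (hg.injOn_gradient.toPartialEquiv (∇ g) s) hg.continuousOn_gradient
    hg.isOpenMap_domRestrict_gradient hg.isOpen

variable (hg : IsUniformlyConvex s g κ)
include hg

lemma gradientChart_symm_apply (hx : x ∈ s) : hg.gradientChart.symm (∇ g x) = x :=
  hg.gradientChart.left_inv hx

lemma gradientChart_symm_mem (hy : y ∈ ∇ g '' s) : hg.gradientChart.symm y ∈ s :=
  hg.gradientChart.map_target hy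

lemma isOpen_image_gradient {t : Set E} (ht : IsOpen t) (hts : t ⊆ s) : IsOpen (∇ g '' t) :=
  hg.gradientChart.isOpen_image_of_subset_source ht hts

lemma contDiffOn_gradientChart_symm : ContDiffOn ℝ ∞ hg.gradientChart.symm (∇ g '' s) :=
  fun y hy => by
    have hys := hg.gradientChart_symm_mem hy
    obtain ⟨e, he⟩ := hg.exists_hasStrictFDerivAt_gradient hys
    exact (hg.gradientChart.contDiffAt_symm hy he.hasFDerivAt
      (hg.contDiffAt_gradient hys)).contDiffWithinAt

lemma differentiableAt_gradientChart_symm (hy : y ∈ ∇ g '' s) :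
    DifferentiableAt ℝ hg.gradientChart.symm y :=
  (hg.contDiffOn_gradientChart_symm.contDiffAt
    ((hg.isOpen_image_gradient hg.isOpen subset_rfl).mem_nhds hy)).differentiableAt (by simp)

lemma fderiv_gradient_comp_fderiv_gradientChart_symm (hy : y ∈ ∇ g '' s) :
    (fderiv ℝ (∇ g) (hg.gradientChart.symm y)).comp (fderiv ℝ hg.gradientChart.symm y) =
      ContinuousLinearMap.id ℝ E := by
  obtain ⟨e, he⟩ := hg.exists_hasStrictFDerivAt_gradient (hg.gradientChart_symm_mem hy)
  have h_symm := hg.gradientChart.hasFDerivAt_symm hy he.hasFDerivAt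
  rw [he.hasFDerivAt.fderiv, h_symm.fderiv]
  ext v
  simp

lemma norm_fderiv_gradientChart_symm_le (hy : y ∈ ∇ g '' s) :
    ‖fderiv ℝ hg.gradientChart.symm y‖ ≤ κ⁻¹ := by
  refine ContinuousLinearMap.opNorm_le_bound _ (inv_nonneg.2 hg.pos.le) fun v => ?_
  have h := hg.mul_norm_le_norm_fderiv_gradient (hg.gradientChart_symm_mem hy)
    (fderiv ℝ hg.gradientChart.symm y v)
  rw [← ContinuousLinearMap.comp_apply, hg.fderiv_gradient_comp_fderiv_gradientChart_symm hy,
    ContinuousLinearMap.id_apply] at h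
  rwa [inv_mul_eq_div, le_div_iff₀ hg.pos, mul_comm]

lemma measure_le_lintegral_abs_det_fderiv_gradientChart_symm [MeasurableSpace E] [BorelSpace E]
    (μ : Measure E) [μ.IsAddHaarMeasure] {t : Set E} (ht : IsOpen t) (hts : t ⊆ s) :
    μ t ≤ ∫⁻ y in ∇ g '' t, ENNReal.ofReal |(fderiv ℝ hg.gradientChart.symm y).det| ∂μ := by
  have h_image : hg.gradientChart.symm '' (∇ g '' t) = t := by
    rw [image_image]
    exact (image_congr fun x hx => hg.gradientChart_symm_apply (hts hx)).trans (image_id t)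
  calc μ t = μ (hg.gradientChart.symm '' (∇ g '' t)) := by rw [h_image]
    _ ≤ _ := addHaar_image_le_lintegral_abs_det_fderiv μ
        (hg.isOpen_image_gradient ht hts).measurableSet fun y hy =>
        (hg.differentiableAt_gradientChart_symm (image_mono hts hy)).hasFDerivAt.hasFDerivWithinAt

end IsUniformlyConvex

section Hessian

attribute [local instance] Matrix.frobeniusNormedRing Matrix.frobeniusNormedAlgebra

lemma inner_fderiv_gradient {E : Type*} [NormedAddCommGroup E] [InnerProductSpace ℝ E]
    [CompleteSpace E] (g : E → ℝ) (x v w : E) :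
    ⟪fderiv ℝ (∇ g) x v, w⟫ = fderiv ℝ (fderiv ℝ g) x v w := by
  have h : fderiv ℝ (∇ g) x = _ :=
    (InnerProductSpace.toDual ℝ E).symm.toContinuousLinearEquiv.comp_fderiv (f := fderiv ℝ g)
  rw [h]
  exact InnerProductSpace.toDual_symm_apply

variable {n : ℕ} {f g : EuclideanSpace ℝ (Fin n) → ℝ} {x : EuclideanSpace ℝ (Fin n)}
  {s : Set (EuclideanSpace ℝ (Fin n))} {M : ℝ}

lemma Hess_apply (f : EuclideanSpace ℝ (Fin n) → ℝ) (x : EuclideanSpace ℝ (Fin n))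
    (i j : Fin n) : Hess n f x i j =
      fderiv ℝ (fderiv ℝ f) x (EuclideanSpace.single i 1) (EuclideanSpace.single j 1) := by
  simp [Hess, iteratedFDeriv_two_apply]

lemma toEuclideanCLM_Hess (hg : ContDiffAt ℝ ∞ g x) :
    Matrix.toEuclideanCLM (𝕜 := ℝ) (Hess n g x) = fderiv ℝ (∇ g) x := by
  refine ContinuousLinearMap.coe_injective
    ((EuclideanSpace.basisFun (Fin n) ℝ).toBasis.ext fun j => ?_)
  ext i
  have h_inner : fderiv ℝ (∇ g) x (EuclideanSpace.single j 1) i =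
      ⟪fderiv ℝ (∇ g) x (EuclideanSpace.single j 1), EuclideanSpace.single i 1⟫ := by
    simp [EuclideanSpace.inner_single_right]
  have h_symm := (hg.isSymmSndFDerivAt (by simp; norm_cast)).eq
    (EuclideanSpace.single i 1) (EuclideanSpace.single j 1)
  simp [h_inner, inner_fderiv_gradient, ← h_symm, Hess_apply]

lemma contDiffOn_Hess (hs : IsOpen s) (hf : ContDiffOn ℝ ∞ f s) :
    ContDiffOn ℝ ∞ (Hess n f) s := by
  refine contDiffOn_matrix_of_apply fun i j => ?_
  simp only [Hess_apply]
  have h_fderiv : ContDiffOn ℝ ∞ (fderiv ℝ f) s := hf.fderiv_of_isOpen hs (by simp)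
  exact ((h_fderiv.fderiv_of_isOpen hs (by simp)).clm_apply contDiffOn_const).clm_apply
    contDiffOn_const

lemma abs_Hess_apply_le (hM : ‖iteratedFDeriv ℝ 2 f x‖ ≤ M) (i j : Fin n) :
    |Hess n f x i j| ≤ M := by
  refine le_trans ?_ hM
  simpa [Hess, Fin.prod_univ_two] using (iteratedFDeriv ℝ 2 f x).le_opNorm
    ![EuclideanSpace.single i 1, EuclideanSpace.single j 1]

lemma partialDeriv_Hess_apply (hs : IsOpen s) (hf : ContDiffOn ℝ ∞ f s) (hx : x ∈ s)
    (k i j : Fin n) : partialDeriv k (Hess n f) x i j = iteratedFDeriv ℝ 3 f x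
      ![EuclideanSpace.single k 1, EuclideanSpace.single i 1, EuclideanSpace.single j 1] := by
  have h_diff : DifferentiableAt ℝ (iteratedFDeriv ℝ 2 f) x :=
    (hf.contDiffAt (hs.mem_nhds hx)).differentiableAt_iteratedFDeriv
      (WithTop.coe_lt_coe.2 (ENat.natCast_lt_top 2))
  have h_Hess : DifferentiableAt ℝ (Hess n f) x :=
    ((contDiffOn_Hess hs hf).contDiffAt (hs.mem_nhds hx)).differentiableAt (by simp)
  refine (fderiv_matrix_apply h_Hess i j).symm.trans ?_
  rw [iteratedFDeriv_succ_apply_left]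
  exact congr($((h_diff.hasFDerivAt.continuousMultilinear_apply_const
    ![EuclideanSpace.single i 1, EuclideanSpace.single j 1]).fderiv) (EuclideanSpace.single k 1))

lemma abs_partialDeriv_Hess_apply_le (hs : IsOpen s) (hf : ContDiffOn ℝ ∞ f s) (hx : x ∈ s)
    (hM : ‖iteratedFDeriv ℝ 3 f x‖ ≤ M) (k i j : Fin n) :
    |partialDeriv k (Hess n f) x i j| ≤ M := by
  refine le_trans ?_ hM
  rw [partialDeriv_Hess_apply hs hf hx]
  simpa [Fin.prod_univ_three] using (iteratedFDeriv ℝ 3 f x).le_opNorm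
    ![EuclideanSpace.single k 1, EuclideanSpace.single i 1, EuclideanSpace.single j 1]

/-- The Hessian matrix of the Legendre transform of a uniformly convex function. -/
noncomputable def dualHessian {κ : ℝ} (hg : IsUniformlyConvex s g κ)
    (y : EuclideanSpace ℝ (Fin n)) : Matrix (Fin n) (Fin n) ℝ :=
  (Hess n g (hg.gradientChart.symm y))⁻¹

section DualHessian

variable {κ : ℝ} (hg : IsUniformlyConvex s g κ) {y : EuclideanSpace ℝ (Fin n)}

lemma contDiffOn_comp_gradientChart_symm {X : Type*} [NormedAddCommGroup X] [NormedSpace ℝ X]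
    {F : EuclideanSpace ℝ (Fin n) → X} (hF : ContDiffOn ℝ ∞ F s) :
    ContDiffOn ℝ ∞ (fun y => F (hg.gradientChart.symm y)) (∇ g '' s) :=
  hF.comp hg.contDiffOn_gradientChart_symm fun _ => hg.gradientChart_symm_mem

lemma toEuclideanCLM_dualHessian (hy : y ∈ ∇ g '' s) :
    Matrix.toEuclideanCLM (𝕜 := ℝ) (dualHessian hg y) =
      fderiv ℝ hg.gradientChart.symm y := by
  have h_comp := hg.fderiv_gradient_comp_fderiv_gradientChart_symm hy
  rw [← toEuclideanCLM_Hess (hg.contDiffOn.contDiffAt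
    (hg.isOpen.mem_nhds (hg.gradientChart_symm_mem hy)))] at h_comp
  have h_mul : Hess n g (hg.gradientChart.symm y) *
      (Matrix.toEuclideanCLM (𝕜 := ℝ)).symm (fderiv ℝ hg.gradientChart.symm y) = 1 := by
    have h := congr((Matrix.toEuclideanCLM (𝕜 := ℝ)).symm $h_comp)
    rwa [← ContinuousLinearMap.mul_def, map_mul, StarAlgEquiv.symm_apply_apply,
      ← ContinuousLinearMap.one_def, map_one] at h
  rw [dualHessian, inv_eq_right_inv h_mul, StarAlgEquiv.apply_symm_apply]

lemma det_dualHessian (hy : y ∈ ∇ g '' s) :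
    (dualHessian hg y).det = (fderiv ℝ hg.gradientChart.symm y).det := by
  rw [← toEuclideanCLM_dualHessian hg hy]
  exact (LinearMap.det_toLpLin 2 _).symm

lemma dualHessian_apply (hy : y ∈ ∇ g '' s) (i j : Fin n) :
    dualHessian hg y i j = partialDeriv j hg.gradientChart.symm y i := by
  rw [partialDeriv, ← toEuclideanCLM_dualHessian hg hy]
  simp

lemma contDiffOn_dualHessian : ContDiffOn ℝ ∞ (dualHessian hg) (∇ g '' s) := by
  have h_open := hg.isOpen_image_gradient hg.isOpen subset_rfl
  refine contDiffOn_matrix_of_apply fun i j => ?_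
  refine ContDiffOn.congr (f := fun y => partialDeriv j hg.gradientChart.symm y i) ?_
    fun y hy => dualHessian_apply hg hy i j
  exact contDiffOn_euclidean.1
    (contDiffOn_partialDeriv h_open hg.contDiffOn_gradientChart_symm j) i

lemma partialDeriv_dualHessian_apply (hy : y ∈ ∇ g '' s) (i j k : Fin n) :
    partialDeriv k (dualHessian hg) y i j =
      partialDeriv k (partialDeriv j hg.gradientChart.symm) y i := by
  have h_open := hg.isOpen_image_gradient hg.isOpen subset_rfl
  have h_nhds := h_open.mem_nhds hy
  have h_diff : DifferentiableAt ℝ (dualHessian hg) y :=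
    ((contDiffOn_dualHessian hg).contDiffAt h_nhds).differentiableAt (by simp)
  have h_diff' : DifferentiableAt ℝ (partialDeriv j hg.gradientChart.symm) y :=
    ((contDiffOn_partialDeriv h_open hg.contDiffOn_gradientChart_symm j).contDiffAt
      h_nhds).differentiableAt (by simp)
  have h_eq : (fun z => dualHessian hg z i j) =ᶠ[nhds y]
      fun z => partialDeriv j hg.gradientChart.symm z i :=
    Filter.eventually_of_mem h_nhds fun z hz => dualHessian_apply hg hz i j
  refine (fderiv_matrix_apply h_diff i j).symm.trans ?_
  rw [h_eq.fderiv_eq]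
  exact congr($(((EuclideanSpace.proj (𝕜 := ℝ) i).hasFDerivAt.comp y
    h_diff'.hasFDerivAt).fderiv) (EuclideanSpace.single k 1))

lemma partialDeriv_dualHessian_apply_comm (hy : y ∈ ∇ g '' s) (i j k : Fin n) :
    partialDeriv k (dualHessian hg) y i j = partialDeriv j (dualHessian hg) y i k := by
  rw [partialDeriv_dualHessian_apply hg hy, partialDeriv_dualHessian_apply hg hy,
    partialDeriv_comm (hg.contDiffOn_gradientChart_symm.contDiffAt
      ((hg.isOpen_image_gradient hg.isOpen subset_rfl).mem_nhds hy))]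

lemma partialDeriv_comp_gradientChart_symm {X : Type*} [NormedAddCommGroup X] [NormedSpace ℝ X]
    {F : EuclideanSpace ℝ (Fin n) → X} (hF : ContDiffOn ℝ ∞ F s) (hy : y ∈ ∇ g '' s)
    (l : Fin n) : partialDeriv l (fun y => F (hg.gradientChart.symm y)) y =
      ∑ k, dualHessian hg y k l • partialDeriv k F (hg.gradientChart.symm y) := by
  have h_diff : DifferentiableAt ℝ F (hg.gradientChart.symm y) :=
    (hF.contDiffAt (hg.isOpen.mem_nhds (hg.gradientChart_symm_mem hy))).differentiableAt (by simp)
  have h_comp := h_diff.hasFDerivAt.comp y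
    (hg.differentiableAt_gradientChart_symm hy).hasFDerivAt
  have h_single : partialDeriv l hg.gradientChart.symm y =
      ∑ k, dualHessian hg y k l • EuclideanSpace.single k (1 : ℝ) := by
    ext i
    simp [dualHessian_apply hg hy, Pi.single_apply]
  have h_fderiv : partialDeriv l (fun y => F (hg.gradientChart.symm y)) y =
      fderiv ℝ F (hg.gradientChart.symm y) (partialDeriv l hg.gradientChart.symm y) :=
    congr($(h_comp.fderiv) (EuclideanSpace.single l 1))
  rw [h_fderiv, h_single, map_sum]
  simp only [map_smul, partialDeriv]

end DualHessian

end Hessian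

section Equation

attribute [local instance] Matrix.frobeniusNormedRing Matrix.frobeniusNormedAlgebra

lemma mul_trace_inv_le {ι : Type*} [Fintype ι] [DecidableEq ι] {F G : Matrix ι ι ℝ} {τ d : ℝ}
    (hτ : 0 ≤ τ) (hd : 0 ≤ d) (hG : G.PosDef) (hF : (F - τ • (1 : Matrix ι ι ℝ)).PosSemidef) :
    τ * G⁻¹.trace ≤ (G⁻¹ * F).trace + d * F.det / G.det := by
  have h_trace : 0 ≤ (G⁻¹ * (F - τ • (1 : Matrix ι ι ℝ))).trace :=
    trace_mul_nonneg_of_posSemidef hG.inv.posSemidef hF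
  rw [Matrix.mul_sub, trace_sub, Matrix.mul_smul, Matrix.mul_one, trace_smul, smul_eq_mul]
    at h_trace
  have h_det : 0 ≤ d * F.det / G.det :=
    div_nonneg (mul_nonneg hd (posSemidef_of_posSemidef_sub_smul_one hτ hF).det_nonneg)
      hG.det_pos.le
  linarith

/-- `g` solves `tr((D²g)⁻¹ D²f) + d det D²f / det D²g = c` on the unit ball, with `D²g` positive
definite and `|g| ≤ N`, and the datum `f` satisfies `D²f > τ` with second and third derivatives
bounded by `M`. -/
structure IsSolution (n : ℕ) (f g : EuclideanSpace ℝ (Fin n) → ℝ) (c d τ N M : ℝ) : Prop where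
  contDiffOn_data : ContDiffOn ℝ ∞ f (ball 0 1)
  contDiffOn : ContDiffOn ℝ ∞ g (ball 0 1)
  posDef : ∀ x ∈ ball 0 1, (Hess n g x).PosDef
  posDef_data : ∀ x ∈ ball 0 1, (Hess n f x - τ • (1 : Matrix (Fin n) (Fin n) ℝ)).PosDef
  nonneg : 0 ≤ d
  equation : ∀ x ∈ ball 0 1,
    ((Hess n g x)⁻¹ * Hess n f x).trace + d * (Hess n f x).det / (Hess n g x).det = c
  abs_le : ∀ x ∈ ball 0 1, |g x| ≤ N
  norm_iteratedFDeriv_two_le : ∀ x ∈ ball 0 1, ‖iteratedFDeriv ℝ 2 f x‖ ≤ M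
  norm_iteratedFDeriv_three_le : ∀ x ∈ ball 0 1, ‖iteratedFDeriv ℝ 3 f x‖ ≤ M

namespace IsSolution

variable {n : ℕ} {f g : EuclideanSpace ℝ (Fin n) → ℝ} {c d τ N M cbar : ℝ}
  {x : EuclideanSpace ℝ (Fin n)}

lemma trace_inv_Hess_le (S : IsSolution n f g c d τ N M) (hτ : 0 < τ) (hx : x ∈ ball 0 1) :
    (Hess n g x)⁻¹.trace ≤ c / τ := by
  rw [le_div_iff₀' hτ, ← S.equation x hx]
  exact mul_trace_inv_le hτ.le S.nonneg (S.posDef x hx) (S.posDef_data x hx).posSemidef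

lemma isUniformlyConvex (S : IsSolution n f g c d τ N M) (hτ : 0 < τ) (hcbar : 0 < cbar)
    (hc : c ≤ cbar) : IsUniformlyConvex (ball 0 1) g (τ / cbar) where
  isOpen := isOpen_ball
  convex := convex_ball _ _
  contDiffOn := S.contDiffOn
  pos := by positivity
  le_inner x hx v := by
    have h_form : 0 ≤ v.ofLp ⬝ᵥ Hess n g x *ᵥ v.ofLp :=
      (S.posDef x hx).posSemidef.dotProduct_mulVec_nonneg v
    have h_trace : (Hess n g x)⁻¹.trace ≤ cbar / τ :=
      (S.trace_inv_Hess_le hτ hx).trans (by gcongr)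
    have h_le : ‖v‖ ^ 2 ≤ cbar / τ * (v.ofLp ⬝ᵥ Hess n g x *ᵥ v.ofLp) := by
      rw [← real_inner_self_eq_norm_sq]
      exact (dotProduct_self_le_trace_inv_mul (S.posDef x hx) v).trans
        (mul_le_mul_of_nonneg_right h_trace h_form)
    rw [← toEuclideanCLM_Hess (S.contDiffOn.contDiffAt (isOpen_ball.mem_nhds hx)),
      real_inner_comm, inner_toEuclideanCLM]
    calc τ / cbar * ‖v‖ ^ 2
        ≤ τ / cbar * (cbar / τ * (v.ofLp ⬝ᵥ Hess n g x *ᵥ v.ofLp)) := by gcongr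
      _ = v.ofLp ⬝ᵥ Hess n g x *ᵥ v.ofLp := by field_simp

lemma norm_Hess_data_le (S : IsSolution n f g c d τ N M) (hM : 0 ≤ M) (hx : x ∈ ball 0 1) :
    ‖Hess n f x‖ ≤ n * M := by
  simpa using frobenius_norm_le_of_abs_apply_le hM
    (abs_Hess_apply_le (S.norm_iteratedFDeriv_two_le x hx))

lemma norm_partialDeriv_Hess_data_le (S : IsSolution n f g c d τ N M) (hM : 0 ≤ M)
    (hx : x ∈ ball 0 1) (k : Fin n) : ‖partialDeriv k (Hess n f) x‖ ≤ n * M := by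
  simpa using frobenius_norm_le_of_abs_apply_le hM (abs_partialDeriv_Hess_apply_le isOpen_ball
    S.contDiffOn_data hx (S.norm_iteratedFDeriv_three_le x hx) k)

lemma isDualSystem (S : IsSolution n f g c d τ N M) (hτ : 0 < τ) (hM : 0 ≤ M) {κ : ℝ}
    (hg : IsUniformlyConvex (ball 0 1) g κ) (hc : c ≤ cbar) :
    IsDualSystem (∇ g '' ball 0 1) (dualHessian hg)
      (fun y => Hess n f (hg.gradientChart.symm y))
      (fun k y => partialDeriv k (Hess n f) (hg.gradientChart.symm y)) c d τ
      (max (cbar / τ) (n * M)) where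
  isOpen := hg.isOpen_image_gradient isOpen_ball subset_rfl
  contDiffOn_H := contDiffOn_dualHessian hg
  contDiffOn_A :=
    contDiffOn_comp_gradientChart_symm hg (contDiffOn_Hess isOpen_ball S.contDiffOn_data)
  posDef y hy := (S.posDef _ (hg.gradientChart_symm_mem hy)).inv
  posSemidef y hy := (S.posDef_data _ (hg.gradientChart_symm_mem hy)).posSemidef
  partialDeriv_H y hy := partialDeriv_dualHessian_apply_comm hg hy
  partialDeriv_A y hy := partialDeriv_comp_gradientChart_symm hg
    (contDiffOn_Hess isOpen_ball S.contDiffOn_data) hy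
  equation y hy := by
    rw [← S.equation _ (hg.gradientChart_symm_mem hy), dualHessian, trace_mul_comm,
      det_nonsing_inv, Ring.inverse_eq_inv', mul_div_assoc, div_eq_mul_inv]
  norm_H_le y hy := by
    have hx := hg.gradientChart_symm_mem hy
    calc ‖dualHessian hg y‖ ≤ (dualHessian hg y).trace :=
          frobenius_norm_le_trace_of_posSemidef (S.posDef _ hx).inv.posSemidef
      _ ≤ c / τ := S.trace_inv_Hess_le hτ hx
      _ ≤ cbar / τ := by gcongr
      _ ≤ _ := le_max_left _ _
  norm_A_le y hy :=
    (S.norm_Hess_data_le hM (hg.gradientChart_symm_mem hy)).trans (le_max_right _ _)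
  norm_t_le y hy k :=
    (S.norm_partialDeriv_Hess_data_le hM (hg.gradientChart_symm_mem hy) k).trans (le_max_right _ _)

end IsSolution

end Equation

/-! ### Integral estimates on gradient images -/

section Segments

variable {E F : Type*} [NormedAddCommGroup E] [NormedSpace ℝ E] [NormedAddCommGroup F]
  [NormedSpace ℝ F] {Ω D A : Set E}

lemma enorm_sub_le_lintegral_segment {u : E → F} {y z : E} (hΩ : IsOpen Ω)
    (hu : ContDiffOn ℝ 1 u Ω) (h_seg : segment ℝ y z ⊆ Ω) :
    ‖u z - u y‖ₑ ≤
      ‖z - y‖ₑ * ∫⁻ s in Icc (0 : ℝ) 1, ‖fderiv ℝ u ((1 - s) • y + s • z)‖ₑ := by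
  have mem_segment {s : ℝ} (hs : s ∈ Icc (0 : ℝ) 1) : AffineMap.lineMap y z s ∈ Ω :=
    h_seg (segment_eq_image_lineMap ℝ y z ▸ mem_image_of_mem _ hs)
  have contDiffOn_line : ContDiffOn ℝ 1 (fun s : ℝ => u (AffineMap.lineMap y z s)) (Icc 0 1) :=
    hu.comp (ContinuousAffineMap.lineMap (R := ℝ) y z).contDiff.contDiffOn fun _ => mem_segment
  have ftc := enorm_sub_le_lintegral_derivWithin_Icc_of_contDiffOn_Icc contDiffOn_line zero_le_one
  rw [AffineMap.lineMap_apply_one, AffineMap.lineMap_apply_zero] at ftc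
  rw [← lintegral_const_mul' _ _ enorm_ne_top]
  refine ftc.trans (setLIntegral_mono' measurableSet_Icc fun s hs => ?_)
  have hasDerivAt_line := ((hu.differentiableOn one_ne_zero).differentiableAt
    (hΩ.mem_nhds (mem_segment hs))).hasFDerivAt.comp_hasDerivAt s AffineMap.hasDerivAt_lineMap
  rw [← Function.comp_def u, HasDerivWithinAt.derivWithin hasDerivAt_line.hasDerivWithinAt
    (uniqueDiffOn_Icc_zero_one s hs), mul_comm, AffineMap.lineMap_apply_module]
  exact ContinuousLinearMap.le_opENorm _ _

variable [FiniteDimensional ℝ E] [MeasurableSpace E] [BorelSpace E] (μ : Measure E)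
  [μ.IsAddHaarMeasure]

lemma lintegral_comp_smul_add_le {G : E → ENNReal} (hG : Measurable G) {r : ℝ} (hr : 1 / 2 ≤ r)
    (c : E) : ∫⁻ y, G (r • y + c) ∂μ ≤ 2 ^ Module.finrank ℝ E * ∫⁻ y, G y ∂μ := by
  have hr_pos : 0 < r := by linarith
  have rescale : ∫⁻ y, G (r • y + c) ∂μ = ∫⁻ y, G (y + c) ∂(μ.map (r • ·)) := by
    rw [lintegral_map (by fun_prop) (by fun_prop)]
  rw [rescale, Measure.map_addHaar_smul _ hr_pos.ne', lintegral_smul_measure,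
    lintegral_add_right_eq_self, smul_eq_mul, abs_of_pos (by positivity), ← inv_pow,
    ENNReal.ofReal_pow (by positivity)]
  gcongr
  rw [← ENNReal.ofReal_ofNat]
  exact ENNReal.ofReal_le_ofReal ((inv_le_comm₀ hr_pos two_pos).2 (by linarith))

/-- For `s ≥ 1 / 2` substitute in the variable `z`, otherwise in the variable `y`: the Jacobian is
at least `2⁻ⁿ` either way. -/
lemma lintegral_lintegral_segment_le {G : E → ENNReal} (hG : Measurable G) (A : Set E) :
    ∫⁻ y in A, ∫⁻ z in A, (∫⁻ s in Icc (0 : ℝ) 1, G ((1 - s) • y + s • z)) ∂μ ∂μ ≤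
      2 ^ Module.finrank ℝ E * μ A * ∫⁻ y, G y ∂μ := by
  have swap_inner (y : E) : ∫⁻ z in A, (∫⁻ s in Icc (0 : ℝ) 1, G ((1 - s) • y + s • z)) ∂μ =
      ∫⁻ s in Icc (0 : ℝ) 1, ∫⁻ z in A, G ((1 - s) • y + s • z) ∂μ := by
    refine lintegral_lintegral_swap (Measurable.aemeasurable ?_)
    simp only [Function.uncurry_def]
    fun_prop
  have average_le {c : ℝ} (hc : 1 / 2 ≤ c) (v : E → E) :
      ∫⁻ y in A, ∫⁻ z in A, G (c • z + v y) ∂μ ∂μ ≤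
        2 ^ Module.finrank ℝ E * μ A * ∫⁻ y, G y ∂μ :=
    calc ∫⁻ y in A, ∫⁻ z in A, G (c • z + v y) ∂μ ∂μ
        ≤ ∫⁻ _ in A, 2 ^ Module.finrank ℝ E * ∫⁻ y, G y ∂μ ∂μ :=
          lintegral_mono fun y =>
            (setLIntegral_le_lintegral _ _).trans (lintegral_comp_smul_add_le μ hG hc _)
      _ = _ := by rw [setLIntegral_const]; ring
  simp_rw [swap_inner]
  rw [lintegral_lintegral_swap]
  swap
  · refine (Measurable.lintegral_prod_right' (f := fun p : (E × ℝ) × E =>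
      G ((1 - p.1.2) • p.1.1 + p.1.2 • p.2)) ?_).aemeasurable
    fun_prop
  calc ∫⁻ s in Icc (0 : ℝ) 1, ∫⁻ y in A, ∫⁻ z in A, G ((1 - s) • y + s • z) ∂μ ∂μ
      ≤ ∫⁻ _ in Icc (0 : ℝ) 1, 2 ^ Module.finrank ℝ E * μ A * ∫⁻ y, G y ∂μ := by
        refine setLIntegral_mono' measurableSet_Icc fun s _ => ?_
        rcases le_total (1 / 2) s with hs | hs
        · simp_rw [add_comm ((1 - s) • _)]
          exact average_le hs _
        · rw [lintegral_lintegral_swap]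
          · exact average_le (by linarith) _
          · refine Measurable.aemeasurable ?_
            simp only [Function.uncurry_def]
            fun_prop
    _ = _ := by rw [setLIntegral_const]; simp

lemma lintegral_lintegral_enorm_sub_le [CompleteSpace F] {u : E → F} {Y : ℝ} (hΩ : IsOpen Ω)
    (hu : ContDiffOn ℝ 1 u Ω) (hDΩ : D ⊆ Ω) (hD : MeasurableSet D) (hA : MeasurableSet A)
    (hAD : convexHull ℝ A ⊆ D) (hY : ∀ y ∈ A, ‖y‖ ≤ Y) :
    ∫⁻ y in A, ∫⁻ z in A, ‖u z - u y‖ₑ ∂μ ∂μ ≤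
      ENNReal.ofReal (2 * Y) * (2 ^ Module.finrank ℝ E * μ A) * ∫⁻ y in D, ‖fderiv ℝ u y‖ₑ ∂μ := by
  borelize F
  set G : E → ENNReal := D.indicator fun y => ‖fderiv ℝ u y‖ₑ
  have hG : Measurable G := (measurable_fderiv ℝ u).enorm.indicator hD
  have along_segment {y z : E} (hy : y ∈ A) (hz : z ∈ A) : ‖u z - u y‖ₑ ≤
      ENNReal.ofReal (2 * Y) * ∫⁻ s in Icc (0 : ℝ) 1, G ((1 - s) • y + s • z) := by
    have segment_subset : segment ℝ y z ⊆ D := ((convex_convexHull ℝ A).segment_subset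
      (subset_convexHull ℝ A hy) (subset_convexHull ℝ A hz)).trans hAD
    refine (enorm_sub_le_lintegral_segment hΩ hu (segment_subset.trans hDΩ)).trans ?_
    refine mul_le_mul' ?_ (setLIntegral_congr_fun measurableSet_Icc fun s hs => ?_).le
    · rw [← ofReal_norm]
      exact ENNReal.ofReal_le_ofReal (by linarith [norm_sub_le z y, hY y hy, hY z hz])
    · have : (1 - s) • y + s • z ∈ segment ℝ y z :=
        ⟨1 - s, s, by linarith [hs.2], hs.1, by ring, rfl⟩
      exact (indicator_of_mem (segment_subset this) fun y => ‖fderiv ℝ u y‖ₑ).symm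
  calc ∫⁻ y in A, ∫⁻ z in A, ‖u z - u y‖ₑ ∂μ ∂μ
      ≤ ∫⁻ y in A, ∫⁻ z in A, ENNReal.ofReal (2 * Y) *
          (∫⁻ s in Icc (0 : ℝ) 1, G ((1 - s) • y + s • z)) ∂μ ∂μ :=
        setLIntegral_mono' hA fun y hy => setLIntegral_mono' hA fun z hz => along_segment hy hz
    _ = ENNReal.ofReal (2 * Y) * ∫⁻ y in A, ∫⁻ z in A,
          (∫⁻ s in Icc (0 : ℝ) 1, G ((1 - s) • y + s • z)) ∂μ ∂μ := by
        simp_rw [lintegral_const_mul' _ _ ENNReal.ofReal_ne_top]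
    _ ≤ ENNReal.ofReal (2 * Y) * (2 ^ Module.finrank ℝ E * μ A * ∫⁻ y, G y ∂μ) := by
        gcongr
        exact lintegral_lintegral_segment_le μ hG A
    _ = _ := by rw [lintegral_indicator hD, ← mul_assoc]

/-- Integrate `exp (-u z) * u y ≤ 1 + |u z - u y|` over `A × A`. -/
lemma lintegral_exp_neg_mul_lintegral_le {u : E → ℝ} {Y : ℝ} (hΩ : IsOpen Ω)
    (hu : ContDiffOn ℝ 1 u Ω) (hDΩ : D ⊆ Ω) (hD : MeasurableSet D) (hA : MeasurableSet A)
    (hAD : convexHull ℝ A ⊆ D) (hY : ∀ y ∈ A, ‖y‖ ≤ Y) (h_nonneg : ∀ y ∈ A, 0 ≤ u y) :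
    (∫⁻ z in A, ENNReal.ofReal (Real.exp (-u z)) ∂μ) * ∫⁻ y in A, ENNReal.ofReal (u y) ∂μ ≤
      μ A * μ A +
        ENNReal.ofReal (2 * Y) * (2 ^ Module.finrank ℝ E * μ A) *
          ∫⁻ y in D, ‖fderiv ℝ u y‖ₑ ∂μ := by
  have pointwise {y z : E} (hz : z ∈ A) :
      ENNReal.ofReal (Real.exp (-u z)) * ENNReal.ofReal (u y) ≤ 1 + ‖u z - u y‖ₑ := by
    have exp_mul_le : Real.exp (-u z) * u z ≤ 1 := by
      rw [Real.exp_neg, inv_mul_le_one₀ (Real.exp_pos _)]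
      linarith [Real.add_one_le_exp (u z)]
    have exp_mul_sub_le : Real.exp (-u z) * (u y - u z) ≤ |u z - u y| := by
      rw [abs_sub_comm]
      exact (mul_le_mul_of_nonneg_left (le_abs_self _) (Real.exp_pos _).le).trans
        (mul_le_of_le_one_left (abs_nonneg _) (Real.exp_le_one_iff.2 (by linarith [h_nonneg z hz])))
    rw [← ENNReal.ofReal_mul (Real.exp_pos _).le, ← ofReal_norm, ← ENNReal.ofReal_one,
      ← ENNReal.ofReal_add zero_le_one (norm_nonneg _), Real.norm_eq_abs]
    exact ENNReal.ofReal_le_ofReal (by linarith)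
  calc (∫⁻ z in A, ENNReal.ofReal (Real.exp (-u z)) ∂μ) * ∫⁻ y in A, ENNReal.ofReal (u y) ∂μ
      ≤ ∫⁻ y in A, ∫⁻ z in A,
          ENNReal.ofReal (Real.exp (-u z)) * ENNReal.ofReal (u y) ∂μ ∂μ :=
        (lintegral_const_mul_le _ _).trans (lintegral_mono fun y => lintegral_mul_const_le _ _)
    _ ≤ ∫⁻ y in A, ∫⁻ z in A, (1 + ‖u z - u y‖ₑ) ∂μ ∂μ :=
        lintegral_mono fun y => setLIntegral_mono' hA fun z hz => pointwise hz
    _ = μ A * μ A + ∫⁻ y in A, ∫⁻ z in A, ‖u z - u y‖ₑ ∂μ ∂μ := by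
        simp_rw [lintegral_add_left measurable_const, setLIntegral_const, one_mul]
    _ ≤ _ := by
        gcongr
        exact lintegral_lintegral_enorm_sub_le μ hΩ hu hDΩ hD hA hAD hY

end Segments

section EnergyField

variable {E : Type*} [NormedAddCommGroup E] [NormedSpace ℝ E] [FiniteDimensional ℝ E]
  [MeasurableSpace E] [BorelSpace E] {Ω D W : Set E} {η u : E → ℝ} {V : E → E} {K L : ℝ}

lemma IsEnergyField.lintegral_enorm_fderiv_le (μ : Measure E) [μ.IsAddHaarMeasure]
    (h : IsEnergyField Ω u V K) (hW : W ⊆ Ω) (hη : IsCutoff W L η) (hD : MeasurableSet D)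
    (hηD : ∀ y ∈ D, η y = 1) :
    ∫⁻ y in D, ‖fderiv ℝ u y‖ₑ ∂μ ≤ μ D + ENNReal.ofReal (6 * K ^ 4 * (1 + L ^ 2)) * μ W := by
  have energy_le := h.lintegral_energy_le μ hW hη (le_refl 0)
  simp only [Real.rpow_zero, one_mul, ENNReal.ofReal_one, setLIntegral_one, add_zero, mul_one]
    at energy_le
  calc ∫⁻ y in D, ‖fderiv ℝ u y‖ₑ ∂μ
      ≤ ∫⁻ y in D, (1 + ENNReal.ofReal (η y ^ 2 * ‖fderiv ℝ u y‖ ^ 2)) ∂μ := by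
        refine setLIntegral_mono' hD fun y hy => ?_
        rw [hηD y hy, ← ofReal_norm, ← ENNReal.ofReal_one,
          ← ENNReal.ofReal_add zero_le_one (by positivity)]
        exact ENNReal.ofReal_le_ofReal (by nlinarith [sq_nonneg (‖fderiv ℝ u y‖ - 1)])
    _ = μ D + ∫⁻ y in D, ENNReal.ofReal (η y ^ 2 * ‖fderiv ℝ u y‖ ^ 2) ∂μ := by
        rw [lintegral_add_left measurable_const, setLIntegral_one]
    _ ≤ _ := by
        gcongr
        exact (setLIntegral_le_lintegral _ _).trans energy_le

end EnergyField

section CutoffConstruction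

lemma deriv_smoothTransition_eq_zero {x : ℝ} (hx : x ∉ Icc (0 : ℝ) 1) :
    deriv Real.smoothTransition x = 0 := by
  rcases not_and_or.1 hx with hx | hx
  · refine (Filter.EventuallyEq.deriv_eq ?_).trans (deriv_const x 0)
    filter_upwards [Iio_mem_nhds (not_le.1 hx)] with z hz
    exact Real.smoothTransition.zero_of_nonpos hz.le
  · refine (Filter.EventuallyEq.deriv_eq ?_).trans (deriv_const x 1)
    filter_upwards [Ioi_mem_nhds (not_le.1 hx)] with z hz
    exact Real.smoothTransition.one_of_one_le hz.le

lemma exists_abs_deriv_smoothTransition_le :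
    ∃ S, ∀ x, |deriv Real.smoothTransition x| ≤ S :=
  (Real.smoothTransition.contDiff (n := 1).continuous_deriv le_rfl).bounded_above_of_compact_support
    (.intro isCompact_Icc fun _ => deriv_smoothTransition_eq_zero)

section radialProfile

variable {E : Type*} [NormedAddCommGroup E] {c x : E} {r R : ℝ}

/-- The radial profile equal to `1` on the sphere of radius `r` and to `0` on the sphere of radius
`R`; it is quadratic in the distance to `c`, hence smooth. -/
noncomputable def radialProfile (c : E) (r R : ℝ) (x : E) : ℝ :=
  (R ^ 2 - r ^ 2)⁻¹ * (R ^ 2 - ‖x - c‖ ^ 2)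

lemma radialProfile_neg (hr : 0 ≤ r) (hR : r < R) (hx : R < ‖x - c‖) :
    radialProfile c r R x < 0 :=
  mul_neg_of_pos_of_neg (inv_pos.2 (by nlinarith)) (by nlinarith)

lemma one_le_radialProfile (hr : 0 ≤ r) (hR : r < R) (hx : ‖x - c‖ ≤ r) :
    1 ≤ radialProfile c r R x := by
  rw [radialProfile, inv_mul_eq_div, one_le_div (by nlinarith)]
  nlinarith [norm_nonneg (x - c)]

variable [InnerProductSpace ℝ E]

lemma contDiff_radialProfile (c : E) (r R : ℝ) : ContDiff ℝ 1 (radialProfile c r R) :=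
  contDiff_const.mul (contDiff_const.sub ((contDiff_id.sub contDiff_const).norm_sq ℝ))

lemma norm_fderiv_radialProfile_le (hr : 0 ≤ r) (hR : r < R) (hx : ‖x - c‖ ≤ R) :
    ‖fderiv ℝ (radialProfile c r R) x‖ ≤ 2 / (R - r) := by
  have hD : 0 < R ^ 2 - r ^ 2 := by nlinarith
  have hasFDerivAt_profile : HasFDerivAt (radialProfile c r R)
      ((R ^ 2 - r ^ 2)⁻¹ • -(2 • innerSL ℝ (x - c)) : E →L[ℝ] ℝ) x := by
    change HasFDerivAt (fun y => (R ^ 2 - r ^ 2)⁻¹ * (R ^ 2 - ‖y - c‖ ^ 2)) _ x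
    simpa using ((((hasFDerivAt_id x).sub_const c).norm_sq).const_sub (R ^ 2)).const_mul
      (R ^ 2 - r ^ 2)⁻¹
  rw [hasFDerivAt_profile.fderiv, norm_smul, norm_neg, ← Nat.cast_smul_eq_nsmul ℝ, norm_smul,
    innerSL_apply_norm, Real.norm_of_nonneg (inv_nonneg.2 hD.le), inv_mul_eq_div,
    div_le_div_iff₀ hD (by linarith)]
  norm_num
  nlinarith

end radialProfile

lemma exists_isCutoff_ball (E : Type*) [NormedAddCommGroup E] [InnerProductSpace ℝ E]
    [FiniteDimensional ℝ E] : ∃ S, ∀ (c : E) (r R : ℝ), 0 ≤ r → r < R →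
      ∃ η, IsCutoff (ball c R) (S / (R - r)) η ∧ ∀ x ∈ closedBall c r, η x = 1 := by
  obtain ⟨S, hS⟩ := exists_abs_deriv_smoothTransition_le
  refine ⟨4 * S, fun c r R hr hrR => ?_⟩
  set m := (r + R) / 2 with hm
  have hrm : r < m := by linarith
  set η : E → ℝ := Real.smoothTransition ∘ radialProfile c r m
  have tsupport_subset : tsupport η ⊆ closedBall c m := by
    refine closure_minimal (fun x hx => ?_) isClosed_closedBall
    by_contra h
    rw [mem_closedBall_iff_norm, not_le] at h
    exact hx (Real.smoothTransition.zero_of_nonpos (radialProfile_neg hr hrm h).le)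
  have norm_fderiv_eq (x : E) : ‖fderiv ℝ η x‖ =
      |deriv Real.smoothTransition (radialProfile c r m x)| *
        ‖fderiv ℝ (radialProfile c r m) x‖ := by
    have h := (((Real.smoothTransition.contDiff (n := 1)).differentiable
      one_ne_zero).differentiableAt.hasDerivAt).comp_hasFDerivAt x
      (((contDiff_radialProfile c r m).differentiable one_ne_zero).differentiableAt.hasFDerivAt)
    rw [h.fderiv, norm_smul, Real.norm_eq_abs]
  have S_nonneg : 0 ≤ S := (abs_nonneg _).trans (hS 0)
  refine ⟨η, ⟨Real.smoothTransition.contDiff.comp (contDiff_radialProfile c r m),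
    (isCompact_closedBall c m).of_isClosed_subset (isClosed_tsupport η) tsupport_subset,
    tsupport_subset.trans (closedBall_subset_ball (by linarith)),
    fun x => Real.smoothTransition.nonneg _, fun x => Real.smoothTransition.le_one _,
    fun x => ?_⟩, fun x hx => Real.smoothTransition.one_of_one_le
      (one_le_radialProfile hr hrm (mem_closedBall_iff_norm.1 hx))⟩
  rw [norm_fderiv_eq]
  rcases le_or_gt ‖x - c‖ m with hx | hx
  · calc _ ≤ S * (2 / (m - r)) :=
          mul_le_mul (hS _) (norm_fderiv_radialProfile_le hr hrm hx) (norm_nonneg _) S_nonneg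
      _ = 4 * S / (R - r) := by
          rw [show m - r = (R - r) / 2 by ring]
          field_simp
          norm_num
  · rw [deriv_smoothTransition_eq_zero fun h => (radialProfile_neg hr hrm hx).not_ge h.1]
    simpa using div_nonneg (by positivity) (by linarith)

variable {E F : Type*} [NormedAddCommGroup E] [NormedAddCommGroup F]

lemma tsupport_indicator_comp_symm_subset {η : F → ℝ} {e : OpenPartialHomeomorph F E}
    (hη : HasCompactSupport η) (hs : tsupport η ⊆ e.source) :
    tsupport (e.target.indicator (η ∘ e.symm)) ⊆ e '' tsupport η := by
  refine closure_minimal (fun y hy => ?_)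
    (IsCompact.image_of_continuousOn hη (e.continuousOn.mono hs)).isClosed
  have hyt : y ∈ e.target := mem_of_indicator_ne_zero hy
  rw [Function.mem_support, indicator_of_mem hyt] at hy
  exact ⟨e.symm y, subset_tsupport η hy, e.right_inv hyt⟩

variable [NormedSpace ℝ E] [NormedSpace ℝ F]

lemma IsCutoff.indicator_comp_symm {W : Set F} {L Λ : ℝ} {η : F → ℝ} (hη : IsCutoff W L η)
    {e : OpenPartialHomeomorph F E} (hW : W ⊆ e.source) (he : ContDiffOn ℝ 1 e.symm e.target)
    (hΛ : 0 ≤ Λ) (h_slope : ∀ y ∈ e.target, ‖fderiv ℝ e.symm y‖ ≤ Λ) :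
    IsCutoff (e '' W) (L * Λ) (e.target.indicator (η ∘ e.symm)) := by
  set ζ := e.target.indicator (η ∘ e.symm)
  have hs : tsupport η ⊆ e.source := hη.tsupport_subset.trans hW
  have tsupport_subset : tsupport ζ ⊆ e '' tsupport η :=
    tsupport_indicator_comp_symm_subset hη.hasCompactSupport hs
  have ζ_eventuallyEq {y : E} (hy : y ∈ e.target) : ζ =ᶠ[nhds y] η ∘ e.symm :=
    (eqOn_indicator (s := e.target)).eventuallyEq_of_mem (e.open_target.mem_nhds hy)
  have notMem_tsupport {y : E} (hy : y ∉ e.target) : y ∉ tsupport ζ := fun h => by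
    obtain ⟨x, hx, rfl⟩ := tsupport_subset h
    exact hy (e.map_source (hs hx))
  have diff_symm {y : E} (hy : y ∈ e.target) : ContDiffAt ℝ 1 e.symm y :=
    he.contDiffAt (e.open_target.mem_nhds hy)
  refine ⟨contDiff_iff_contDiffAt.2 fun y => ?_,
    (IsCompact.image_of_continuousOn hη.hasCompactSupport
      (e.continuousOn.mono hs)).of_isClosed_subset (isClosed_tsupport ζ) tsupport_subset,
    tsupport_subset.trans (image_mono hη.tsupport_subset),
    fun y => indicator_nonneg (fun _ _ => hη.nonneg _) y,
    fun y => indicator_le' (fun _ _ => hη.le_one _) (fun _ _ => zero_le_one) y, fun y => ?_⟩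
  · by_cases hy : y ∈ e.target
    · exact (hη.contDiff.contDiffAt.comp y (diff_symm hy)).congr_of_eventuallyEq (ζ_eventuallyEq hy)
    · exact contDiffAt_const.congr_of_eventuallyEq
        (notMem_tsupport_iff_eventuallyEq.1 (notMem_tsupport hy))
  · have L_nonneg : 0 ≤ L := (norm_nonneg _).trans (hη.norm_fderiv_le 0)
    by_cases hy : y ∈ e.target
    · rw [(ζ_eventuallyEq hy).fderiv_eq, fderiv_comp y
        (hη.contDiff.differentiable one_ne_zero).differentiableAt
        ((diff_symm hy).differentiableAt one_ne_zero)]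
      exact (ContinuousLinearMap.opNorm_comp_le _ _).trans
        (mul_le_mul (hη.norm_fderiv_le _) (h_slope y hy) (norm_nonneg _) L_nonneg)
    · rw [fderiv_of_notMem_tsupport ℝ (notMem_tsupport hy), norm_zero]
      positivity

end CutoffConstruction

section DualBound

variable {E : Type*} [NormedAddCommGroup E] [InnerProductSpace ℝ E] [FiniteDimensional ℝ E]
  {g u : E → ℝ} {V : E → E} {s : Set E} {x₀ : E} {κ N b K : ℝ}

lemma exists_isCutoff_image_gradient (E : Type*) [NormedAddCommGroup E] [InnerProductSpace ℝ E]
    [FiniteDimensional ℝ E] : ∃ S, ∀ {g : E → ℝ} {s : Set E} {κ : ℝ} {x₀ : E} {r R : ℝ},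
      IsUniformlyConvex s g κ → 0 ≤ r → r < R → ball x₀ R ⊆ s →
      ∃ η, IsCutoff (∇ g '' ball x₀ R) (S / (R - r) * κ⁻¹) η ∧
        ∀ y ∈ ∇ g '' closedBall x₀ r, η y = 1 := by
  obtain ⟨S, hS⟩ := exists_isCutoff_ball E
  refine ⟨S, fun {g s κ x₀ r R} hg hr hrR hs => ?_⟩
  obtain ⟨η, hη, η_eq_one⟩ := hS x₀ r R hr hrR
  refine ⟨_, hη.indicator_comp_symm (e := hg.gradientChart) hs
    (hg.contDiffOn_gradientChart_symm.of_le (by norm_cast))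
    (inv_nonneg.2 hg.pos.le) fun y => hg.norm_fderiv_gradientChart_symm_le, ?_⟩
  rintro _ ⟨x, hx, rfl⟩
  have hxs : x ∈ s := hs (closedBall_subset_ball hrR hx)
  refine (indicator_of_mem (mem_image_of_mem (∇ g) hxs) _).trans ?_
  rw [Function.comp_apply, hg.gradientChart_symm_apply hxs, η_eq_one x hx]

namespace IsUniformlyConvex

lemma norm_le_of_mem_image_gradient (hg : IsUniformlyConvex s g κ) {R : ℝ} (hR : 0 < R)
    (hgN : ∀ z ∈ s, |g z| ≤ N) (hs : ball x₀ (4 * R) ⊆ s) {y : E}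
    (hy : y ∈ ∇ g '' ball x₀ (2 * R)) : ‖y‖ ≤ 2 * N / R := by
  obtain ⟨x, hx, rfl⟩ := hy
  exact hg.norm_gradient_le hR
    ((closedBall_subset_ball' (by linarith [mem_ball.1 hx])).trans hs) hgN

variable [MeasurableSpace E] [BorelSpace E] (μ : Measure E) [μ.IsAddHaarMeasure]

lemma ofReal_exp_neg_mul_measure_le_lintegral (hg : IsUniformlyConvex s g κ) {t : Set E}
    (ht : IsOpen t) (hts : t ⊆ s)
    (hu : ∀ y ∈ ∇ g '' s, u y ≤ b - Real.log (fderiv ℝ hg.gradientChart.symm y).det) :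
    ENNReal.ofReal (Real.exp (-b)) * μ t ≤
      ∫⁻ y in ∇ g '' t, ENNReal.ofReal (Real.exp (-u y)) ∂μ := by
  calc ENNReal.ofReal (Real.exp (-b)) * μ t
      ≤ ENNReal.ofReal (Real.exp (-b)) * ∫⁻ y in ∇ g '' t,
          ENNReal.ofReal |(fderiv ℝ hg.gradientChart.symm y).det| ∂μ := by
        gcongr
        exact hg.measure_le_lintegral_abs_det_fderiv_gradientChart_symm μ ht hts
    _ = ∫⁻ y in ∇ g '' t, ENNReal.ofReal
          (Real.exp (-b) * |(fderiv ℝ hg.gradientChart.symm y).det|) ∂μ := by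
        simp_rw [ENNReal.ofReal_mul (Real.exp_pos _).le,
          lintegral_const_mul' _ _ ENNReal.ofReal_ne_top]
    _ ≤ _ := by
        refine setLIntegral_mono' (hg.isOpen_image_gradient ht hts).measurableSet fun y hy =>
          ENNReal.ofReal_le_ofReal ?_
        calc Real.exp (-b) * |(fderiv ℝ hg.gradientChart.symm y).det|
            ≤ Real.exp (-b) * Real.exp (Real.log |(fderiv ℝ hg.gradientChart.symm y).det|) := by
              gcongr
              exact Real.le_exp_log _
          _ ≤ Real.exp (-u y) := by
              rw [← Real.exp_add, Real.exp_le_exp, Real.log_abs]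
              linarith [hu y (image_mono hts hy)]

lemma exp_neg_mul_lintegral_image_gradient_le (hg : IsUniformlyConvex s g κ) {R ρ L : ℝ}
    {η : E → ℝ} (hR : 0 < R) (hgN : ∀ z ∈ s, |g z| ≤ N) (hs : ball x₀ (4 * R) ⊆ s)
    (hV : IsEnergyField (∇ g '' s) u V K)
    (hu : ∀ y ∈ ∇ g '' s, u y ≤ b - Real.log (fderiv ℝ hg.gradientChart.symm y).det)
    (hρ : 0 < ρ) (hρR : ρ ≤ R / 2) (h_small : 2 * (2 * N / R) * ρ < κ / 8 * R ^ 2)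
    (hη : IsCutoff (∇ g '' ball x₀ (2 * R)) L η) (η_eq_one : ∀ y ∈ ∇ g '' closedBall x₀ R, η y = 1)
    {m : ENNReal} (hm : m = μ (closedBall 0 (2 * N / R))) :
    ENNReal.ofReal (Real.exp (-b)) * μ (ball 0 ρ) *
        ∫⁻ y in ∇ g '' ball x₀ ρ, ENNReal.ofReal (u y) ∂μ ≤
      m * m + ENNReal.ofReal (2 * (2 * N / R)) * (2 ^ Module.finrank ℝ E * m) *
        (m + ENNReal.ofReal (6 * K ^ 4 * (1 + L ^ 2)) * m) := by
  have ball_subset {r : ℝ} (hr : r ≤ 4 * R) : ball x₀ r ⊆ s := (ball_subset_ball hr).trans hs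
  have image_mono' {r r' : ℝ} (hr : r ≤ r') : ∇ g '' ball x₀ r ⊆ ∇ g '' ball x₀ r' :=
    image_mono (ball_subset_ball hr)
  have norm_le : ∀ y ∈ ∇ g '' ball x₀ (2 * R), ‖y‖ ≤ 2 * N / R := fun y =>
    hg.norm_le_of_mem_image_gradient hR hgN hs
  have measure_le {r : ℝ} (hr : r ≤ 2 * R) : μ (∇ g '' ball x₀ r) ≤ m := hm ▸ measure_mono
    fun y hy => mem_closedBall_zero_iff.2 (norm_le y (image_mono' hr hy))
  have measurableSet_image {r : ℝ} (hr : r ≤ 4 * R) : MeasurableSet (∇ g '' ball x₀ r) :=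
    (hg.isOpen_image_gradient isOpen_ball (ball_subset hr)).measurableSet
  have hull_subset : convexHull ℝ (∇ g '' ball x₀ ρ) ⊆ ∇ g '' ball x₀ R :=
    hg.convexHull_image_gradient_subset hR
      ((closedBall_subset_ball (by linarith)).trans hs) hρ hρR
      (fun x hx => norm_le _ (mem_image_of_mem _ (ball_subset_ball (by linarith) hx))) h_small
  have energy := hV.lintegral_enorm_fderiv_le μ (image_mono (ball_subset (by linarith))) hη
    (measurableSet_image (r := R) (by linarith))
    fun y hy => η_eq_one y (image_mono ball_subset_closedBall hy)
  calc _ ≤ (∫⁻ y in ∇ g '' ball x₀ ρ, ENNReal.ofReal (Real.exp (-u y)) ∂μ) *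
        ∫⁻ y in ∇ g '' ball x₀ ρ, ENNReal.ofReal (u y) ∂μ := by
        rw [← Measure.addHaar_ball_center μ x₀]
        gcongr
        exact hg.ofReal_exp_neg_mul_measure_le_lintegral μ isOpen_ball
          (ball_subset (by linarith)) hu
    _ ≤ _ := lintegral_exp_neg_mul_lintegral_le μ hV.isOpen hV.contDiffOn
        (image_mono (ball_subset (by linarith))) (measurableSet_image (r := R) (by linarith))
        (measurableSet_image (r := ρ) (by linarith)) hull_subset
        (fun y hy => norm_le y (image_mono' (by linarith) hy))
        fun y hy => zero_le_one.trans (hV.one_le y (image_mono (ball_subset (by linarith)) hy))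
    _ ≤ _ := by
        gcongr
        any_goals exact measure_le (by linarith)
        exact energy.trans (by gcongr <;> exact measure_le (by linarith))

/-- Since `exp (-u)` dominates the Jacobian of the inverse gradient map, its integral over a
gradient image is bounded below; a Poincaré type inequality on the convex hull then turns the
energy estimate for `∇u` into a bound for the mean of `u`. -/
lemma exists_lintegral_image_gradient_le (hκ : 0 < κ) (hN : 0 < N) {R : ℝ} (hR : 0 < R)
    (K b : ℝ) : ∃ ρ > 0, ρ < R ∧ ∃ A > 0, ∀ {g u : E → ℝ} {V : E → E} {s : Set E} {x₀ : E}
      (hg : IsUniformlyConvex s g κ), (∀ z ∈ s, |g z| ≤ N) → ball x₀ (4 * R) ⊆ s →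
      IsEnergyField (∇ g '' s) u V K →
      (∀ y ∈ ∇ g '' s, u y ≤ b - Real.log (fderiv ℝ hg.gradientChart.symm y).det) →
      ∫⁻ y in ∇ g '' ball x₀ ρ, ENNReal.ofReal (u y) ∂μ ≤ ENNReal.ofReal A := by
  obtain ⟨S, hS⟩ := exists_isCutoff_image_gradient E
  set Y := 2 * N / R
  have hY : 0 < Y := by positivity
  set ρ := min (R / 2) (κ * R ^ 2 / (32 * Y))
  have hρ : 0 < ρ := by positivity
  have hρR : ρ ≤ R / 2 := min_le_left _ _
  have h_small : 2 * Y * ρ < κ / 8 * R ^ 2 := by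
    calc 2 * Y * ρ ≤ 2 * Y * (κ * R ^ 2 / (32 * Y)) := by gcongr; exact min_le_right _ _
      _ = κ / 16 * R ^ 2 := by field_simp; norm_num
      _ < κ / 8 * R ^ 2 := by nlinarith [mul_pos hκ (pow_pos hR 2)]
  set m := μ (closedBall 0 Y) with hm_def
  set L := S / (2 * R - R) * κ⁻¹
  set Q := m * m + ENNReal.ofReal (2 * Y) * (2 ^ Module.finrank ℝ E * m) *
    (m + ENNReal.ofReal (6 * K ^ 4 * (1 + L ^ 2)) * m)
  set e := ENNReal.ofReal (Real.exp (-b)) * μ (ball 0 ρ)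
  have hm : m ≠ ⊤ := measure_closedBall_lt_top.ne
  have hQ : Q ≠ ⊤ := by finiteness
  have he : e ≠ 0 := mul_ne_zero (by simp [Real.exp_pos]) (measure_ball_pos μ 0 hρ).ne'
  have he_top : e ≠ ⊤ := ENNReal.mul_ne_top ENNReal.ofReal_ne_top measure_ball_lt_top.ne
  refine ⟨ρ, hρ, by linarith, (Q / e).toReal + 1, by positivity,
    fun {g u V s x₀} hg hgN hs hV hu => ?_⟩
  obtain ⟨η, hη, η_eq_one⟩ := hS hg hR.le (show R < 2 * R by linarith)
    ((ball_subset_ball (by linarith)).trans hs)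
  calc ∫⁻ y in ∇ g '' ball x₀ ρ, ENNReal.ofReal (u y) ∂μ ≤ Q / e :=
        (ENNReal.le_div_iff_mul_le (.inl he) (.inl he_top)).2 <| mul_comm e _ ▸
          hg.exp_neg_mul_lintegral_image_gradient_le μ hR hgN hs hV hu hρ hρR h_small hη
            η_eq_one hm_def
    _ = ENNReal.ofReal (Q / e).toReal := (ENNReal.ofReal_toReal (ENNReal.div_ne_top hQ he)).symm
    _ ≤ _ := ENNReal.ofReal_le_ofReal (by linarith)

end IsUniformlyConvex

lemma IsUniformlyConvex.exists_apply_gradient_le (hE : 2 ≤ Module.finrank ℝ E) (hκ : 0 < κ)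
    (hN : 0 < N) {R : ℝ} (hR : 0 < R) (hK : 1 ≤ K) (b : ℝ) :
    ∃ X, ∀ {g u : E → ℝ} {V : E → E} {s : Set E} {x₀ : E} (hg : IsUniformlyConvex s g κ),
      (∀ z ∈ s, |g z| ≤ N) → ball x₀ (4 * R) ⊆ s → IsEnergyField (∇ g '' s) u V K →
      (∀ y ∈ ∇ g '' s, u y ≤ b - Real.log (fderiv ℝ hg.gradientChart.symm y).det) →
      u (∇ g x₀) ≤ X := by
  borelize E
  obtain ⟨S, hS⟩ := exists_isCutoff_image_gradient E
  obtain ⟨ρ, hρ, hρR, A, hA, integral_le⟩ :=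
    exists_lintegral_image_gradient_le (volume : Measure E) hκ hN hR K b
  set L := 8 * S * κ⁻¹ / (3 * ρ) with hL
  obtain ⟨X, hX⟩ := exists_le_of_isEnergyField (volume : Measure E) hE L hK hA
  refine ⟨X, fun {g u V s x₀} hg hgN hs hV hu => ?_⟩
  set r : ℕ → ℝ := fun k => ρ / 2 * (1 + (1 / 4) ^ k) with hr
  have lt_r (k : ℕ) : ρ / 2 < r k := by
    have : 0 < ρ / 2 * (1 / 4 : ℝ) ^ k := by positivity
    simp only [hr]
    linarith
  have r_sub_r (k : ℕ) : r k - r (k + 1) = 3 / 8 * ρ / 4 ^ k := by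
    simp only [hr, pow_succ, one_div, inv_pow]
    field_simp
    ring
  have r_zero : r 0 = ρ := by simp only [hr, pow_zero]; ring
  have r_succ_lt (k : ℕ) : r (k + 1) < r k := sub_pos.1 (by rw [r_sub_r]; positivity)
  have r_le (k : ℕ) : r k ≤ ρ := r_zero ▸ (strictAnti_nat_of_succ_lt r_succ_lt).antitone k.zero_le
  have ball_subset {t : ℝ} (ht : t ≤ ρ) : ball x₀ t ⊆ s :=
    (ball_subset_ball (by linarith)).trans hs
  choose η hη η_eq_one using fun k =>
    hS hg ((half_pos hρ).trans (lt_r (k + 1))).le (r_succ_lt k) (ball_subset (r_le k))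
  have slope_eq (k : ℕ) : S / (r k - r (k + 1)) * κ⁻¹ = L * 4 ^ k := by
    rw [r_sub_r, hL]
    field_simp
  simp only [slope_eq] at hη
  have hρs : ball x₀ (ρ / 2) ⊆ s := ball_subset (by linarith)
  exact hX hV (image_mono (ball_subset (r_le 0))) hη
    (fun k y hy => η_eq_one k y (image_mono ball_subset_closedBall hy))
    (hg.isOpen_image_gradient isOpen_ball hρs)
    (fun k => image_mono (ball_subset_ball (lt_r k).le))
    (r_zero.symm ▸ integral_le hg hgN hs hV hu) _
    (mem_image_of_mem _ (mem_ball_self (half_pos hρ)))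

end DualBound

/-! ### The interior estimate -/

section InteriorEstimate

attribute [local instance] Matrix.frobeniusNormedRing Matrix.frobeniusNormedAlgebra

lemma exists_isEnergyField_of_isDualSystem (ι : Type*) [Fintype ι] [DecidableEq ι] {τ : ℝ}
    (hτ : 0 < τ) (R D : ℝ) : ∃ K ≥ 1, ∃ b : ℝ,
      ∀ (Ω : Set (EuclideanSpace ℝ ι)) (H A : EuclideanSpace ℝ ι → Matrix ι ι ℝ)
        (t : ι → EuclideanSpace ℝ ι → Matrix ι ι ℝ) (c d : ℝ), 0 ≤ d → d ≤ D →
        IsDualSystem Ω H A t c d τ R →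
        IsEnergyField Ω (fun y => b - Real.log (H y).det) (dualVectorField H A) K := by
  obtain ⟨K, hK, h_bound⟩ := exists_isDualSystem_structure_bound ι hτ R D
  obtain ⟨C, -, hC⟩ := exists_norm_adjugate_le_and_abs_det_le ι R
  refine ⟨K, hK, 1 + Real.log C, fun Ω H A t c d hd hdD S => ?_⟩
  have fderiv_eq (y : EuclideanSpace ℝ ι) :
      fderiv ℝ (fun z => 1 + Real.log C - Real.log (H z).det) y =
        fderiv ℝ (fun z => -Real.log (H z).det) y := by
    simp only [sub_eq_add_neg, fderiv_const_add]
  refine ⟨S.isOpen, hK, ?_, S.contDiffOn_dualVectorField.of_le (by norm_cast), fun y hy => ?_,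
    fun y hy => ?_, fun y hy => ?_, fun y hy => ?_⟩
  · simpa only [sub_eq_add_neg] using
      (contDiffOn_const (c := 1 + Real.log C)).add (S.contDiffOn_neg_log_det.of_le (by norm_cast))
  · have h_log : Real.log (H y).det ≤ Real.log C := Real.log_le_log (S.posDef y hy).det_pos
      ((le_abs_self _).trans (hC _ (S.norm_H_le y hy)).2)
    linarith
  · rw [fderiv_eq]
    exact (h_bound Ω H A t c d hd hdD S y hy).1
  · rw [fderiv_eq]
    exact (h_bound Ω H A t c d hd hdD S y hy).2.1
  · rw [fderiv_eq]
    exact (h_bound Ω H A t c d hd hdD S y hy).2.2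

lemma exists_abs_inv_apply_le (ι : Type*) [Fintype ι] [DecidableEq ι] (R : ℝ) :
    ∃ C > 0, ∀ H : Matrix ι ι ℝ, 0 < H.det → ‖H‖ ≤ R →
      ∀ i j, |H⁻¹ i j| ≤ Real.exp (-Real.log H.det) * C := by
  obtain ⟨C, hC, h_bound⟩ := exists_norm_adjugate_le_and_abs_det_le ι R
  refine ⟨C, by linarith, fun H h_det hH i j => ?_⟩
  rw [inv_def, Ring.inverse_eq_inv', Matrix.smul_apply, smul_eq_mul, abs_mul, abs_inv,
    abs_of_pos h_det, Real.exp_neg, Real.exp_log h_det]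
  gcongr
  exact (abs_apply_le_frobenius_norm _ i j).trans (h_bound H hH).1

lemma exists_abs_Hess_apply_le_of_two_le {n : ℕ} (hn : 2 ≤ n) {N cbar τ M : ℝ} (dbar : ℝ)
    (hN : 0 < N) (hcbar : 0 < cbar) (hτ : 0 < τ) (hM : 0 ≤ M) :
    ∃ C > 0, ∀ (f g : EuclideanSpace ℝ (Fin n) → ℝ) (c d : ℝ), c ≤ cbar → d ≤ dbar →
      IsSolution n f g c d τ N M → ∀ x ∈ ball (0 : EuclideanSpace ℝ (Fin n)) (1 / 2),
      ∀ i j, |Hess n g x i j| ≤ C := by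
  obtain ⟨K, hK, b, isEnergyField⟩ :=
    exists_isEnergyField_of_isDualSystem (Fin n) hτ (max (cbar / τ) (n * M)) dbar
  obtain ⟨X, hX⟩ := IsUniformlyConvex.exists_apply_gradient_le
    (E := EuclideanSpace ℝ (Fin n)) (by simpa using hn) (div_pos hτ hcbar) hN
    (show (0 : ℝ) < 1 / 8 by norm_num) hK b
  obtain ⟨C, hC, abs_inv_le⟩ := exists_abs_inv_apply_le (Fin n) (max (cbar / τ) (n * M))
  refine ⟨Real.exp (X - b) * C, by positivity, fun f g c d hc hd S x hx i j => ?_⟩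
  have hg := S.isUniformlyConvex hτ hcbar hc
  have dual := S.isDualSystem hτ hM hg hc
  have hx_ball : ball x (4 * (1 / 8)) ⊆ ball 0 1 :=
    ball_subset_ball' (by linarith [mem_ball.1 hx])
  have hx₁ : x ∈ ball 0 1 := ball_subset_ball (by norm_num) hx
  have hy : ∇ g x ∈ ∇ g '' ball 0 1 := mem_image_of_mem _ hx₁
  have log_det_le : b - Real.log (dualHessian hg (∇ g x)).det ≤ X :=
    hX hg S.abs_le hx_ball (isEnergyField _ _ _ _ c d S.nonneg hd dual)
      fun y hy => by rw [det_dualHessian hg hy]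
  have inv_dualHessian : (dualHessian hg (∇ g x))⁻¹ = Hess n g x := by
    rw [dualHessian, hg.gradientChart_symm_apply hx₁,
      nonsing_inv_nonsing_inv _ (S.posDef x hx₁).det_pos.ne'.isUnit]
  calc |Hess n g x i j|
      ≤ Real.exp (-Real.log (dualHessian hg (∇ g x)).det) * C := inv_dualHessian ▸
        abs_inv_le _ (dual.posDef _ hy).det_pos (dual.norm_H_le _ hy) i j
    _ ≤ Real.exp (X - b) * C := by gcongr; linarith

lemma IsUniformlyConvex.const_mul_sq_le {E : Type*} [NormedAddCommGroup E]
    [InnerProductSpace ℝ E] [FiniteDimensional ℝ E] [Nontrivial E] {g : E → ℝ} {s : Set E}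
    {x : E} {κ r N : ℝ} (hg : IsUniformlyConvex s g κ) (hr : 0 ≤ r) (hs : closedBall x r ⊆ s)
    (hN : ∀ z ∈ s, |g z| ≤ N) : κ * r ^ 2 ≤ 4 * N := by
  obtain ⟨e, he⟩ := exists_norm_eq E hr
  have hx : x ∈ s := hs (mem_closedBall_self hr)
  have h_add : x + e ∈ s := hs (by simp [he])
  have h_sub : x - e ∈ s := hs (by simp [he])
  have le_add := hg.add_le_apply h_add hx
  have le_sub := hg.add_le_apply h_sub hx
  rw [add_sub_cancel_left, he] at le_add
  rw [sub_sub_cancel_left, inner_neg_right, norm_neg, he] at le_sub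
  linarith [abs_le.1 (hN x hx), abs_le.1 (hN _ h_add), abs_le.1 (hN _ h_sub)]

lemma abs_Hess_apply_le_of_one {N τ M c d : ℝ}
    {f g : EuclideanSpace ℝ (Fin 1) → ℝ} (hτ : 0 < τ)
    (S : IsSolution 1 f g c d τ N M) {x : EuclideanSpace ℝ (Fin 1)} (hx : x ∈ ball 0 1)
    (i j : Fin 1) : |Hess 1 g x i j| ≤ (1 + d) * M * (16 * N / τ) := by
  have hd := S.nonneg
  obtain rfl : i = 0 := Subsingleton.elim _ _
  obtain rfl : j = 0 := Subsingleton.elim _ _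
  have hg_pos : 0 < Hess 1 g x 0 0 := (S.posDef x hx).diag_pos
  have hf_pos : τ < Hess 1 f x 0 0 := by
    simpa using (S.posDef_data x hx).diag_pos (i := 0)
  have equation : (1 + d) * Hess 1 f x 0 0 = c * Hess 1 g x 0 0 := by
    rw [← S.equation x hx]
    simp [trace_fin_one, Matrix.mul_apply]
    field_simp
  have hc : 0 < c := by
    refine pos_of_mul_pos_left (b := Hess 1 g x 0 0) ?_ hg_pos.le
    rw [← equation]
    have := hτ.trans hf_pos
    positivity
  have le_c : τ / c * (1 / 2) ^ 2 ≤ 4 * N :=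
    (S.isUniformlyConvex hτ hc le_rfl).const_mul_sq_le (by norm_num)
      (closedBall_subset_ball (by norm_num)) S.abs_le (x := 0)
  have inv_le : c⁻¹ ≤ 16 * N / τ := by
    rw [le_div_iff₀ hτ, mul_comm, ← div_eq_mul_inv]
    linarith
  calc |Hess 1 g x 0 0| = (1 + d) * Hess 1 f x 0 0 * c⁻¹ := by
        rw [abs_of_pos hg_pos, equation]
        field_simp
    _ ≤ (1 + d) * M * (16 * N / τ) := by
        have hf_le : Hess 1 f x 0 0 ≤ M := (le_abs_self _).trans
          (abs_Hess_apply_le (S.norm_iteratedFDeriv_two_le x hx) 0 0)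
        have hM : 0 ≤ M := by linarith
        gcongr

theorem statement13_general (n : ℕ) {N cbar dbar τ M : ℝ} (hN : 0 < N) (hcbar : 0 < cbar)
    (hdbar : 0 < dbar) (hτ : 0 < τ) (hM : 0 < M) :
    ∃ C > 0, ∀ (f g : EuclideanSpace ℝ (Fin n) → ℝ) (c d : ℝ), c ≤ cbar → d ≤ dbar →
      IsSolution n f g c d τ N M → ∀ x ∈ ball (0 : EuclideanSpace ℝ (Fin n)) (1 / 2),
      ∀ i j, |Hess n g x i j| ≤ C := by
  match n with
  | 0 => exact ⟨1, one_pos, fun _ _ _ _ _ _ _ _ _ i => i.elim0⟩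
  | 1 =>
    refine ⟨(1 + dbar) * M * (16 * N / τ), by positivity, fun f g c d _ hd S x hx i j => ?_⟩
    refine (abs_Hess_apply_le_of_one hτ S (ball_subset_ball (by norm_num) hx) i j).trans ?_
    gcongr
  | n + 2 => exact exists_abs_Hess_apply_le_of_two_le (by omega) dbar hN hcbar hτ hM.le

end InteriorEstimate

/-- Proposition 5.2: interior `C²` estimate. Let `B` be the open unit ball in `ℝⁿ`. For every
`N, c̄, d̄, τ, M > 0` and `α ∈ (0,1)` there is `C > 0` such that: if `f, g : B → ℝ` are smooth
convex functions, `D²g > 0` on `B`, satisfying `tr((D²g)⁻¹ D²f) + d·det(D²f)/det(D²g) = c` on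
`B` with constants `0 ≤ c ≤ c̄`, `0 ≤ d ≤ d̄`, if `inf_B g = g(0) = 0`, `sup_B |g| ≤ N`,
`D²f > τ·Id` on `B`, and `‖f‖_{C^{3,α}(B)} ≤ M`, then `sup_{(1/2)B} |∂_i∂_j g| ≤ C`. -/
theorem statement13 (n : ℕ) (N cbar dbar τ α M : ℝ)
    (hN : 0 < N) (hcbar : 0 < cbar) (hdbar : 0 < dbar) (hτ : 0 < τ)
    (hα : α ∈ Set.Ioo (0 : ℝ) 1) (hM : 0 < M) :
    ∃ C > 0, ∀ (f g : EuclideanSpace ℝ (Fin n) → ℝ) (c d : ℝ),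
      ContDiffOn ℝ (⊤ : ℕ∞) f (Metric.ball 0 1) →
      ContDiffOn ℝ (⊤ : ℕ∞) g (Metric.ball 0 1) →
      ConvexOn ℝ (Metric.ball 0 1) f →
      ConvexOn ℝ (Metric.ball 0 1) g →
      (∀ x ∈ Metric.ball (0 : EuclideanSpace ℝ (Fin n)) 1, (Hess n g x).PosDef) →
      0 ≤ c → c ≤ cbar → 0 ≤ d → d ≤ dbar →
      (∀ x ∈ Metric.ball (0 : EuclideanSpace ℝ (Fin n)) 1,
        ((Hess n g x)⁻¹ * Hess n f x).trace +
          d * (Hess n f x).det / (Hess n g x).det = c) →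
      g 0 = 0 →
      (∀ x ∈ Metric.ball (0 : EuclideanSpace ℝ (Fin n)) 1, 0 ≤ g x) →
      (∀ x ∈ Metric.ball (0 : EuclideanSpace ℝ (Fin n)) 1, |g x| ≤ N) →
      (∀ x ∈ Metric.ball (0 : EuclideanSpace ℝ (Fin n)) 1,
        (Hess n f x - τ • (1 : Matrix (Fin n) (Fin n) ℝ)).PosDef) →
      (∀ x ∈ Metric.ball (0 : EuclideanSpace ℝ (Fin n)) 1, ∀ k ≤ 3,
        ‖iteratedFDeriv ℝ k f x‖ ≤ M) →
      (∀ x ∈ Metric.ball (0 : EuclideanSpace ℝ (Fin n)) 1,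
        ∀ y ∈ Metric.ball (0 : EuclideanSpace ℝ (Fin n)) 1,
        ‖iteratedFDeriv ℝ 3 f x - iteratedFDeriv ℝ 3 f y‖ ≤ M * ‖x - y‖ ^ α) →
      ∀ x ∈ Metric.ball (0 : EuclideanSpace ℝ (Fin n)) (1 / 2), ∀ i j : Fin n,
        |Hess n g x i j| ≤ C := by
  obtain ⟨C, hC, h⟩ := statement13_general n hN hcbar hdbar hτ hM
  exact ⟨C, hC, fun f g c d hf hg _ _ hg_pos _ hc hd hdd heq _ _ hgN hf_pos hfM _ =>
    h f g c d hc hdd ⟨hf, hg, hg_pos, hf_pos, hd, heq, hgN, fun x hx => hfM x hx 2 (by norm_num),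
      fun x hx => hfM x hx 3 le_rfl⟩⟩
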